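/- Let F be a field of characteristic not p and A a set of central division F-algebras of degree p. Then there exists a field extension F_A/F such that: (1) the restriction Br(F)[p] → Br(F_A)[p] is injective; and (2) for any two algebras D, D' ∈ A, the central division F_A-algebras underlying D ⊗_F F_A and D' ⊗_F F_A have exactly the same maximal subfields, i.e., the same genus. -/

import Mathlib

open scoped TensorProduct
universe u

/-- A finite-dimensional `F`-algebra is *split* if it is a matrix algebra over `F`. -/
def IsSplit (F : Type u) [Field F] (A : Type u) [Ring A] [Algebra F A] : Prop :=
  ∃ n : ℕ, 0 < n ∧ Nonempty (A ≃ₐ[F] Matrix (Fin n) (Fin n) F)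

/-- Brauer equivalence of two `F`-algebras. -/
def BrauerEquiv (F : Type u) [Field F] (A B : Type u) [Ring A] [Algebra F A]
    [Ring B] [Algebra F B] : Prop :=
  ∃ n m : ℕ, 0 < n ∧ 0 < m ∧ Nonempty (Matrix (Fin n) (Fin n) A ≃ₐ[F] Matrix (Fin m) (Fin m) B)

/-- `A` is a finite-dimensional central simple `F`-algebra. -/
def IsCSA (F A : Type u) [Field F] [Ring A] [Algebra F A] : Prop :=
  Algebra.IsCentral F A ∧ IsSimpleRing A ∧ FiniteDimensional F A

/-- The `n`-fold tensor power of an `F`-algebra. -/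
abbrev tpow (F : Type u) [Field F] (A : Type u) [Ring A] [Algebra F A] (n : ℕ) : Type u :=
  ⨂[F] _ : Fin n, A

/-- The Brauer class of `A` is killed by `p`: its `p`-th tensor power is split. -/
def IsPTorsion (F : Type u) [Field F] (A : Type u) [Ring A] [Algebra F A] (p : ℕ) : Prop :=
  IsSplit F (tpow F A p)

/-- The restriction map `Br(F)[p] → Br(E)[p]` along `f : F →+* E` is injective:
two `p`-torsion Brauer classes that agree after scalar extension agree already over `F`. -/
def ResInjP (p : ℕ) (F E : Type u) [Field F] [Field E] (f : F →+* E) : Prop :=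
  letI : Algebra F E := f.toAlgebra
  ∀ (A B : Type u) [Ring A] [Algebra F A] [Ring B] [Algebra F B],
    IsCSA F A → IsCSA F B → IsPTorsion F A p → IsPTorsion F B p →
    BrauerEquiv E (E ⊗[F] A) (E ⊗[F] B) → BrauerEquiv F A B

/-- The restriction map `Br(F) → Br(E)` along `f : F →+* E` is injective. -/
def ResInj (F E : Type u) [Field F] [Field E] (f : F →+* E) : Prop :=
  letI : Algebra F E := f.toAlgebra
  ∀ (A B : Type u) [Ring A] [Algebra F A] [Ring B] [Algebra F B],
    IsCSA F A → IsCSA F B →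
    BrauerEquiv E (E ⊗[F] A) (E ⊗[F] B) → BrauerEquiv F A B

/-- `D` is a central division algebra of degree `p` over `K`. -/
def IsCentralDivisionOfDeg (K D : Type u) [Field K] [DivisionRing D] [Algebra K D]
    (p : ℕ) : Prop :=
  Algebra.IsCentral K D ∧ FiniteDimensional K D ∧ Module.finrank K D = p ^ 2

/-- Witness for STATEMENT 10: a field extension `E = F_A` of `F` with injective restriction
on `p`-torsion Brauer classes such that all the base-changed algebras `(D i) ⊗_F E` have the
same maximal subfields: a degree-`p` extension of `E` embeds into one iff into any other. -/
structure GenusMergingExtension (p : ℕ) (F : Type u) [Field F] {ι : Type u}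
    (D : ι → Type u) [∀ i, DivisionRing (D i)] [∀ i, Algebra F (D i)] : Type (u + 1) where
  E : Type u
  [fieldE : Field E]
  [algFE : Algebra F E]
  resInj : ResInjP p F E (algebraMap F E)
  sameMaxSubfields : ∀ i i' : ι, ∀ (L : Type u) [Field L] [Algebra E L],
    Module.finrank E L = p →
    (Nonempty (L →ₐ[E] (E ⊗[F] D i)) ↔ Nonempty (L →ₐ[E] (E ⊗[F] D i')))

/-!
It suffices to find `E / F` such that no `p`-torsion central simple `F`-algebra acquires a splitting
over `E` that it did not have, and such that every separable polynomial of degree `p` over `E` has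
a root in every `E ⊗ D i`: then every extension of `E` of degree `p` embeds in every `E ⊗ D i`.
Injectivity on `Br[p]` follows because `A` and `B` are Brauer equivalent iff `A ⊗ Bᵐᵒᵖ` is split.

For one polynomial `f` over `K` and one algebra `D`, pass to the fixed field of a Sylow `p`-subgroup
of a Galois group; its degree over `K` is prime to `p`, so that `p`-torsion algebras do not lose
their index. If `f` stays irreducible, it may be replaced by `X ^ p - c` by Kummer theory, and a
division algebra `D` becomes cyclic, generated by `u` and `v` with `u ^ p = a`, `v ^ p = b` and
`u * v = ω • (v * u)`. Let `M = K(u)`, with `σ` generating its Galois group, and adjoin to `K` a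
generic solution of `N(x) * b = c - a * e ^ p`, where `N` is the norm of `M / K`. Then
`e • u + v * x` is a `p`-th root of `c` by the `q`-binomial theorem. This extension `K'` splits no
new algebra `C`: a representation of `C` over `M K'` specializes to `M`, the obstruction to
descending it to `K` is an element of `K` modulo norms from `M`, and unique factorization shows that
an element of `K` that is a norm from `M K'` is already a norm from `M`.

All polynomials over `K` and all `D i` are treated at once by a quotient of a product of fields, the
product ranging over the finite sets of pairs `(f, i)`. Iterating countably often and passing to
the union gives `E`. Over a finite field `F` there are no division algebras to consider.
-/

namespace GenusMerging

open Matrix Polynomial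

/-! ### Tensor products of central simple algebras -/

theorem bijective_of_finrank_eq {F A B : Type*} [Field F] [Ring A] [Algebra F A] [IsSimpleRing A]
    [FiniteDimensional F A] [Ring B] [Nontrivial B] [Algebra F B] [FiniteDimensional F B]
    (h : Module.finrank F A = Module.finrank F B) (f : A →ₐ[F] B) : Function.Bijective f :=
  have hf : Function.Injective f := f.toRingHom.injective
  ⟨hf, (LinearMap.injective_iff_surjective_of_finrank_eq_finrank (f := f.toLinearMap) h).1 hf⟩

section TensorProduct

variable {F A B : Type*} [Field F] [Ring A] [Algebra F A] [Ring B] [Algebra F B]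

theorem exists_tmul_one_eq_of_commute [Algebra.IsCentral F B] {x : A ⊗[F] B}
    (hx : ∀ y : B, Commute ((1 : A) ⊗ₜ[F] y) x) : ∃ a : A, a ⊗ₜ[F] (1 : B) = x := by
  have hmem : x ∈ Subalgebra.centralizer F
      (Algebra.TensorProduct.includeRight : B →ₐ[F] A ⊗[F] B).range := by
    rw [Subalgebra.mem_centralizer_iff]
    rintro _ ⟨y, rfl⟩
    exact hx y
  rw [Subalgebra.centralizer_range_includeRight_eq_center_tensorProduct] at hmem
  obtain ⟨z, rfl⟩ := hmem
  clear hx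
  induction z using TensorProduct.induction_on with
  | zero => exact ⟨0, by simp⟩
  | tmul a c =>
    obtain ⟨k, hk⟩ := (Algebra.IsCentral.mem_center_iff F).1 c.2
    refine ⟨k • a, ?_⟩
    change _ = a ⊗ₜ[F] c.1
    rw [hk, Algebra.algebraMap_eq_smul_one, TensorProduct.smul_tmul]
  | add x y hx hy =>
    obtain ⟨a, ha⟩ := hx
    obtain ⟨b, hb⟩ := hy
    exact ⟨a + b, by rw [TensorProduct.add_tmul, ha, hb, map_add]⟩

theorem isCentral_tensorProduct [Algebra.IsCentral F A] [Algebra.IsCentral F B] [Nontrivial B] :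
    Algebra.IsCentral F (A ⊗[F] B) := by
  refine ⟨fun x hx => ?_⟩
  rw [Subalgebra.mem_center_iff] at hx
  obtain ⟨a, rfl⟩ := exists_tmul_one_eq_of_commute fun y => hx _
  have ha : a ∈ Subalgebra.center F A := by
    rw [Subalgebra.mem_center_iff]
    intro b
    refine Algebra.TensorProduct.includeLeft_injective (R := F) (S := F) (A := A) (B := B)
      (algebraMap F B).injective ?_
    simpa using hx (b ⊗ₜ 1)
  obtain ⟨k, rfl⟩ := (Algebra.IsCentral.mem_center_iff F).1 ha
  exact ⟨k, rfl⟩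

theorem isCentral_baseChange {K : Type*} [Field K] [Algebra F K] [Algebra.IsCentral F B] :
    Algebra.IsCentral K (K ⊗[F] B) := by
  refine ⟨fun x hx => ?_⟩
  rw [Subalgebra.mem_center_iff] at hx
  obtain ⟨a, rfl⟩ := exists_tmul_one_eq_of_commute fun y => hx _
  exact ⟨a, rfl⟩

section Coordinates

variable {ι : Type*} [DecidableEq ι] (b : Module.Basis ι F A)

theorem equivFinsuppOfBasisLeft_one_tmul_mul (y : B) (w : A ⊗[F] B) (i : ι) :
    TensorProduct.equivFinsuppOfBasisLeft b ((1 ⊗ₜ y) * w) i =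
      y * TensorProduct.equivFinsuppOfBasisLeft b w i := by
  induction w with
  | zero => simp
  | add v w hv hw => simp [mul_add, hv, hw]
  | tmul a x => simp [TensorProduct.equivFinsuppOfBasisLeft_apply_tmul]

theorem equivFinsuppOfBasisLeft_mul_one_tmul (w : A ⊗[F] B) (y : B) (i : ι) :
    TensorProduct.equivFinsuppOfBasisLeft b (w * (1 ⊗ₜ y)) i =
      TensorProduct.equivFinsuppOfBasisLeft b w i * y := by
  induction w with
  | zero => simp
  | add v w hv hw => simp [add_mul, hv, hw]
  | tmul a x => simp [TensorProduct.equivFinsuppOfBasisLeft_apply_tmul]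

theorem exists_mem_coord_eq_one [IsSimpleRing B] (I : TwoSidedIdeal (A ⊗[F] B)) {w : A ⊗[F] B}
    (hw : w ∈ I) {i : ι} (hi : TensorProduct.equivFinsuppOfBasisLeft b w i ≠ 0) :
    ∃ v ∈ I, TensorProduct.equivFinsuppOfBasisLeft b v i = 1 ∧
      (TensorProduct.equivFinsuppOfBasisLeft b v).support ⊆
        (TensorProduct.equivFinsuppOfBasisLeft b w).support := by
  set φ := TensorProduct.equivFinsuppOfBasisLeft (N := B) b
  suffices h : ∀ x ∈ TwoSidedIdeal.span {φ w i}, ∃ v ∈ I, φ v i = x ∧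
      (φ v).support ⊆ (φ w).support from
    h 1 (IsSimpleRing.one_mem_of_ne_zero_mem _ hi (TwoSidedIdeal.subset_span rfl))
  intro x hx
  rw [TwoSidedIdeal.mem_span_iff_mem_addSubgroup_closure] at hx
  induction hx using AddSubgroup.closure_induction with
  | mem x hx =>
    obtain ⟨_, ⟨y, -, _, rfl, rfl⟩, z, -, rfl⟩ := hx
    refine ⟨(1 ⊗ₜ y) * w * (1 ⊗ₜ z), I.mul_mem_right _ _ (I.mul_mem_left _ _ hw), ?_, ?_⟩
    · simp [φ, equivFinsuppOfBasisLeft_one_tmul_mul, equivFinsuppOfBasisLeft_mul_one_tmul]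
    · intro j
      simp only [Finsupp.mem_support_iff, φ, equivFinsuppOfBasisLeft_one_tmul_mul,
        equivFinsuppOfBasisLeft_mul_one_tmul]
      exact fun h => right_ne_zero_of_mul (left_ne_zero_of_mul h)
  | zero => exact ⟨0, I.zero_mem, by simp, by simp⟩
  | add x y _ _ hx hy =>
    obtain ⟨v, hv, rfl, hvs⟩ := hx
    obtain ⟨v', hv', rfl, hvs'⟩ := hy
    refine ⟨v + v', I.add_mem hv hv', by simp, ?_⟩
    rw [map_add]
    exact Finsupp.support_add.trans (Finset.union_subset hvs hvs')
  | neg x _ hx =>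
    obtain ⟨v, hv, rfl, hvs⟩ := hx
    exact ⟨-v, I.neg_mem hv, by simp, by simpa using hvs⟩

end Coordinates

-- A nonzero element of `I` of minimal support, normalized to have a coefficient `1`, commutes
-- with `1 ⊗ B`: each commutator with `1 ⊗ y` has smaller support.
theorem exists_tmul_one_mem_of_ne_bot [IsSimpleRing B] [Algebra.IsCentral F B]
    {I : TwoSidedIdeal (A ⊗[F] B)} (hI : I ≠ ⊥) : ∃ a : A, a ≠ 0 ∧ a ⊗ₜ[F] (1 : B) ∈ I := by
  classical
  let b := Module.Free.chooseBasis F A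
  let φ := TensorProduct.equivFinsuppOfBasisLeft (N := B) b
  have hne : ∃ w, w ∈ I ∧ w ≠ 0 := by
    by_contra! h
    exact hI (eq_bot_iff.2 fun x hx => by simpa using h x hx)
  obtain ⟨w, ⟨hwI, hw0⟩, hmin⟩ := WellFounded.has_min
    (measure fun w : A ⊗[F] B => (φ w).support.card).wf {w | w ∈ I ∧ w ≠ 0} hne
  obtain ⟨i, hi⟩ : ∃ i, φ w i ≠ 0 := by
    by_contra! h
    exact hw0 (φ.map_eq_zero_iff.1 (Finsupp.ext h))
  obtain ⟨v, hvI, hvi, hvs⟩ := exists_mem_coord_eq_one b I hwI hi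
  have hcomm : ∀ y : B, Commute ((1 : A) ⊗ₜ[F] y) v := by
    intro y
    by_contra hne
    refine hmin ((1 ⊗ₜ y) * v - v * (1 ⊗ₜ y))
      ⟨I.sub_mem (I.mul_mem_left _ _ hvI) (I.mul_mem_right _ _ hvI), sub_ne_zero.2 hne⟩ ?_
    refine Finset.card_lt_card ((Finset.ssubset_iff_of_subset fun j hj => hvs ?_).2
      ⟨i, by simpa using hi, ?_⟩)
    · rw [Finsupp.mem_support_iff] at hj ⊢
      intro h0
      simp [φ, equivFinsuppOfBasisLeft_one_tmul_mul, equivFinsuppOfBasisLeft_mul_one_tmul,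
        h0] at hj
    · simp [φ, equivFinsuppOfBasisLeft_one_tmul_mul, equivFinsuppOfBasisLeft_mul_one_tmul, hvi]
  obtain ⟨a, rfl⟩ := exists_tmul_one_eq_of_commute hcomm
  exact ⟨a, by rintro rfl; simp at hvi, hvI⟩

theorem isSimpleRing_tensorProduct [IsSimpleRing A] [IsSimpleRing B] [Algebra.IsCentral F B] :
    IsSimpleRing (A ⊗[F] B) := by
  have : Nontrivial (A ⊗[F] B) :=
    (Algebra.TensorProduct.includeLeft_injective (R := F) (S := F) (A := A) (B := B)
      (algebraMap F B).injective).nontrivial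
  refine IsSimpleRing.of_eq_bot_or_eq_top fun I => or_iff_not_imp_left.2 fun hI => ?_
  obtain ⟨a, ha, haI⟩ := exists_tmul_one_mem_of_ne_bot hI
  have hone := IsSimpleRing.one_mem_of_ne_zero_mem
    (I.comap (Algebra.TensorProduct.includeLeft : A →ₐ[F] A ⊗[F] B)) ha
    (by rwa [TwoSidedIdeal.mem_comap])
  rw [TwoSidedIdeal.mem_comap, map_one] at hone
  exact eq_top_iff.2 fun x _ => by simpa using I.mul_mem_left x _ hone

end TensorProduct

section MatrixRepresentation

variable {F C K : Type*} [Field F] [Ring C] [Algebra F C] [Field K] [Algebra F K]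
  {m : Type*} [Fintype m] [DecidableEq m]

/-- The `K`-linear extension to `K ⊗ C` of a matrix representation of `C` over `K`. -/
noncomputable def baseChangeRep (ρ : C →ₐ[F] Matrix m m K) : K ⊗[F] C →ₐ[K] Matrix m m K :=
  Algebra.TensorProduct.lift (Algebra.ofId K _) ρ fun k c => Algebra.commutes k (ρ c)

@[simp]
theorem baseChangeRep_tmul (ρ : C →ₐ[F] Matrix m m K) (k : K) (c : C) :
    baseChangeRep ρ (k ⊗ₜ c) = k • ρ c := by
  rw [Algebra.smul_def]
  exact Algebra.TensorProduct.lift_tmul _ _ _ k c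

theorem exists_algEquiv_matrix_eq_conj (f : Matrix m m K ≃ₐ[K] Matrix m m K) :
    ∃ g : GL m K, ∀ x, f x * g.1 = g.1 * x := by
  let e : Module.End K (m → K) ≃ₐ[K] Matrix m m K := LinearMap.toMatrixAlgEquiv'
  obtain ⟨T, hT⟩ := Module.End.mulSemiringActionToAlgEquiv_conjAct_surjective
    ((e.trans f).trans e.symm)
  refine ⟨Units.map (e : Module.End K (m → K) →* Matrix m m K) (ConjAct.ofConjAct T),
    fun x => ?_⟩
  have hx : e (T • e.symm x) = f x := by
    have := DFunLike.congr_fun hT (e.symm x)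
    rw [AlgEquiv.trans_apply, AlgEquiv.trans_apply, e.apply_symm_apply] at this
    exact (congrArg e this).trans (e.apply_symm_apply _)
  rw [← hx, ConjAct.units_smul_def]
  simp only [mul_assoc, Units.coe_map, MonoidHom.coe_coe, ← map_mul, Units.inv_mul, mul_one]
  rw [map_mul, e.apply_symm_apply]

variable [IsSimpleRing C] [Algebra.IsCentral F C] [FiniteDimensional F C] [Nonempty m]

theorem baseChangeRep_bijective (hC : Module.finrank F C = Fintype.card m ^ 2)
    (ρ : C →ₐ[F] Matrix m m K) : Function.Bijective (baseChangeRep ρ) := by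
  have := isSimpleRing_tensorProduct (F := F) (A := K) (B := C)
  refine bijective_of_finrank_eq ?_ _
  rw [Module.finrank_baseChange, hC, Module.finrank_matrix]
  simp [sq]

theorem exists_eq_algebraMap_of_commute_rep (hC : Module.finrank F C = Fintype.card m ^ 2)
    (ρ : C →ₐ[F] Matrix m m K) {x : Matrix m m K} (hx : ∀ c, Commute (ρ c) x) :
    ∃ k : K, x = algebraMap K _ k := by
  refine (Algebra.IsCentral.mem_center_iff K).1 (Subalgebra.mem_center_iff.2 fun y => ?_)
  obtain ⟨z, rfl⟩ := (baseChangeRep_bijective hC ρ).2 y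
  induction z with
  | zero => simp
  | add a b ha hb => simp [add_mul, mul_add, ha, hb]
  | tmul k c => simp [(hx c).eq]

theorem exists_rep_mul_eq_mul_rep (hC : Module.finrank F C = Fintype.card m ^ 2)
    (ρ ρ' : C →ₐ[F] Matrix m m K) : ∃ g : GL m K, ∀ c, ρ c * g.1 = g.1 * ρ' c := by
  let e := AlgEquiv.ofBijective _ (baseChangeRep_bijective hC ρ)
  let e' := AlgEquiv.ofBijective _ (baseChangeRep_bijective hC ρ')
  obtain ⟨g, hg⟩ := exists_algEquiv_matrix_eq_conj (e'.symm.trans e)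
  refine ⟨g, fun c => ?_⟩
  have he' : e'.symm (ρ' c) = 1 ⊗ₜ c := e'.symm_apply_eq.2 (by simp [e'])
  simpa [he', e] using hg (ρ' c)

end MatrixRepresentation

/-! ### Twisted powers and cyclic descent -/

section TwistedPow

/-- The twisted power `g * τ g * τ² g * ⋯` with `n` factors. For a cyclic automorphism `τ` of
order `n` this is the norm of `g`. -/
def twistedPow {R : Type*} [Monoid R] (τ : R → R) (g : R) : ℕ → R
  | 0 => 1
  | n + 1 => g * τ (twistedPow τ g n)

section Monoid

variable {R T : Type*} [Monoid R] [FunLike T R R] [MonoidHomClass T R R] (τ : T)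

@[simp]
theorem twistedPow_zero (τ : R → R) (g : R) : twistedPow τ g 0 = 1 := rfl

theorem twistedPow_succ (τ : R → R) (g : R) (n : ℕ) :
    twistedPow τ g (n + 1) = g * τ (twistedPow τ g n) := rfl

theorem twistedPow_succ' (g : R) (n : ℕ) :
    twistedPow τ g (n + 1) = twistedPow τ g n * τ^[n] g := by
  induction n with
  | zero => simp [twistedPow_succ]
  | succ n ih =>
    rw [twistedPow_succ, ih, map_mul, Function.iterate_succ_apply', ← mul_assoc,
      ← twistedPow_succ, ih]

theorem map_twistedPow {S H : Type*} [Monoid S] [FunLike H R S] [MonoidHomClass H R S]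
    {τ : R → R} {τ' : S → S} (φ : H) (h : Function.Semiconj φ τ τ') (g : R) (n : ℕ) :
    φ (twistedPow τ g n) = twistedPow τ' (φ g) n := by
  induction n with
  | zero => simp
  | succ n ih => rw [twistedPow_succ, twistedPow_succ, map_mul, h, ih]

theorem twistedPow_mul_iterate {g h x : R} (hx : g * τ x = x * h) (n : ℕ) :
    twistedPow τ g n * τ^[n] x = x * twistedPow τ h n := by
  induction n with
  | zero => simp
  | succ n ih =>
    rw [twistedPow_succ, twistedPow_succ, Function.iterate_succ_apply', mul_assoc, ← map_mul, ih,
      map_mul, ← mul_assoc, hx, mul_assoc]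

theorem twistedPow_mul_of_commute {a : R} (ha : ∀ n r, Commute (τ (twistedPow τ a n)) r)
    (g : R) (n : ℕ) : twistedPow τ (a * g) n = twistedPow τ a n * twistedPow τ g n := by
  induction n with
  | zero => simp
  | succ n ih =>
    simp only [twistedPow_succ, ih, map_mul, mul_assoc, ← (ha n _).left_comm]

theorem isUnit_twistedPow {g : R} (hg : IsUnit g) (n : ℕ) : IsUnit (twistedPow τ g n) := by
  induction n with
  | zero => simp
  | succ n ih => exact hg.mul (ih.map τ)

end Monoid

section CommMonoid

variable {R T : Type*} [CommMonoid R] [FunLike T R R] [MonoidHomClass T R R] (τ : T)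

theorem twistedPow_mul (a b : R) (n : ℕ) :
    twistedPow τ (a * b) n = twistedPow τ a n * twistedPow τ b n :=
  twistedPow_mul_of_commute τ (fun _ _ => Commute.all _ _) b n

theorem twistedPow_of_fixed {a : R} (ha : τ a = a) (n : ℕ) : twistedPow τ a n = a ^ n := by
  induction n with
  | zero => simp
  | succ n ih => rw [twistedPow_succ, ih, map_pow, ha, pow_succ']

theorem twistedPow_pow (a : R) (k n : ℕ) : twistedPow τ (a ^ k) n = twistedPow τ a n ^ k := by
  induction k with
  | zero => rw [pow_zero, pow_zero, twistedPow_of_fixed τ (map_one τ), one_pow]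
  | succ k ih => rw [pow_succ, twistedPow_mul, ih, pow_succ]

end CommMonoid

theorem twistedPow_inv {M T : Type*} [Field M] [FunLike T M M] [MonoidHomClass T M M] (τ : T)
    (a : M) (n : ℕ) : twistedPow τ a⁻¹ n = (twistedPow τ a n)⁻¹ := by
  rcases eq_or_ne a 0 with rfl | ha
  · cases n <;> simp [twistedPow_succ]
  · apply eq_inv_of_mul_eq_one_left
    rw [← twistedPow_mul, inv_mul_cancel₀ ha, twistedPow_of_fixed τ (map_one τ), one_pow]

end TwistedPow

section MapMatrix

variable {F M : Type*} [Field F] [Field M] [Algebra F M] {m : Type*} [Fintype m] [DecidableEq m]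
  (σ : M ≃ₐ[F] M)

theorem mapMatrix_iterate (X : Matrix m m M) (n : ℕ) :
    (σ.mapMatrix)^[n] X = (σ ^ n).mapMatrix X := by
  induction n with
  | zero => ext; simp
  | succ n ih =>
    rw [Function.iterate_succ_apply', ih]
    ext
    simp [pow_succ']

theorem mapMatrix_iterate_orderOf (X : Matrix m m M) : (σ.mapMatrix)^[orderOf σ] X = X := by
  rw [mapMatrix_iterate, pow_orderOf_eq_one]
  ext
  simp

theorem mapMatrix_algebraMap (a : M) :
    σ.mapMatrix (algebraMap M (Matrix m m M) a) = algebraMap M (Matrix m m M) (σ a) := by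
  ext i j
  simp only [AlgEquiv.mapMatrix_apply, map_apply, algebraMap_matrix_apply]
  split_ifs <;> simp

theorem twistedPow_algebraMap (a : M) (n : ℕ) :
    twistedPow σ.mapMatrix (algebraMap M (Matrix m m M) a) n =
      algebraMap M (Matrix m m M) (twistedPow σ a n) :=
  (map_twistedPow _ (fun a => (mapMatrix_algebraMap σ a).symm) a n).symm

end MapMatrix

section Hilbert90

variable {F M : Type*} [Field F] [Field M] [Algebra F M] {m : Type*} [Fintype m]
  (σ : M ≃ₐ[F] M) (g : Matrix m m M)

/-- The vectors fixed by the semilinear map `w ↦ g * σ w`. -/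
def semilinearFixedPoints : Set (m → M) := {w | g *ᵥ (σ ∘ w) = w}

variable [DecidableEq m]

/-- The sum of the orbit of `v` under the semilinear map `w ↦ g * σ w`. -/
noncomputable def orbitSum (v : m → M) : m → M :=
  ∑ i ∈ Finset.range (orderOf σ), twistedPow σ.mapMatrix g i *ᵥ (⇑(σ ^ i) ∘ v)

variable {g} (hg : twistedPow σ.mapMatrix g (orderOf σ) = 1)
include hg

theorem orbitSum_mem_semilinearFixedPoints (v : m → M) :
    orbitSum σ g v ∈ semilinearFixedPoints σ g := by
  have hmap : σ ∘ orbitSum σ g v = ∑ i ∈ Finset.range (orderOf σ),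
      σ.mapMatrix (twistedPow σ.mapMatrix g i) *ᵥ (⇑(σ ^ (i + 1)) ∘ v) := by
    ext k
    simp only [orbitSum, Function.comp_apply, Finset.sum_apply, map_sum]
    refine Finset.sum_congr rfl fun i _ => ?_
    refine (RingHom.map_mulVec (σ : M →+* M) _ _ k).trans ?_
    rw [pow_succ']
    rfl
  have hshift := Finset.sum_range_succ
    (fun i => twistedPow σ.mapMatrix g i *ᵥ (⇑(σ ^ i) ∘ v)) (orderOf σ)
  rw [Finset.sum_range_succ', hg, pow_orderOf_eq_one, twistedPow_zero, pow_zero] at hshift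
  change g *ᵥ (σ ∘ orbitSum σ g v) = orbitSum σ g v
  rw [hmap, mulVec_sum]
  simp only [mulVec_mulVec, ← twistedPow_succ]
  exact add_right_cancel hshift

variable (hσ : IsOfFinOrder σ)
include hσ

-- A linear form killing all fixed vectors kills `orbitSum (l • v)` for all scalars `l`, which is a
-- relation between the distinct characters `σ ^ i` with coefficients independent of `l`.
theorem span_semilinearFixedPoints_eq_top : Submodule.span M (semilinearFixedPoints σ g) = ⊤ := by
  by_contra hne
  obtain ⟨f, hf0, hf⟩ := Submodule.exists_le_ker_of_lt_top _ (lt_top_iff_ne_top.2 hne)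
  refine hf0 (LinearMap.ext fun v => ?_)
  have hkill (l : M) : f (orbitSum σ g (l • v)) = 0 :=
    hf (Submodule.subset_span (orbitSum_mem_semilinearFixedPoints σ hg _))
  have hindep := (linearIndependent_monoidHom M M).comp
    (fun i : Fin (orderOf σ) => ((σ ^ i.1 : M ≃ₐ[F] M) : M →* M)) fun i j hij =>
      Fin.ext (pow_injOn_Iio_orderOf i.2 j.2 (AlgEquiv.ext fun x => DFunLike.congr_fun hij x))
  rw [Fintype.linearIndependent_iff] at hindep
  have hsum : ∑ i : Fin (orderOf σ), f (twistedPow σ.mapMatrix g i *ᵥ (⇑(σ ^ i.1) ∘ v)) •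
      ⇑((σ ^ i.1 : M ≃ₐ[F] M) : M →* M) = 0 := by
    ext l
    rw [Pi.zero_apply, ← hkill l, orbitSum, map_sum, ← Fin.sum_univ_eq_sum_range
      (fun i => f (twistedPow σ.mapMatrix g i *ᵥ (⇑(σ ^ i) ∘ (l • v)))), Finset.sum_apply]
    refine Finset.sum_congr rfl fun i _ => ?_
    have hsmul : ⇑(σ ^ i.1) ∘ (l • v) = (σ ^ i.1) l • (⇑(σ ^ i.1) ∘ v) := by ext; simp
    rw [hsmul, mulVec_smul, map_smul, smul_eq_mul, mul_comm]
    rfl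
  have hcoeff := hindep _ hsum ⟨0, hσ.orderOf_pos⟩
  rw [twistedPow_zero, one_mulVec, pow_zero] at hcoeff
  exact hcoeff

theorem exists_mul_mapMatrix_eq_self : ∃ P : GL m M, g * σ.mapMatrix P.1 = P.1 := by
  obtain ⟨b, hb, hspan, hindep⟩ := exists_linearIndependent M (semilinearFixedPoints σ g)
  rw [span_semilinearFixedPoints_eq_top σ hg hσ] at hspan
  let B : Module.Basis b M (m → M) := Module.Basis.mk hindep (by rw [Subtype.range_coe, hspan])
  let e : b ≃ m := B.indexEquiv (Pi.basisFun M m)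
  obtain ⟨P, hP⟩ : IsUnit (Matrix.of fun i j => (e.symm j).1 i) := by
    rw [← linearIndependent_cols_iff_isUnit]
    exact hindep.comp e.symm e.symm.injective
  refine ⟨P, ?_⟩
  rw [hP]
  ext i j
  exact congrFun (hb (e.symm j).2) i

end Hilbert90

section Descent

variable {F M C : Type*} [Field F] [Field M] [Algebra F M] {m : Type*} [Fintype m] [DecidableEq m]
  [Ring C] [Algebra F C]

/-- The matrix `g` intertwines the representation `ρ` with its conjugate under `σ`. -/
def Intertwines (ρ : C →ₐ[F] Matrix m m M) (σ : M ≃ₐ[F] M) (g : Matrix m m M) : Prop :=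
  ∀ c, g * σ.mapMatrix (ρ c) = ρ c * g

/-- The representation `ρ` has all its entries in the fixed field of `σ`. -/
def IsInvariant (σ : M ≃ₐ[F] M) (ρ : C →ₐ[F] Matrix m m M) : Prop :=
  ∀ c, σ.mapMatrix (ρ c) = ρ c

section Invariant

variable {ρ : C →ₐ[F] Matrix m m M} {σ : M ≃ₐ[F] M}

theorem exists_isInvariant_of_mul_mapMatrix_eq_self {g : Matrix m m M} (hg : Intertwines ρ σ g)
    {P : GL m M} (hP : g * σ.mapMatrix P.1 = P.1) :
    ∃ ρ' : C →ₐ[F] Matrix m m M, IsInvariant σ ρ' := by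
  let ρ' : C →ₐ[F] Matrix m m M :=
    (MulSemiringAction.toAlgHom F (Matrix m m M) (ConjAct.toConjAct P⁻¹)).comp ρ
  have hρ' : ∀ c, P.1 * ρ' c = ρ c * P.1 := fun c => by
    change P.1 * (P⁻¹.1 * ρ c * P⁻¹⁻¹.1) = _
    rw [inv_inv, mul_assoc, Units.mul_inv_cancel_left]
  refine ⟨ρ', fun c => P.isUnit.mul_left_cancel ?_⟩
  calc P.1 * σ.mapMatrix (ρ' c) = g * σ.mapMatrix (P.1 * ρ' c) := by
        rw [map_mul, ← mul_assoc, hP]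
    _ = ρ c * P.1 := by rw [hρ', map_mul, ← mul_assoc, hg, mul_assoc, hP]
    _ = P.1 * ρ' c := (hρ' c).symm

theorem exists_isInvariant_of_twistedPow_eq (hσ : IsOfFinOrder σ) {g : GL m M}
    (hg : Intertwines ρ σ g.1) {e h : M} (he0 : e ≠ 0)
    (he : twistedPow σ.mapMatrix g.1 (orderOf σ) = algebraMap M _ e)
    (hh : twistedPow σ h (orderOf σ) = e) :
    ∃ ρ' : C →ₐ[F] Matrix m m M, IsInvariant σ ρ' := by
  have hg' : Intertwines ρ σ (algebraMap M _ h⁻¹ * g.1) := fun c => by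
    rw [mul_assoc, hg, ← mul_assoc, Algebra.commutes, mul_assoc]
  have hone : twistedPow σ.mapMatrix (algebraMap M _ h⁻¹ * g.1) (orderOf σ) = 1 := by
    rw [twistedPow_mul_of_commute, he, twistedPow_algebraMap, ← map_mul, twistedPow_inv, hh,
      inv_mul_cancel₀ he0, map_one]
    intro n r
    rw [twistedPow_algebraMap, mapMatrix_algebraMap]
    exact Algebra.commutes _ _
  obtain ⟨P, hP⟩ := exists_mul_mapMatrix_eq_self σ hone hσ
  exact exists_isInvariant_of_mul_mapMatrix_eq_self hg' hP

end Invariant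

variable [IsSimpleRing C] [Algebra.IsCentral F C] [FiniteDimensional F C] [Nonempty m]
  (hC : Module.finrank F C = Fintype.card m ^ 2)
include hC

theorem exists_intertwines (ρ : C →ₐ[F] Matrix m m M) (σ : M ≃ₐ[F] M) :
    ∃ g : GL m M, Intertwines ρ σ g.1 := by
  obtain ⟨g, hg⟩ := exists_rep_mul_eq_mul_rep hC ρ (σ.mapMatrix.toAlgHom.comp ρ)
  exact ⟨g, fun c => (hg c).symm⟩

variable {ρ : C →ₐ[F] Matrix m m M} {σ : M ≃ₐ[F] M} {g : GL m M} (hg : Intertwines ρ σ g.1)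
include hg

theorem exists_twistedPow_eq_algebraMap : ∃ e : M, e ≠ 0 ∧ σ e = e ∧
    twistedPow σ.mapMatrix g.1 (orderOf σ) = algebraMap M _ e := by
  obtain ⟨e, he⟩ := exists_eq_algebraMap_of_commute_rep hC ρ
    (x := twistedPow σ.mapMatrix g.1 (orderOf σ)) fun c => by
      have := twistedPow_mul_iterate σ.mapMatrix (hg c) (orderOf σ)
      rw [mapMatrix_iterate_orderOf] at this
      exact this.symm
  refine ⟨e, ?_, ?_, he⟩
  · rintro rfl
    have hunit := isUnit_twistedPow σ.mapMatrix g.isUnit (orderOf σ)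
    rw [he, map_zero] at hunit
    exact not_isUnit_zero hunit
  · have hsucc := twistedPow_succ σ.mapMatrix g.1 (orderOf σ)
    rw [twistedPow_succ', mapMatrix_iterate_orderOf, he, mapMatrix_algebraMap,
      ← Algebra.commutes] at hsucc
    exact (FaithfulSMul.algebraMap_injective M (Matrix m m M)
      (g.isUnit.mul_right_cancel hsucc)).symm

theorem exists_twistedPow_eq_of_isInvariant {ρ' : C →ₐ[F] Matrix m m M} (hρ' : IsInvariant σ ρ')
    {e : M} (he : twistedPow σ.mapMatrix g.1 (orderOf σ) = algebraMap M _ e) :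
    ∃ k : M, twistedPow σ k (orderOf σ) = e := by
  obtain ⟨Q, hQ⟩ := exists_rep_mul_eq_mul_rep hC ρ ρ'
  have hcomm : ∀ c, Commute (ρ' c) (Q⁻¹.1 * (g.1 * σ.mapMatrix Q.1)) := fun c => by
    apply Q.isUnit.mul_left_cancel
    calc Q.1 * (ρ' c * (Q⁻¹.1 * (g.1 * σ.mapMatrix Q.1)))
        = ρ c * (g.1 * σ.mapMatrix Q.1) := by
          rw [← mul_assoc, ← hQ, mul_assoc, Units.mul_inv_cancel_left]
      _ = g.1 * σ.mapMatrix (Q.1 * ρ' c) := by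
          rw [← hQ, map_mul, ← mul_assoc, ← hg, mul_assoc]
      _ = Q.1 * (Q⁻¹.1 * (g.1 * σ.mapMatrix Q.1) * ρ' c) := by
          rw [map_mul, hρ', ← mul_assoc, mul_assoc Q⁻¹.1, Units.mul_inv_cancel_left]
  obtain ⟨k, hk⟩ := exists_eq_algebraMap_of_commute_rep hC ρ' hcomm
  have hkQ : g.1 * σ.mapMatrix Q.1 = Q.1 * algebraMap M _ k := by
    rw [← hk, Units.mul_inv_cancel_left]
  have hiter := twistedPow_mul_iterate σ.mapMatrix hkQ (orderOf σ)
  rw [mapMatrix_iterate_orderOf, he, twistedPow_algebraMap, Algebra.commutes] at hiter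
  exact ⟨k, (FaithfulSMul.algebraMap_injective M (Matrix m m M)
    (Q.isUnit.mul_left_cancel hiter)).symm⟩

end Descent

section KroneckerPower

variable {ι m : Type*} [Fintype ι]

/-- The Kronecker product of a finite family of square matrices of the same size. -/
def piKronecker {R : Type*} [CommMonoid R] (X : ι → Matrix m m R) : Matrix (ι → m) (ι → m) R :=
  of fun i j => ∏ k, X k (i k) (j k)

variable {R : Type*} [CommSemiring R]

theorem piKronecker_one [DecidableEq m] : piKronecker (fun _ : ι => (1 : Matrix m m R)) = 1 := by
  classical
  ext i j
  rcases eq_or_ne i j with rfl | hij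
  · simp [piKronecker]
  · obtain ⟨k, hk⟩ := Function.ne_iff.1 hij
    rw [one_apply_ne hij]
    exact Finset.prod_eq_zero (Finset.mem_univ k) (one_apply_ne hk)

theorem piKronecker_mul [DecidableEq ι] [Fintype m] (X Y : ι → Matrix m m R) :
    piKronecker X * piKronecker Y = piKronecker (X * Y) := by
  ext i j
  simp only [piKronecker, of_apply, mul_apply, ← Finset.prod_mul_distrib, Pi.mul_apply]
  rw [Finset.prod_univ_sum (fun _ => Finset.univ), Fintype.piFinset_univ]

variable (ι) [DecidableEq ι] [Fintype m] [DecidableEq m]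

/-- The Kronecker power of a square matrix, with `ι` indexing the factors. -/
def kroneckerPow : Matrix m m R →* Matrix (ι → m) (ι → m) R where
  toFun X := piKronecker fun _ => X
  map_one' := piKronecker_one
  map_mul' _ _ := (piKronecker_mul _ _).symm

theorem kroneckerPow_algebraMap (e : R) :
    kroneckerPow ι (algebraMap R (Matrix m m R) e) = algebraMap R _ (e ^ Fintype.card ι) := by
  have h : kroneckerPow ι (e • (1 : Matrix m m R)) = e ^ Fintype.card ι • kroneckerPow ι 1 := by
    ext i j
    simp [kroneckerPow, piKronecker, Finset.prod_mul_distrib]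
  rw [Algebra.algebraMap_eq_smul_one, Algebra.algebraMap_eq_smul_one, h, map_one]

variable {F A M : Type*} [Field F] [Ring A] [Algebra F A] [Field M] [Algebra F M]

/-- The multilinear map `a ↦ ρ (a 1) ⊗ ⋯ ⊗ ρ (a n)` with values in Kronecker products. -/
def piKroneckerMultilinear (ρ : A →ₗ[F] Matrix m m M) :
    MultilinearMap F (fun _ : ι => A) (Matrix (ι → m) (ι → m) M) where
  toFun a := piKronecker fun k => ρ (a k)
  map_update_add' a k x y := by
    ext i j
    exact ((MultilinearMap.mkPiAlgebra F ι M).compLinearMap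
      fun k => entryLinearMap F M (i k) (j k) ∘ₗ ρ).map_update_add a k x y
  map_update_smul' a k c x := by
    ext i j
    exact ((MultilinearMap.mkPiAlgebra F ι M).compLinearMap
      fun k => entryLinearMap F M (i k) (j k) ∘ₗ ρ).map_update_smul a k c x

/-- The representation of a tensor power of `A` by Kronecker products of the matrices `ρ a`. -/
noncomputable def kroneckerPowRep (ρ : A →ₐ[F] Matrix m m M) :
    (⨂[F] _ : ι, A) →ₐ[F] Matrix (ι → m) (ι → m) M :=
  PiTensorProduct.liftAlgHom (piKroneckerMultilinear ι ρ.toLinearMap)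
    (by simpa [piKroneckerMultilinear] using piKronecker_one)
    fun x y => by
      change piKronecker _ = piKronecker _ * piKronecker _
      rw [piKronecker_mul]
      exact congrArg piKronecker (funext fun k => map_mul ρ (x k) (y k))

theorem kroneckerPowRep_tprod (ρ : A →ₐ[F] Matrix m m M) (a : ι → A) :
    kroneckerPowRep ι ρ (PiTensorProduct.tprod F a) = piKronecker fun k => ρ (a k) :=
  PiTensorProduct.lift.tprod _

variable {ι} (σ : M ≃ₐ[F] M)

theorem mapMatrix_piKronecker (X : ι → Matrix m m M) :
    σ.mapMatrix (piKronecker X) = piKronecker fun k => σ.mapMatrix (X k) := by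
  ext i j
  simp [piKronecker]

variable {σ}

theorem Intertwines.kroneckerPow {ρ : A →ₐ[F] Matrix m m M} {g : Matrix m m M}
    (hg : Intertwines ρ σ g) :
    Intertwines (kroneckerPowRep ι ρ) σ (GenusMerging.kroneckerPow ι g) := fun x => by
  induction x using PiTensorProduct.induction_on with
  | smul_tprod r a =>
    rw [map_smul, map_smul, mul_smul_comm, smul_mul_assoc, kroneckerPowRep_tprod,
      mapMatrix_piKronecker]
    congr 1
    exact (piKronecker_mul _ _).trans
      ((congrArg piKronecker (funext fun k => hg (a k))).trans (piKronecker_mul _ _).symm)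
  | add x y hx hy => rw [map_add, map_add, mul_add, add_mul, hx, hy]

end KroneckerPower

section Torsion

theorem finrank_tpow {F A : Type u} [Field F] [Ring A] [Algebra F A] [FiniteDimensional F A]
    (p : ℕ) : Module.finrank F (tpow F A p) = Module.finrank F A ^ p := by
  rw [Module.finrank_eq_card_basis (Basis.piTensorProduct fun _ : Fin p => Module.finBasis F A)]
  simp

theorem nonempty_algEquiv_matrix_of_isSplit {F B : Type u} [Field F] [Ring B] [Algebra F B]
    (hB : IsSplit F B) {m : Type*} [Fintype m] [DecidableEq m]
    (hm : Module.finrank F B = Fintype.card m ^ 2) : Nonempty (B ≃ₐ[F] Matrix m m F) := by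
  obtain ⟨k, -, ⟨e⟩⟩ := hB
  have hk : k = Fintype.card m := by
    rw [e.toLinearEquiv.finrank_eq, Module.finrank_matrix, Fintype.card_fin, Module.finrank_self,
      mul_one, ← sq] at hm
    exact Nat.pow_left_injective two_ne_zero hm
  exact ⟨e.trans (reindexAlgEquiv F F ((finCongr hk).trans (Fintype.equivFin m).symm))⟩

theorem exists_twistedPow_eq_of_isSplit {F B : Type u} [Field F] [Ring B] [Algebra F B]
    (hB : IsSplit F B) {m : Type*} [Fintype m] [DecidableEq m] [Nonempty m]
    (hm : Module.finrank F B = Fintype.card m ^ 2) {M : Type*} [Field M] [Algebra F M]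
    {ρ : B →ₐ[F] Matrix m m M} {σ : M ≃ₐ[F] M} {g : GL m M} (hg : Intertwines ρ σ g.1) {e : M}
    (he : twistedPow σ.mapMatrix g.1 (orderOf σ) = algebraMap M _ e) :
    ∃ k : M, twistedPow σ k (orderOf σ) = e := by
  obtain ⟨f⟩ := nonempty_algEquiv_matrix_of_isSplit hB hm
  obtain ⟨k, hk, ⟨f'⟩⟩ := hB
  have : NeZero k := ⟨hk.ne'⟩
  have : Algebra.IsCentral F B := .of_algEquiv F _ _ f'.symm
  have : IsSimpleRing B := .of_ringEquiv f'.symm.toRingEquiv inferInstance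
  have : FiniteDimensional F B := f'.symm.toLinearEquiv.finiteDimensional
  refine exists_twistedPow_eq_of_isInvariant hm hg
    (ρ' := (Algebra.ofId F M).mapMatrix.comp f.toAlgHom) (fun c => ?_) he
  ext i j
  exact σ.commutes _

theorem exists_twistedPow_eq_of_coprime {M T : Type*} [Field M] [FunLike T M M]
    [MonoidHomClass T M M] {σ : T} {e k : M} (he : σ e = e) (he0 : e ≠ 0) {p n : ℕ}
    (hpn : p.Coprime n) (hk : twistedPow σ k n = e ^ p) : ∃ h : M, twistedPow σ h n = e := by
  have zpow_eq (a : M) : ∀ z : ℤ, twistedPow σ (a ^ z) n = twistedPow σ a n ^ z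
    | .ofNat i => by simp [twistedPow_pow]
    | .negSucc i => by simp [zpow_negSucc, twistedPow_inv, twistedPow_pow]
  refine ⟨k ^ p.gcdA n * e ^ p.gcdB n, ?_⟩
  rw [twistedPow_mul, zpow_eq, zpow_eq, hk, twistedPow_of_fixed σ he, ← zpow_natCast,
    ← zpow_natCast, ← _root_.zpow_mul, ← _root_.zpow_mul, ← zpow_add₀ he0, ← Nat.gcd_eq_gcd_ab,
    hpn.gcd_eq_one, Nat.cast_one, zpow_one]

/-- `C` is a central simple `F`-algebra of degree `n` whose Brauer class is killed by `p`. -/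
structure IsTorsionCSA (F C : Type u) [Field F] [Ring C] [Algebra F C] (p n : ℕ) : Prop where
  isCSA : IsCSA F C
  finrank_eq : Module.finrank F C = n ^ 2
  isPTorsion : IsPTorsion F C p

namespace IsTorsionCSA

variable {F C : Type u} [Field F] [Ring C] [Algebra F C] {p n : ℕ} (hC : IsTorsionCSA F C p n)
include hC

theorem isCentral : Algebra.IsCentral F C := hC.isCSA.1

theorem isSimpleRing : IsSimpleRing C := hC.isCSA.2.1

theorem finiteDimensional : FiniteDimensional F C := hC.isCSA.2.2

theorem degree_ne_zero : n ≠ 0 := by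
  rintro rfl
  have := hC.isSimpleRing
  have := hC.finiteDimensional
  exact Module.finrank_pos.ne' hC.finrank_eq

-- With `e` the obstruction to descending `ρ` to the fixed field of `σ`, that of its Kronecker power
-- is `e ^ p`, which is a norm since the tensor power of `C` is split.
theorem exists_isInvariant {M : Type*} [Field M] [Algebra F M] {σ : M ≃ₐ[F] M}
    (hσ : IsOfFinOrder σ) (hpσ : p.Coprime (orderOf σ)) (ρ : C →ₐ[F] Matrix (Fin n) (Fin n) M) :
    ∃ ρ' : C →ₐ[F] Matrix (Fin n) (Fin n) M, IsInvariant σ ρ' := by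
  have := hC.isCentral
  have := hC.isSimpleRing
  have := hC.finiteDimensional
  have : NeZero n := ⟨hC.degree_ne_zero⟩
  have hdim : Module.finrank F C = Fintype.card (Fin n) ^ 2 := by simpa using hC.finrank_eq
  obtain ⟨g, hg⟩ := exists_intertwines hdim ρ σ
  obtain ⟨e, he0, hσe, he⟩ := exists_twistedPow_eq_algebraMap hdim hg
  have hpow : twistedPow σ.mapMatrix (Units.map (kroneckerPow (Fin p)) g).1 (orderOf σ) =
      algebraMap M _ (e ^ p) := by
    rw [Units.coe_map, ← map_twistedPow (τ := σ.mapMatrix)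
      (kroneckerPow (R := M) (m := Fin n) (Fin p)) fun _ => (mapMatrix_piKronecker σ _).symm, he,
      kroneckerPow_algebraMap, Fintype.card_fin]
  have hdim' : Module.finrank F (tpow F C p) = Fintype.card (Fin p → Fin n) ^ 2 := by
    rw [finrank_tpow, hC.finrank_eq, Fintype.card_fun, Fintype.card_fin, Fintype.card_fin,
      pow_right_comm]
  obtain ⟨k, hk⟩ := exists_twistedPow_eq_of_isSplit hC.isPTorsion hdim' hg.kroneckerPow hpow
  obtain ⟨h, hh⟩ := exists_twistedPow_eq_of_coprime hσe he0 hpσ hk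
  exact exists_isInvariant_of_twistedPow_eq hσ hg he0 he hh

end IsTorsionCSA

end Torsion

/-! ### Splitting by extensions of prime-to-`p` degree -/

section MatrixRepresentation

variable {F C : Type*} [Field F] [Ring C] [Algebra F C]

theorem exists_rep_of_forall_mem_range {R Q : Type*} [CommRing R] [Algebra F R] [CommRing Q]
    [Algebra F Q] {m : Type*} [Fintype m] [DecidableEq m] {j : R →ₐ[F] Q}
    (hj : Function.Injective j) (ρ : C →ₐ[F] Matrix m m Q) (h : ∀ c i k, ρ c i k ∈ j.range) :
    ∃ ρ' : C →ₐ[F] Matrix m m R, ∀ c, j.mapMatrix (ρ' c) = ρ c := by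
  have hinj : Function.Injective (j.mapMatrix : Matrix m m R →ₐ[F] Matrix m m Q) :=
    Matrix.map_injective hj
  have hmem : ∀ c, ρ c ∈ (j.mapMatrix : Matrix m m R →ₐ[F] Matrix m m Q).range := fun c => by
    choose r hr using h c
    exact ⟨Matrix.of r, by ext i k; exact hr i k⟩
  let e := AlgEquiv.ofInjective _ hinj
  exact ⟨e.symm.toAlgHom.comp (ρ.codRestrict _ hmem),
    fun c => congrArg Subtype.val (e.apply_symm_apply (ρ.codRestrict _ hmem c))⟩

/-- `C` acts on `K ^ n`; for `C` central simple of degree `n`, this says that `K` splits `C`. -/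
def HasMatrixRep (F C K : Type*) [Field F] [Ring C] [Algebra F C] [Field K] [Algebra F K]
    (n : ℕ) : Prop :=
  Nonempty (C →ₐ[F] Matrix (Fin n) (Fin n) K)

theorem HasMatrixRep.map {K K' : Type*} [Field K] [Algebra F K] [Field K'] [Algebra F K'] {n : ℕ}
    (h : HasMatrixRep F C K n) (f : K →ₐ[F] K') : HasMatrixRep F C K' n :=
  h.elim fun ρ => ⟨f.mapMatrix.comp ρ⟩

end MatrixRepresentation

section SimpleAlgebra

section LinearEquiv

variable {A : Type*} [Ring A] [IsSimpleRing A]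

theorem exists_linearEquiv_fin_fun [IsArtinianRing A] (S W : Type*) [AddCommGroup S] [Module A S]
    [IsSimpleModule A S] [AddCommGroup W] [Module A W] [Module.Finite A W] :
    ∃ k : ℕ, Nonempty (W ≃ₗ[A] (Fin k → S)) := by
  let e : S ≃ₗ[A] LinearMap.range (LinearMap.inr A W S) :=
    LinearEquiv.ofInjective _ LinearMap.inr_injective
  have : IsSimpleModule A (LinearMap.range (LinearMap.inr A W S)) := .congr e.symm
  exact (((IsSimpleRing.isIsotypic A (W × S) _).of_linearEquiv_type e.symm).of_injective
    (LinearMap.inl A W S) LinearMap.inl_injective).linearEquiv_fun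

variable (K : Type*) [Field K] [Algebra K A] [FiniteDimensional K A]

theorem exists_linearEquiv_fin_fun_of_finiteDimensional (S W : Type*) [AddCommGroup S]
    [Module A S] [IsSimpleModule A S] [Module K S] [IsScalarTower K A S] [FiniteDimensional K S]
    [AddCommGroup W] [Module A W] [Module K W] [IsScalarTower K A W] [FiniteDimensional K W] :
    ∃ k : ℕ, Module.finrank K W = k * Module.finrank K S ∧ Nonempty (W ≃ₗ[A] (Fin k → S)) := by
  have : IsArtinianRing A := .of_finite K A
  have : Module.Finite A W := .of_restrictScalars_finite K A W
  obtain ⟨k, ⟨e⟩⟩ := exists_linearEquiv_fin_fun (A := A) S W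
  refine ⟨k, ?_, ⟨e⟩⟩
  rw [(e.restrictScalars K).finrank_eq, Module.finrank_pi_fintype]
  simp

variable (A) in
theorem exists_isSimpleModule :
    ∃ S : Submodule A A, IsSimpleModule A S ∧ FiniteDimensional K S := by
  have : IsArtinianRing A := .of_finite K A
  obtain ⟨S, hS⟩ := IsSemisimpleModule.exists_simple_submodule A A
  exact ⟨S, hS, FiniteDimensional.finiteDimensional_submodule (S.restrictScalars K)⟩

variable {K} in
theorem nonempty_linearEquiv_of_finrank_eq {V W : Type*} [AddCommGroup V] [Module A V]
    [Module K V] [IsScalarTower K A V] [FiniteDimensional K V] [AddCommGroup W] [Module A W]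
    [Module K W] [IsScalarTower K A W] [FiniteDimensional K W]
    (h : Module.finrank K V = Module.finrank K W) : Nonempty (V ≃ₗ[A] W) := by
  obtain ⟨S, _, _⟩ := exists_isSimpleModule A K
  obtain ⟨k, hk, ⟨e⟩⟩ := exists_linearEquiv_fin_fun_of_finiteDimensional (A := A) K S V
  obtain ⟨l, hl, ⟨f⟩⟩ := exists_linearEquiv_fin_fun_of_finiteDimensional (A := A) K S W
  have := IsSimpleModule.nontrivial A S
  obtain rfl : k = l :=
    Nat.eq_of_mul_eq_mul_right (Module.finrank_pos (R := K) (M := S)) (by rw [← hk, ← hl, h])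
  exact ⟨e.trans f.symm⟩

end LinearEquiv

variable {K A : Type*} [Field K] [Ring A] [Algebra K A]

theorem exists_algHom_matrix_of_finrank_dvd (S : Type*) [AddCommGroup S] [Module A S] [Module K S]
    [IsScalarTower K A S] [FiniteDimensional K S] {n : ℕ} (h : Module.finrank K S ∣ n) :
    Nonempty (A →ₐ[K] Matrix (Fin n) (Fin n) K) := by
  obtain ⟨k, rfl⟩ := h
  have hdim : Module.finrank K (Fin k → S) = Module.finrank K S * k := by
    rw [Module.finrank_pi_fintype]
    simp [mul_comm]
  exact ⟨(LinearMap.toMatrixAlgEquiv (Module.finBasisOfFinrankEq K (Fin k → S) hdim)).toAlgHom.comp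
    (Algebra.lsmul K K (Fin k → S))⟩

theorem finrank_dvd_of_algHom_end [FiniteDimensional K A] [IsSimpleRing A] (S : Type*)
    [AddCommGroup S] [Module A S] [IsSimpleModule A S] [Module K S] [IsScalarTower K A S]
    [FiniteDimensional K S] {W : Type*} [AddCommGroup W] [Module K W] [FiniteDimensional K W]
    (φ : A →ₐ[K] Module.End K W) : Module.finrank K S ∣ Module.finrank K W := by
  let _ : Module A W := Module.compHom W φ.toRingHom
  have : IsScalarTower K A W := ⟨fun k a w => LinearMap.congr_fun (map_smul φ k a) w⟩
  obtain ⟨k, hk, -⟩ := exists_linearEquiv_fin_fun_of_finiteDimensional (A := A) K S W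
  exact Dvd.intro_left k hk.symm

end SimpleAlgebra

section CoprimeDegree

theorem dvd_of_forall_prime {δ n : ℕ}
    (h : ∀ q : ℕ, q.Prime → ∃ d, ¬ q ∣ d ∧ δ ∣ n * d) : δ ∣ n := by
  refine (Nat.dvd_iff_prime_pow_dvd_dvd _ _).2 fun q k hq hqk => ?_
  obtain ⟨d, hqd, hd⟩ := h q hq
  exact (((Nat.Prime.coprime_iff_not_dvd hq).2 hqd).pow_left k).dvd_of_dvd_mul_right (hqk.trans hd)

variable {F C K : Type*} [Field F] [Ring C] [Algebra F C] [Field K] [Algebra F K]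

theorem finrank_dvd_of_hasMatrixRep [FiniteDimensional F C] [IsSimpleRing (K ⊗[F] C)] (S : Type*)
    [AddCommGroup S] [Module (K ⊗[F] C) S] [IsSimpleModule (K ⊗[F] C) S] [Module K S]
    [IsScalarTower K (K ⊗[F] C) S] [FiniteDimensional K S] {L : Type*} [Field L] [Algebra F L]
    [Algebra K L] [IsScalarTower F K L] [FiniteDimensional K L] {n : ℕ}
    (hL : HasMatrixRep F C L n) : Module.finrank K S ∣ n * Module.finrank K L := by
  obtain ⟨ρ⟩ := hL
  have hdim : Module.finrank K (Fin n → L) = n * Module.finrank K L := by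
    rw [Module.finrank_pi_fintype]
    simp
  let r : Module.End L (Fin n → L) →ₐ[F] Module.End K (Fin n → L) :=
    AlgHom.ofLinearMap (LinearMap.restrictScalarsₗ K L _ _ F) rfl fun _ _ => rfl
  let φ : C →ₐ[F] Module.End K (Fin n → L) :=
    r.comp ((Matrix.toLinAlgEquiv'.toAlgHom.restrictScalars F).comp ρ)
  rw [← hdim]
  exact finrank_dvd_of_algHom_end S
    (Algebra.TensorProduct.lift (Algebra.ofId K _) φ fun k c => Algebra.commutes k (φ c))

theorem hasMatrixRep_of_forall_prime [FiniteDimensional F C] [IsSimpleRing C]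
    [Algebra.IsCentral F C] {n : ℕ}
    (h : ∀ q : ℕ, q.Prime → ∃ (L : Type u) (_ : Field L) (_ : Algebra F L) (_ : Algebra K L),
      IsScalarTower F K L ∧ FiniteDimensional K L ∧ ¬ q ∣ Module.finrank K L ∧
        HasMatrixRep F C L n) : HasMatrixRep F C K n := by
  have := isSimpleRing_tensorProduct (F := F) (A := K) (B := C)
  obtain ⟨S, _, _⟩ := exists_isSimpleModule (K ⊗[F] C) K
  obtain ⟨φ⟩ := exists_algHom_matrix_of_finrank_dvd (A := K ⊗[F] C) S
    (dvd_of_forall_prime (n := n) fun q hq => by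
      obtain ⟨L, _, _, _, _, _, hqL, hL⟩ := h q hq
      exact ⟨_, hqL, finrank_dvd_of_hasMatrixRep S hL⟩)
  exact ⟨(φ.restrictScalars F).comp Algebra.TensorProduct.includeRight⟩

end CoprimeDegree

section Invariance

variable {F C N : Type*} [Field F] [Ring C] [Algebra F C] [Field N] [Algebra F N]

/-- The automorphisms of `N` fixing all the matrices `ρ c`. -/
def invarianceSubgroup {m : Type*} [Fintype m] [DecidableEq m] (ρ : C →ₐ[F] Matrix m m N) :
    Subgroup (N ≃ₐ[F] N) where
  carrier := {σ | IsInvariant σ ρ}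
  one_mem' c := by ext; simp
  mul_mem' {a b} ha hb c := by
    ext i j
    exact (congrArg a (congrFun₂ (hb c) i j)).trans (congrFun₂ (ha c) i j)
  inv_mem' {a} ha c := by
    ext i j
    exact (AlgEquiv.symm_apply_eq a).2 (congrFun₂ (ha c) i j).symm

theorem exists_algEquiv_fixedField {H : Subgroup (N ≃ₐ[F] N)} {τ : N ≃ₐ[F] N}
    (hτ : τ ∈ Subgroup.normalizer (H : Set (N ≃ₐ[F] N))) :
    ∃ σ : IntermediateField.fixedField H ≃ₐ[F] IntermediateField.fixedField H,
      ∀ x, (σ x : N) = τ x := by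
  have hmap : (IntermediateField.fixedField H).map τ.toAlgHom = IntermediateField.fixedField H := by
    ext x
    refine ⟨?_, fun hx => ⟨τ⁻¹ x, fun f => ?_, τ.apply_symm_apply x⟩⟩
    · rintro ⟨y, hy, rfl⟩ f
      have := hy ⟨_, (Subgroup.mem_normalizer_iff''.1 hτ f).1 f.2⟩
      exact τ.symm_apply_eq.1 this
    · have := hx ⟨_, (Subgroup.mem_normalizer_iff.1 hτ f).1 f.2⟩
      exact τ.eq_symm_apply.2 this
  exact ⟨(IntermediateField.intermediateFieldMap τ _).trans (IntermediateField.equivOfEq hmap),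
    fun x => rfl⟩

theorem exists_rep_fixedField {m : Type*} [Fintype m] [DecidableEq m] {H : Subgroup (N ≃ₐ[F] N)}
    {ρ : C →ₐ[F] Matrix m m N} (hρ : H ≤ invarianceSubgroup ρ) :
    ∃ ρ' : C →ₐ[F] Matrix m m (IntermediateField.fixedField H),
      ∀ c, (IntermediateField.fixedField H).val.mapMatrix (ρ' c) = ρ c :=
  exists_rep_of_forall_mem_range (IntermediateField.fixedField H).val.injective ρ fun c i k =>
    ⟨⟨ρ c i k, fun f => congrFun₂ (hρ f.2 c) i k⟩, rfl⟩

end Invariance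

namespace IsTorsionCSA

variable {F C : Type u} [Field F] [Ring C] [Algebra F C] {p n : ℕ} (hC : IsTorsionCSA F C p n)
include hC

section

variable {N : Type*} [Field N] [Algebra F N] {H : Subgroup (N ≃ₐ[F] N)}

theorem exists_le_invarianceSubgroup_of_mem_normalizer {τ : N ≃ₐ[F] N} (hτ : IsOfFinOrder τ)
    (hpτ : p.Coprime (orderOf τ)) (hτH : τ ∈ Subgroup.normalizer (H : Set (N ≃ₐ[F] N)))
    {ρ : C →ₐ[F] Matrix (Fin n) (Fin n) N} (hρ : H ≤ invarianceSubgroup ρ) :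
    ∃ ρ' : C →ₐ[F] Matrix (Fin n) (Fin n) N,
      H ≤ invarianceSubgroup ρ' ∧ τ ∈ invarianceSubgroup ρ' := by
  obtain ⟨σ, hσ⟩ := exists_algEquiv_fixedField hτH
  have hpow (i : ℕ) (x) : ((σ ^ i) x : N) = (τ ^ i) x := by
    induction i with
    | zero => simp
    | succ i ih => rw [pow_succ', pow_succ', AlgEquiv.mul_apply, AlgEquiv.mul_apply, hσ, ih]
  have hσ1 : σ ^ orderOf τ = 1 := AlgEquiv.ext fun x => Subtype.ext <| by
    rw [hpow, pow_orderOf_eq_one]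
    rfl
  obtain ⟨ρ₀, -⟩ := exists_rep_fixedField hρ
  obtain ⟨ρ₁, hρ₁⟩ := hC.exists_isInvariant
    (isOfFinOrder_iff_pow_eq_one.2 ⟨_, hτ.orderOf_pos, hσ1⟩)
    (hpτ.coprime_dvd_right (orderOf_dvd_of_pow_eq_one hσ1)) ρ₀
  refine ⟨(IntermediateField.fixedField H).val.mapMatrix.comp ρ₁, fun h hh c => ?_, fun c => ?_⟩
  · ext i j
    exact (ρ₁ c i j).2 ⟨h, hh⟩
  · ext i j
    exact (hσ _).symm.trans (congrArg Subtype.val (congrFun₂ (hρ₁ c) i j))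

-- If `J < H` is the largest subgroup of invariance of a representation, then the normalizer of `J`
-- in the nilpotent group `H` is strictly larger than `J`.
theorem exists_le_invarianceSubgroup [Finite H] [Group.IsNilpotent H] (hpH : p.Coprime (Nat.card H))
    (hN : HasMatrixRep F C N n) :
    ∃ ρ : C →ₐ[F] Matrix (Fin n) (Fin n) N, H ≤ invarianceSubgroup ρ := by
  obtain ⟨ρ₀⟩ := hN
  obtain ⟨J, ⟨ρ, rfl⟩, hmax⟩ := (Set.toFinite (Set.range
    fun ρ : C →ₐ[F] Matrix (Fin n) (Fin n) N => (invarianceSubgroup ρ).subgroupOf H)).exists_maximal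
      ⟨_, ρ₀, rfl⟩
  refine ⟨ρ, Subgroup.subgroupOf_eq_top.1 (by_contra fun hne => ?_)⟩
  obtain ⟨-, t, ht, htJ⟩ := SetLike.lt_iff_le_and_exists.1
    (Group.normalizerCondition_of_isNilpotent _ (lt_top_iff_ne_top.2 hne))
  obtain ⟨ρ', hle', ht'⟩ := hC.exists_le_invarianceSubgroup_of_mem_normalizer
    (H := ((invarianceSubgroup ρ).subgroupOf H).map H.subtype) (τ := t)
    (Submonoid.isOfFinOrder_coe.2 (isOfFinOrder_of_finite t))
    (by simpa using hpH.coprime_dvd_right (orderOf_dvd_natCard t))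
    (Subgroup.le_normalizer_map H.subtype ⟨t, ht, rfl⟩) (Subgroup.map_le_iff_le_comap.2 le_rfl)
  exact htJ (hmax ⟨ρ', rfl⟩ (Subgroup.map_le_iff_le_comap.1 hle') ht')

end

variable {K N : Type*} [Field K] [Algebra F K] [Field N] [Algebra F N] [Algebra K N]
  [IsScalarTower F K N]

theorem hasMatrixRep_fixedField {H : Subgroup (N ≃ₐ[K] N)} [Finite H] [Group.IsNilpotent H]
    (hpH : p.Coprime (Nat.card H)) (hN : HasMatrixRep F C N n) :
    HasMatrixRep F C (IntermediateField.fixedField H) n := by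
  let r := AlgEquiv.restrictScalarsHom F (S := K) (A := N)
  have hr : Function.Injective r := AlgEquiv.restrictScalars_injective F
  let e : H ≃* H.map r := H.equivMapOfInjective r hr
  have : Finite (H.map r) := .of_equiv _ e.toEquiv
  have : Group.IsNilpotent (H.map r) := Group.nilpotent_of_mulEquiv e
  obtain ⟨ρ, hρ⟩ := hC.exists_le_invarianceSubgroup (H := H.map r)
    (by rwa [← Nat.card_congr e.toEquiv]) hN
  obtain ⟨ρ', -⟩ := exists_rep_of_forall_mem_range
    (j := (IntermediateField.fixedField H).val.restrictScalars F) Subtype.val_injective ρ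
    fun c i k => ⟨⟨ρ c i k, fun f => congrFun₂ (hρ ⟨f.1, f.2, rfl⟩ c) i k⟩, rfl⟩
  exact ⟨ρ'⟩

-- At the prime `p` the degree `[N ^ P : K]` is a good test degree; at `q ≠ p` use the fixed field
-- of a Sylow `q`-subgroup, to which matrix representations over `N` descend.
theorem hasMatrixRep_of_sylow {K N : Type u} [Field K] [Algebra F K] [Field N] [Algebra F N]
    [Algebra K N] [IsScalarTower F K N] [FiniteDimensional K N] [IsGalois K N] (hp : p.Prime)
    (P : Sylow p (N ≃ₐ[K] N)) (hP : HasMatrixRep F C (IntermediateField.fixedField P.1) n) :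
    HasMatrixRep F C K n := by
  have := hC.isCentral
  have := hC.isSimpleRing
  have := hC.finiteDimensional
  have finrank_fixedField (H : Subgroup (N ≃ₐ[K] N)) :
      Module.finrank K (IntermediateField.fixedField H) = H.index := by
    rw [IntermediateField.finrank_eq_fixingSubgroup_index,
      IntermediateField.fixingSubgroup_fixedField]
  refine hasMatrixRep_of_forall_prime fun q hq => ?_
  have : Fact q.Prime := ⟨hq⟩
  suffices ∃ Q : Sylow q (N ≃ₐ[K] N), HasMatrixRep F C (IntermediateField.fixedField Q.1) n by
    obtain ⟨Q, hQ⟩ := this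
    exact ⟨_, inferInstance, inferInstance, inferInstance, inferInstance, inferInstance,
      finrank_fixedField Q.1 ▸ Q.not_dvd_index, hQ⟩
  rcases eq_or_ne p q with rfl | hpq
  · exact ⟨P, hP⟩
  · let Q : Sylow q (N ≃ₐ[K] N) := default
    have := Q.isPGroup'.isNilpotent
    obtain ⟨k, hk⟩ := IsPGroup.iff_card.1 Q.isPGroup'
    refine ⟨Q, hC.hasMatrixRep_fixedField ?_
      (hP.map ((IntermediateField.fixedField P.1).val.restrictScalars F))⟩
    rw [hk]
    exact ((Nat.coprime_primes hp hq).2 hpq).pow_right k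

end IsTorsionCSA

/-! ### The generic norm torsor -/

section Specialization

variable {F C R Q M : Type*} [Field F] [Ring C] [Algebra F C] [CommRing R] [Algebra F R]
  [Field Q] [Algebra F Q] [Algebra R Q] [IsScalarTower F R Q] [IsFractionRing R Q]
  [Field M] [Algebra F M]

theorem exists_injective_algHom_forall_mem_range [IsDomain R] {ι : Type*} [Finite ι]
    (a : ι → Q) : ∃ r : R, r ≠ 0 ∧ ∃ j : Localization.Away r →ₐ[F] Q,
      Function.Injective j ∧ ∀ i, a i ∈ j.range := by
  obtain ⟨⟨r, hr⟩, ha⟩ :=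
    IsLocalization.exist_integer_multiples_of_finite (nonZeroDivisors R) a
  have hr0 : algebraMap R Q r ≠ 0 := IsFractionRing.to_map_ne_zero_of_mem_nonZeroDivisors hr
  have hunit (y : Submonoid.powers r) : IsUnit (algebraMap R Q y) := by
    obtain ⟨_, k, rfl⟩ := y
    simpa using (IsUnit.mk0 _ hr0).pow k
  let j : Localization.Away r →ₐ[F] Q :=
    IsLocalization.liftAlgHom (M := Submonoid.powers r) (f := IsScalarTower.toAlgHom F R Q) hunit
  have hj (x : R) : j (algebraMap R _ x) = algebraMap R Q x :=
    IsLocalization.lift_eq (M := Submonoid.powers r) (g := algebraMap R Q) hunit x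
  refine ⟨r, nonZeroDivisors.ne_zero hr, j, ?_, fun i => ?_⟩
  · refine (IsLocalization.lift_injective_iff (M := Submonoid.powers r) hunit).2 fun x y => ?_
    rw [(IsLocalization.injective (Localization.Away r)
      ((Submonoid.powers_le).2 hr)).eq_iff]
    exact (IsFractionRing.injective R Q).eq_iff.symm
  · obtain ⟨x, hx⟩ := ha i
    refine ⟨IsLocalization.mk' _ x ⟨r, Submonoid.mem_powers r⟩, mul_left_cancel₀ hr0 ?_⟩
    change _ * j _ = _
    rw [← hj, ← map_mul, IsLocalization.mk'_spec'_mk, hj, hx, Algebra.smul_def, hj]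

theorem forall_mem_range_of_basis {R' m κ : Type*} [CommRing R'] [Algebra F R']
    [Fintype m] [DecidableEq m] (b : Module.Basis κ F C) (j : R' →ₐ[F] Q)
    (ρ : C →ₐ[F] Matrix m m Q) (h : ∀ l i k, ρ (b l) i k ∈ j.range) (c : C) (i k : m) :
    ρ c i k ∈ j.range := by
  have hc : c ∈ Submodule.span F (Set.range b) := b.mem_span c
  induction hc using Submodule.span_induction with
  | zero => simp
  | add c d _ _ hc hd => simpa using add_mem hc hd
  | smul t c _ hc => simpa using j.range.smul_mem hc t
  | mem _ hl =>
    obtain ⟨l, rfl⟩ := hl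
    exact h l i k

theorem HasMatrixRep.specialize [IsDomain R] [FiniteDimensional F C]
    (hθ : ∀ r : R, r ≠ 0 → ∃ θ : R →ₐ[F] M, θ r ≠ 0) {n : ℕ} (h : HasMatrixRep F C Q n) :
    HasMatrixRep F C M n := by
  obtain ⟨ρ⟩ := h
  let b := Module.finBasis F C
  obtain ⟨r, hr, j, hj, hrange⟩ := exists_injective_algHom_forall_mem_range (F := F) (R := R)
    fun x : Fin (Module.finrank F C) × Fin n × Fin n => ρ (b x.1) x.2.1 x.2.2
  obtain ⟨ρ', -⟩ := exists_rep_of_forall_mem_range hj ρ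
    (forall_mem_range_of_basis b j ρ fun l i k => hrange (l, i, k))
  obtain ⟨θ, hθ⟩ := hθ r hr
  let θ' : Localization.Away r →ₐ[F] M :=
    IsLocalization.liftAlgHom (M := Submonoid.powers r) (f := θ) (by
      rintro ⟨_, k, rfl⟩
      simpa using (IsUnit.mk0 _ hθ).pow k)
  exact ⟨θ'.mapMatrix.comp ρ'⟩

end Specialization

section UniqueFactorization

section CommMonoid

variable {R T : Type*} [CommMonoid R] [FunLike T R R] [MonoidHomClass T R R] {τ : T} {n : ℕ}

theorem twistedPow_eq_prod_range (τ : T) (x : R) (n : ℕ) :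
    twistedPow τ x n = ∏ j ∈ Finset.range n, τ^[j] x := by
  induction n with
  | zero => simp
  | succ n ih => rw [twistedPow_succ', ih, Finset.prod_range_succ]

theorem twistedPow_apply_of_iterate_eq {x : R} (hx : τ^[n] x = x) :
    twistedPow τ (τ x) n = twistedPow τ x n := by
  rcases n with - | n
  · simp
  · simp only [twistedPow_eq_prod_range, ← Function.iterate_succ_apply]
    rw [Finset.prod_range_succ, Finset.prod_range_succ', Nat.succ_eq_add_one, hx]
    rfl

theorem twistedPow_iterate_apply (hτ : ∀ x, τ^[n] x = x) (x : R) (j : ℕ) :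
    twistedPow τ (τ^[j] x) n = twistedPow τ x n := by
  induction j with
  | zero => rfl
  | succ j ih => rw [Function.iterate_succ_apply', twistedPow_apply_of_iterate_eq (hτ _), ih]

omit [MonoidHomClass T R R] in
theorem dvd_twistedPow (τ : T) (x : R) (hn : n ≠ 0) : x ∣ twistedPow τ x n := by
  obtain ⟨k, rfl⟩ := Nat.exists_eq_succ_of_ne_zero hn
  exact dvd_mul_right _ _

theorem twistedPow_units_mul_inv (τ : T) (v : Rˣ) (n : ℕ) :
    twistedPow τ v.1 n * twistedPow τ v⁻¹.1 n = 1 := by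
  rw [← twistedPow_mul, Units.mul_inv, twistedPow_of_fixed _ (map_one _), one_pow]

end CommMonoid

variable {R S : Type*} [CommRing R] {τ : R →+* R} {n : ℕ}

theorem twistedPow_ne_zero [IsDomain R] (hτ : Function.Injective τ) {x : R} (hx : x ≠ 0) :
    twistedPow τ x n ≠ 0 := by
  induction n with
  | zero => simp
  | succ n ih => exact mul_ne_zero hx ((map_ne_zero_iff τ hτ).2 ih)

theorem exists_twistedPow_eq_mul_of_prime_dvd (hτ : ∀ x, τ^[n] x = x) {q a : R} (hq : Prime q)
    (hqa : q ∣ twistedPow τ a n) :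
    ∃ y, twistedPow τ a n = twistedPow τ q n * twistedPow τ y n := by
  rw [twistedPow_eq_prod_range, hq.dvd_finsetProd_iff] at hqa
  obtain ⟨j, -, y, hy⟩ := hqa
  exact ⟨y, by rw [← twistedPow_mul, ← hy, twistedPow_iterate_apply hτ]⟩

-- A prime factor `q` of the denominator `φ s` divides a conjugate of `a`, so that it can be
-- cancelled from both sides.
theorem exists_isUnit_twistedPow_eq [IsDomain R] [CommMonoidWithZero S]
    [UniqueFactorizationMonoid S] {φ : S →* R}
    (hprime : ∀ q, Prime q → IsUnit (φ q) ∨ Prime (φ q)) (hn : n ≠ 0) (hτ : ∀ x, τ^[n] x = x)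
    {ε : R} (hε : IsUnit ε) {s : S} (hs : s ≠ 0) {a : R}
    (ha : twistedPow τ a n = ε * twistedPow τ (φ s) n) :
    ∃ w, IsUnit w ∧ twistedPow τ w n = ε := by
  have hinj : Function.Injective τ := by
    obtain ⟨k, rfl⟩ := Nat.exists_eq_succ_of_ne_zero hn
    exact Function.LeftInverse.injective (g := τ^[k]) hτ
  induction s using UniqueFactorizationMonoid.induction_on_prime generalizing a with
  | h₁ => exact absurd rfl hs
  | h₂ x hx =>
    obtain ⟨v, hv⟩ := hx.map φ
    have hav : twistedPow τ (a * v⁻¹.1) n = ε := by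
      rw [twistedPow_mul, ha, ← hv, mul_assoc, twistedPow_units_mul_inv, mul_one]
    exact ⟨_, isUnit_of_dvd_unit (dvd_twistedPow τ _ hn) (hav ▸ hε), hav⟩
  | h₃ x q hx hq ih =>
    rw [map_mul, twistedPow_mul] at ha
    rcases hprime q hq with h | h
    · obtain ⟨v, hv⟩ := h
      refine ih hx (a := a * v⁻¹.1) ?_
      rw [twistedPow_mul, ha, ← hv]
      linear_combination ε * twistedPow τ (φ x) n * twistedPow_units_mul_inv τ v n
    · obtain ⟨y, hy⟩ := exists_twistedPow_eq_mul_of_prime_dvd (a := a) hτ h <| ha ▸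
        ((dvd_twistedPow τ _ hn).mul_right _).mul_left _
      refine ih hx (a := y) (mul_left_cancel₀ (twistedPow_ne_zero (n := n) hinj h.ne_zero) ?_)
      rw [← hy, ha, mul_left_comm]

end UniqueFactorization

section SaturatedSubmonoid

variable {S : Type*} [CommMonoidWithZero S] [IsCancelMulZero S]

theorem mem_of_dvd_prod_of_prime {P : Submonoid S} (hunit : ∀ u, IsUnit u → u ∈ P)
    {ms : Multiset S} (hms : ∀ q ∈ ms, Prime q ∧ q ∈ P) {x : S} (hx : x ∣ ms.prod) : x ∈ P := by
  induction ms using Multiset.induction_on generalizing x with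
  | empty => exact hunit x (isUnit_of_dvd_one (by simpa using hx))
  | cons q ms ih =>
    have ih' {y : S} := ih (fun r hr => hms r (Multiset.mem_cons_of_mem hr)) (x := y)
    obtain ⟨hq, hqP⟩ := hms q (Multiset.mem_cons_self q ms)
    rw [Multiset.prod_cons] at hx
    rcases hq.left_dvd_or_dvd_right_of_dvd_mul hx with ⟨y, rfl⟩ | h
    · exact P.mul_mem hqP (ih' ((mul_dvd_mul_iff_left hq.ne_zero).1 hx))
    · exact ih' h

end SaturatedSubmonoid

section TorsorRing

variable {M : Type*} [Field M] (N : ℕ) (f : M[X])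

/-- The ambient polynomial ring `M[X][y₀, …, y_{N - 1}]` of the norm torsor. -/
abbrev TorsorPoly (M : Type*) [Field M] (N : ℕ) := MvPolynomial (Fin N) M[X]

/-- The polynomial `f * y₀ * ⋯ * y_{N - 1}` to be inverted on the norm torsor. -/
noncomputable def torsorDenom : TorsorPoly M N := MvPolynomial.C f * ∏ i, MvPolynomial.X i

/-- The coordinate ring, over `M[X, 1 / f]`, of the torsor `y₀ * ⋯ * y_N = f / b` under the
norm-one torus. The last coordinate is eliminated, so that `b` does not enter the definition. -/
abbrev TorsorRing := Localization.Away (torsorDenom N f)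

theorem isUnit_algebraMap_of_dvd_torsorDenom {s : TorsorPoly M N} (hs : s ∣ torsorDenom N f) :
    IsUnit (algebraMap _ (TorsorRing N f) s) :=
  isUnit_of_dvd_unit (map_dvd _ hs) (IsLocalization.Away.algebraMap_isUnit _)

theorem isUnit_algebraMap_torsorRing_self : IsUnit (algebraMap M[X] (TorsorRing N f) f) :=
  isUnit_algebraMap_of_dvd_torsorDenom N f (Dvd.intro _ rfl)

theorem isUnit_algebraMap_X (i : Fin N) :
    IsUnit (algebraMap (TorsorPoly M N) (TorsorRing N f) (MvPolynomial.X i)) :=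
  isUnit_algebraMap_of_dvd_torsorDenom N f
    ((Finset.dvd_prod_of_mem _ (Finset.mem_univ i)).mul_left _)

variable (b : M)

/-- The coordinates `y₀, …, y_N` of the torsor `y₀ * ⋯ * y_N = f / b`. -/
noncomputable def torsorCoord : Fin (N + 1) → TorsorRing N f :=
  Fin.snoc (α := fun _ => TorsorRing N f)
    (fun i => algebraMap (TorsorPoly M N) _ (MvPolynomial.X i))
    (algebraMap M[X] _ (f * C b⁻¹) *
      Ring.inverse (∏ i, algebraMap (TorsorPoly M N) _ (MvPolynomial.X i)))

@[simp]
theorem torsorCoord_castSucc (i : Fin N) :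
    torsorCoord N f b i.castSucc = algebraMap (TorsorPoly M N) _ (MvPolynomial.X i) := by
  simp [torsorCoord]

theorem prod_torsorCoord :
    ∏ i, torsorCoord N f b i = algebraMap M[X] (TorsorRing N f) (f * C b⁻¹) := by
  have hX : IsUnit (∏ i, algebraMap (TorsorPoly M N) (TorsorRing N f) (MvPolynomial.X i)) :=
    IsUnit.prod_univ_iff.2 (isUnit_algebraMap_X N f)
  rw [torsorCoord, Fin.prod_snoc, mul_left_comm, Ring.mul_inverse_cancel _ hX, mul_one]

variable {b} (hb : b ≠ 0)

include hb in
theorem isUnit_torsorCoord (i : Fin (N + 1)) : IsUnit (torsorCoord N f b i) := by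
  have hunit : IsUnit (algebraMap M[X] (TorsorRing N f) (f * C b⁻¹)) := by
    rw [map_mul]
    exact (isUnit_algebraMap_torsorRing_self N f).mul
      (((IsUnit.mk0 _ (inv_ne_zero hb)).map C).map _)
  rw [← prod_torsorCoord] at hunit
  exact IsUnit.prod_univ_iff.1 hunit i

variable {f} {σ : M →+* M} (hf : f.map σ = f)

/-- The shift `y_i ↦ y_{i + 1}` of the torsor coordinates, restricted to polynomials in the first
`N` of them; it applies `σ` to the coefficients in `M[X]`. -/
noncomputable def torsorShiftPoly (f : M[X]) (b : M) (σ : M →+* M) :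
    TorsorPoly M N →+* TorsorRing N f :=
  MvPolynomial.eval₂Hom ((algebraMap M[X] _).comp (mapRingHom σ))
    fun i => torsorCoord N f b i.succ

include hb hf in
theorem isUnit_torsorShiftPoly_torsorDenom :
    IsUnit (torsorShiftPoly N f b σ (torsorDenom N f)) := by
  change IsUnit (torsorShiftPoly N f b σ (MvPolynomial.C f * ∏ i, MvPolynomial.X i))
  rw [map_mul, map_prod]
  refine IsUnit.mul ?_ (IsUnit.prod_univ_iff.2 fun i => ?_)
  · simpa [torsorShiftPoly, hf] using isUnit_algebraMap_torsorRing_self N f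
  · simpa [torsorShiftPoly] using isUnit_torsorCoord N f hb i.succ

/-- The endomorphism of the coordinate ring of the torsor which shifts the coordinates cyclically
and applies `σ` to the coefficients in `M[X]`. -/
noncomputable def torsorShift : TorsorRing N f →+* TorsorRing N f :=
  IsLocalization.Away.lift _ (isUnit_torsorShiftPoly_torsorDenom N hb hf)

@[simp]
theorem torsorShift_algebraMap (g : M[X]) :
    torsorShift N hb hf (algebraMap M[X] _ g) = algebraMap M[X] _ (g.map σ) := by
  rw [IsScalarTower.algebraMap_apply M[X] (TorsorPoly M N) (TorsorRing N f) g, torsorShift,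
    IsLocalization.Away.lift_eq]
  simp [torsorShiftPoly]

theorem torsorShift_torsorCoord_castSucc (i : Fin N) :
    torsorShift N hb hf (torsorCoord N f b i.castSucc) = torsorCoord N f b i.succ := by
  rw [torsorCoord_castSucc, torsorShift, IsLocalization.Away.lift_eq]
  simp [torsorShiftPoly]

variable (hσb : σ b = b)

-- The product of all coordinates is fixed, and the shift maps the first `N` of them to the last
-- `N`; so it maps the last one to the first one.
include hσb in
theorem torsorShift_torsorCoord_last :
    torsorShift N hb hf (torsorCoord N f b (Fin.last N)) = torsorCoord N f b 0 := by
  have hprod := congrArg (torsorShift N hb hf) (prod_torsorCoord N f b)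
  rw [torsorShift_algebraMap, Polynomial.map_mul, hf, Polynomial.map_C, map_inv₀, hσb,
    ← prod_torsorCoord, map_prod, Fin.prod_univ_castSucc, Fin.prod_univ_succ, mul_comm] at hprod
  simp only [torsorShift_torsorCoord_castSucc] at hprod
  have hunit : IsUnit (∏ i : Fin N, torsorCoord N f b i.succ) :=
    IsUnit.prod_univ_iff.2 fun i => isUnit_torsorCoord N f hb i.succ
  exact hunit.mul_right_cancel hprod

theorem torsorShift_iterate_torsorCoord_zero (i : Fin (N + 1)) :
    (torsorShift N hb hf)^[i] (torsorCoord N f b 0) = torsorCoord N f b i := by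
  induction i using Fin.induction with
  | zero => rfl
  | succ i ih =>
    rw [Fin.val_succ, Function.iterate_succ_apply', ← Fin.val_castSucc, ih,
      torsorShift_torsorCoord_castSucc]

include hσb in
theorem torsorShift_iterate_torsorCoord (i : Fin (N + 1)) :
    (torsorShift N hb hf)^[N + 1] (torsorCoord N f b i) = torsorCoord N f b i := by
  have hzero : (torsorShift N hb hf)^[N + 1] (torsorCoord N f b 0) = torsorCoord N f b 0 := by
    have hlast := torsorShift_iterate_torsorCoord_zero N hb hf (Fin.last N)
    rw [Fin.val_last] at hlast
    rw [Function.iterate_succ_apply', hlast, torsorShift_torsorCoord_last N hb hf hσb]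
  rw [← torsorShift_iterate_torsorCoord_zero N hb hf, ← Function.iterate_add_apply, add_comm,
    Function.iterate_add_apply, hzero]

variable (hσ : ∀ m, σ^[N + 1] m = m)

include hσb hσ in
theorem torsorShift_iterate (x : TorsorRing N f) : (torsorShift N hb hf)^[N + 1] x = x := by
  suffices torsorShift N hb hf ^ (N + 1) = RingHom.id _ by
    rw [← RingHom.coe_pow, this, RingHom.id_apply]
  refine IsLocalization.ringHom_ext (Submonoid.powers (torsorDenom N f))
    (MvPolynomial.ringHom_ext' (Polynomial.ringHom_ext (fun m => ?_) ?_) fun i => ?_)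
  · have hm : Function.Semiconj (fun m => algebraMap M[X] (TorsorRing N f) (C m)) σ
        (torsorShift N hb hf) := fun m => by simp
    have hmσ := hm.iterate_right (N + 1) m
    rw [hσ] at hmσ
    change (torsorShift N hb hf ^ (N + 1)) (algebraMap M[X] _ (C m)) = algebraMap M[X] _ (C m)
    rw [RingHom.coe_pow, ← hmσ]
  · have hX : torsorShift N hb hf (algebraMap M[X] _ X) = algebraMap M[X] _ X := by simp
    change (torsorShift N hb hf ^ (N + 1)) (algebraMap M[X] _ X) = algebraMap M[X] _ X
    rw [RingHom.coe_pow]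
    exact Function.iterate_fixed hX (N + 1)
  · simpa using torsorShift_iterate_torsorCoord N hb hf hσb i.castSucc

include hσb hσ in
theorem twistedPow_torsorCoord (i : Fin (N + 1)) :
    twistedPow (torsorShift N hb hf) (torsorCoord N f b i) (N + 1) =
      algebraMap M[X] _ (f * C b⁻¹) := by
  rw [← torsorShift_iterate_torsorCoord_zero N hb hf i,
    twistedPow_iterate_apply (torsorShift_iterate N hb hf hσb hσ), twistedPow_eq_prod_range,
    Finset.prod_range, ← prod_torsorCoord]
  simp only [torsorShift_iterate_torsorCoord_zero]

theorem twistedPow_algebraMap_C (m : M) (k : ℕ) :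
    twistedPow (torsorShift N hb hf) (algebraMap M[X] _ (C m)) k =
      algebraMap M[X] _ (C (twistedPow σ m k)) :=
  (map_twistedPow ((algebraMap M[X] (TorsorRing N f)).comp C) (fun m => by simp) m k).symm

end TorsorRing

section LocalizationAway

variable {S : Type*} [CommRing S] [IsDomain S] {s : S} (hs : s ≠ 0)
include hs

theorem algebraMap_localizationAway_injective :
    Function.Injective (algebraMap S (Localization.Away s)) :=
  IsLocalization.injective _ (powers_le_nonZeroDivisors_of_noZeroDivisors hs)

theorem isUnit_or_prime_algebraMap_localizationAway {q : S} (hq : Prime q) :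
    IsUnit (algebraMap S (Localization.Away s) q) ∨
      Prime (algebraMap S (Localization.Away s) q) := by
  by_cases hqs : q ∣ s
  · exact .inl (isUnit_of_dvd_unit (map_dvd _ hqs) (IsLocalization.Away.algebraMap_isUnit s))
  · have hprime := IsLocalization.isPrime_of_isPrime_disjoint (Submonoid.powers s)
      (Localization.Away s) (Ideal.span {q}) ((Ideal.span_singleton_prime hq.ne_zero).2 hq) (by
        rw [Set.disjoint_left]
        rintro _ ⟨k, rfl⟩ hk
        exact hqs (hq.dvd_of_dvd_pow (Ideal.mem_span_singleton.1 hk)))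
    rw [Ideal.map_span, Set.image_singleton] at hprime
    exact .inr ((Ideal.span_singleton_prime ((map_ne_zero_iff _
      (algebraMap_localizationAway_injective hs)).2 hq.ne_zero)).1 hprime)

theorem exists_mul_pow_eq_algebraMap_of_isUnit {w : Localization.Away s} (hw : IsUnit w) :
    ∃ (x : S) (k l : ℕ), x ∣ s ^ l ∧ w * algebraMap S _ s ^ k = algebraMap S _ x := by
  obtain ⟨v, rfl⟩ := hw
  obtain ⟨k, x, hx⟩ := IsLocalization.Away.surj s v.1
  obtain ⟨l, y, hy⟩ := IsLocalization.Away.surj s v⁻¹.1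
  refine ⟨x, k, k + l, ⟨y, algebraMap_localizationAway_injective hs ?_⟩, hx⟩
  rw [map_mul, ← hx, ← hy, mul_mul_mul_comm, Units.mul_inv, one_mul, map_pow, pow_add]

end LocalizationAway

section NormUnit

variable {M : Type*} [Field M] (N : ℕ) {f : M[X]} {b : M} (hb : b ≠ 0) {σ : M →+* M}
  (hf : f.map σ = f) (hf0 : f ≠ 0) (hσb : σ b = b) (hσ : ∀ m, σ^[N + 1] m = m)

include hf0 in
theorem torsorDenom_ne_zero : torsorDenom N f ≠ 0 :=
  mul_ne_zero (MvPolynomial.C_ne_zero.2 hf0)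
    (Finset.prod_ne_zero_iff.2 fun i _ => MvPolynomial.X_ne_zero i)

include hf0 in
theorem algebraMap_torsorRing_injective : Function.Injective (algebraMap M[X] (TorsorRing N f)) :=
  (algebraMap_localizationAway_injective (torsorDenom_ne_zero N hf0)).comp
    (MvPolynomial.C_injective _ _)

/-- The polynomials whose norm in the torsor ring is a norm from `M` times a power of `f / b`. -/
noncomputable def torsorNormSubmonoid : Submonoid (TorsorPoly M N) where
  carrier := {x | ∃ m ≠ 0, ∃ k : ℕ, twistedPow (torsorShift N hb hf) (algebraMap _ _ x) (N + 1) =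
    algebraMap M[X] _ (C (twistedPow σ m (N + 1)) * (f * C b⁻¹) ^ k)}
  one_mem' := ⟨1, one_ne_zero, 0, by simp [twistedPow_of_fixed]⟩
  mul_mem' := by
    rintro x y ⟨m, hm, k, hx⟩ ⟨m', hm', k', hy⟩
    refine ⟨m * m', mul_ne_zero hm hm', k + k', ?_⟩
    rw [map_mul, twistedPow_mul, hx, hy, ← map_mul, twistedPow_mul, C_mul, pow_add,
      mul_mul_mul_comm]

theorem isUnit_mem_torsorNormSubmonoid {x : TorsorPoly M N} (hx : IsUnit x) :
    x ∈ torsorNormSubmonoid N hb hf := by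
  obtain ⟨g, hg, rfl⟩ := MvPolynomial.isUnit_iff_eq_C_of_isReduced.1 hx
  obtain ⟨m, hm, rfl⟩ := Polynomial.isUnit_iff.1 hg
  exact ⟨m, hm.ne_zero, 0, by
    rw [pow_zero, mul_one]
    exact twistedPow_algebraMap_C N hb hf m (N + 1)⟩

include hσb in
theorem C_mem_torsorNormSubmonoid : MvPolynomial.C f ∈ torsorNormSubmonoid N hb hf := by
  refine ⟨b, hb, N + 1, ?_⟩
  have hfix : torsorShift N hb hf (algebraMap M[X] _ f) = algebraMap M[X] _ f := by
    rw [torsorShift_algebraMap, hf]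
  refine (twistedPow_of_fixed _ hfix _).trans ?_
  rw [twistedPow_of_fixed _ hσb, ← map_pow, mul_pow, mul_left_comm, ← C_pow, ← C_mul,
    inv_pow, mul_inv_cancel₀ (pow_ne_zero _ hb), C_1, mul_one]

include hσb hσ in
theorem X_mem_torsorNormSubmonoid (i : Fin N) :
    MvPolynomial.X i ∈ torsorNormSubmonoid N hb hf :=
  ⟨1, one_ne_zero, 1, by
    rw [← torsorCoord_castSucc N f b i, twistedPow_torsorCoord N hb hf hσb hσ,
      twistedPow_of_fixed _ (map_one _), one_pow, C_1, one_mul, pow_one]⟩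

include hσb hσ in
theorem mem_torsorNormSubmonoid_of_dvd_pow (hfp : Prime f) {x : TorsorPoly M N} {k : ℕ}
    (hx : x ∣ torsorDenom N f ^ k) : x ∈ torsorNormSubmonoid N hb hf := by
  refine mem_of_dvd_prod_of_prime (fun u hu => isUnit_mem_torsorNormSubmonoid N hb hf hu)
    (ms := k • (MvPolynomial.C f ::ₘ Finset.univ.val.map MvPolynomial.X)) (fun q hq => ?_)
    (by rwa [Multiset.prod_nsmul, Multiset.prod_cons])
  rcases Multiset.mem_cons.1 (Multiset.mem_of_mem_nsmul hq) with rfl | hq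
  · exact ⟨(MvPolynomial.prime_C_iff _).2 hfp, C_mem_torsorNormSubmonoid N hb hf hσb⟩
  · obtain ⟨i, -, rfl⟩ := Multiset.mem_map.1 hq
    exact ⟨MvPolynomial.X_prime, X_mem_torsorNormSubmonoid N hb hf hσb hσ i⟩

theorem eq_of_C_mul_pow_eq_C_mul_pow {g : M[X]} (hg : 0 < g.natDegree) {a a' : M} (ha : a ≠ 0)
    (ha' : a' ≠ 0) {k k' : ℕ} (h : C a * g ^ k = C a' * g ^ k') : a = a' := by
  have hdeg := congrArg natDegree h
  rw [natDegree_C_mul ha, natDegree_C_mul ha', natDegree_pow, natDegree_pow] at hdeg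
  obtain rfl := Nat.eq_of_mul_eq_mul_right hg hdeg
  exact C_injective (mul_right_cancel₀ (pow_ne_zero _ (ne_zero_of_natDegree_gt hg)) h)

-- Modulo norms from `M`, a unit of the torsor ring has norm a power of `f / b`; if the norm is
-- constant, then this power is trivial.
include hσb hσ in
theorem exists_twistedPow_eq_of_isUnit_torsorRing (hfp : Prime f) {ε : M} (hε : ε ≠ 0)
    {w : TorsorRing N f} (hw : IsUnit w)
    (h : twistedPow (torsorShift N hb hf) w (N + 1) = algebraMap M[X] _ (C ε)) :
    ∃ m, twistedPow σ m (N + 1) = ε := by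
  obtain ⟨x, k, l, hxl, hx⟩ :=
    exists_mul_pow_eq_algebraMap_of_isUnit (torsorDenom_ne_zero N hfp.ne_zero) hw
  obtain ⟨m, hm, i, hi⟩ := mem_torsorNormSubmonoid_of_dvd_pow N hb hf hσb hσ hfp hxl
  obtain ⟨m', hm', j, hj⟩ :=
    mem_torsorNormSubmonoid_of_dvd_pow N hb hf hσb hσ hfp (dvd_refl (torsorDenom N f ^ k))
  rw [← hx, twistedPow_mul, h, ← map_pow, hj, ← map_mul, ← mul_assoc, ← C_mul] at hi
  have hdeg : 0 < (f * C b⁻¹).natDegree := by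
    rw [natDegree_mul_C (inv_ne_zero hb)]
    exact hfp.irreducible.natDegree_pos
  have hne {z : M} (hz : z ≠ 0) : twistedPow σ z (N + 1) ≠ 0 := twistedPow_ne_zero σ.injective hz
  have hεm := eq_of_C_mul_pow_eq_C_mul_pow hdeg (mul_ne_zero hε (hne hm')) (hne hm)
    (algebraMap_torsorRing_injective N hfp.ne_zero hi)
  exact ⟨m * m'⁻¹, by
    rw [twistedPow_mul, twistedPow_inv, ← hεm, mul_inv_cancel_right₀ (hne hm')]⟩

end NormUnit

section FractionRing

variable {F R : Type*} (Q : Type*) [Field F] [CommRing R] [Algebra F R] [Field Q] [Algebra F Q]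
  [Algebra R Q] [IsScalarTower F R Q] [IsFractionRing R Q]

theorem exists_algEquiv_algebraMap_eq (τ : R →ₐ[F] R) {n : ℕ} (hn : n ≠ 0)
    (hτ : ∀ x, τ^[n] x = x) :
    ∃ σ : Q ≃ₐ[F] Q, σ ^ n = 1 ∧ ∀ r, σ (algebraMap R Q r) = algebraMap R Q (τ r) := by
  have hτpow : τ ^ n = 1 := AlgHom.ext fun x => by rw [AlgHom.coe_pow, hτ, AlgHom.one_apply]
  let e : R ≃ₐ[F] R := AlgEquiv.ofAlgHom τ (τ ^ (n - 1))
    ((mul_pow_sub_one hn τ).trans hτpow) ((pow_sub_one_mul hn τ).trans hτpow)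
  let σ : Q ≃ₐ[F] Q := IsFractionRing.fieldEquivOfAlgEquiv F Q Q e
  have hσ : Function.Semiconj (algebraMap R Q) τ σ := fun r =>
    (IsFractionRing.fieldEquivOfAlgEquiv_algebraMap F Q Q e r).symm
  refine ⟨σ, AlgEquiv.ext fun x => ?_, fun r => (hσ r).symm⟩
  obtain ⟨y, z, -, rfl⟩ := IsFractionRing.div_surjective R x
  rw [map_div₀, AlgEquiv.coe_pow, ← (hσ.iterate_right n) y, ← (hσ.iterate_right n) z, hτ, hτ,
    AlgEquiv.one_apply]

-- Clearing denominators makes `ε` a quotient of a twisted power in `R` and one coming from `S`.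
theorem exists_isUnit_twistedPow_eq_of_fractionRing {S Q : Type*} [CommRing S] [IsDomain S]
    [UniqueFactorizationMonoid S] [Field Q] {s : S} (hs : s ≠ 0) [Algebra (Localization.Away s) Q]
    [IsFractionRing (Localization.Away s) Q] {τ : Localization.Away s →+* Localization.Away s}
    {n : ℕ} (hn : n ≠ 0) (hτ : ∀ x, τ^[n] x = x) {τ' : Q →+* Q}
    (hττ' : Function.Semiconj (algebraMap (Localization.Away s) Q) τ τ')
    {ε : Localization.Away s} (hε : IsUnit ε) {z : Q}
    (hz : twistedPow τ' z n = algebraMap _ Q ε) : ∃ w, IsUnit w ∧ twistedPow τ w n = ε := by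
  have hdom := IsLocalization.isDomain_localization (powers_le_nonZeroDivisors_of_noZeroDivisors hs)
  obtain ⟨r, d, hd, rfl⟩ := IsFractionRing.div_surjective (Localization.Away s) z
  obtain ⟨k, t, ht⟩ := IsLocalization.Away.surj s d
  have hd0 : d ≠ 0 := nonZeroDivisors.ne_zero hd
  have hsk := (IsLocalization.Away.algebraMap_isUnit (S := Localization.Away s) s).pow k
  have ht0 : t ≠ 0 := by
    rintro rfl
    rw [map_zero] at ht
    exact mul_ne_zero hd0 hsk.ne_zero ht
  refine exists_isUnit_twistedPow_eq (φ := (algebraMap S (Localization.Away s) : S →* _))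
    (fun q => isUnit_or_prime_algebraMap_localizationAway hs) hn hτ hε ht0
    (a := r * algebraMap S _ s ^ k) (IsFractionRing.injective (Localization.Away s) Q ?_)
  change algebraMap (Localization.Away s) Q _ = algebraMap (Localization.Away s) Q
    (ε * twistedPow τ (algebraMap S (Localization.Away s) t) n)
  rw [map_mul, map_twistedPow _ hττ', map_twistedPow _ hττ', ← hz, ← twistedPow_mul, ← ht, map_mul,
    map_mul, ← mul_assoc, div_mul_cancel₀]
  exact (map_ne_zero_iff _ (IsFractionRing.injective _ _)).2 hd0

end FractionRing

section Generic

variable {F M : Type u} [Field F] [Field M] [Algebra F M]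

theorem exists_algHom_torsorRing_ne_zero [Infinite M] (N : ℕ) {f : M[X]} (hf0 : f ≠ 0)
    {r : TorsorRing N f} (hr : r ≠ 0) : ∃ θ : TorsorRing N f →ₐ[F] M, θ r ≠ 0 := by
  obtain ⟨k, s, hs⟩ := IsLocalization.Away.surj (torsorDenom N f) r
  have hs0 : s ≠ 0 := by
    rintro rfl
    rw [map_zero] at hs
    exact (((IsLocalization.Away.algebraMap_isUnit _).pow k).mul_left_eq_zero.not.2 hr) hs
  obtain ⟨v, hv⟩ : ∃ v, MvPolynomial.eval v (s * torsorDenom N f) ≠ 0 := by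
    by_contra! h
    exact mul_ne_zero hs0 (torsorDenom_ne_zero N hf0) (MvPolynomial.funext fun x => by simp [h x])
  obtain ⟨t, ht⟩ : ∃ t, Polynomial.eval t (MvPolynomial.eval v (s * torsorDenom N f)) ≠ 0 := by
    by_contra! h
    exact hv (Polynomial.funext fun x => by rw [h x, eval_zero])
  let θ₀ : TorsorPoly M N →ₐ[F] M := ((Polynomial.aeval t : M[X] →ₐ[M] M).restrictScalars F).comp
    ((MvPolynomial.aeval v : TorsorPoly M N →ₐ[M[X]] M[X]).restrictScalars F)
  have hθ₀ (x : TorsorPoly M N) : θ₀ x = Polynomial.eval t (MvPolynomial.eval v x) := by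
    simp [θ₀, Polynomial.coe_aeval_eq_eval]
  rw [← hθ₀, map_mul] at ht
  let θ : TorsorRing N f →ₐ[F] M :=
    IsLocalization.liftAlgHom (M := Submonoid.powers (torsorDenom N f)) (f := θ₀) <| by
      rintro ⟨_, l, rfl⟩
      rw [map_pow]
      exact (IsUnit.mk0 _ (right_ne_zero_of_mul ht)).pow l
  have hθ (x : TorsorPoly M N) : θ (algebraMap _ _ x) = θ₀ x := IsLocalization.lift_eq _ x
  refine ⟨θ, fun h => left_ne_zero_of_mul ht ?_⟩
  rw [← hθ, ← hs, map_mul, h, zero_mul]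

/-- `torsorShift` as a homomorphism of `F`-algebras. -/
noncomputable def torsorShiftAlgHom (N : ℕ) {f : M[X]} {b : M} (hb : b ≠ 0) {σ : M ≃ₐ[F] M}
    (hf : f.map (σ : M →+* M) = f) : TorsorRing N f →ₐ[F] TorsorRing N f where
  __ := torsorShift N hb hf
  commutes' r := by
    change torsorShift N hb hf (algebraMap M[X] _ (C (algebraMap F M r))) = _
    rw [torsorShift_algebraMap, map_C]
    exact congrArg _ (congrArg C (σ.commutes r))

theorem prime_C_sub_C_mul_X_pow {p : ℕ} (hp : p.Prime) {a c : M} (ha : a ≠ 0)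
    (hac : ∀ z, a * z ^ p ≠ c) : Prime (C c - C a * X ^ p : M[X]) := by
  have hirr : Irreducible (X ^ p - C (c / a) : M[X]) :=
    X_pow_sub_C_irreducible_of_prime hp fun z hz => hac z (by rw [hz, mul_div_cancel₀ _ ha])
  have heq : (C c - C a * X ^ p : M[X]) = C (-a) * (X ^ p - C (c / a)) := by
    rw [mul_sub, ← C_mul, neg_mul, mul_div_cancel₀ _ ha, C_neg, C_neg]
    ring
  rw [heq]
  exact ((associated_unit_mul_left _ _
    (isUnit_C.2 (IsUnit.mk0 _ (neg_ne_zero.2 ha)))).prime_iff).2 hirr.prime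

theorem exists_generic_norm_solution [Infinite M] {p : ℕ} (hp : p.Prime) {σ : M ≃ₐ[F] M}
    (hσ : σ ^ p = 1) {a b c : M} (ha : a ≠ 0) (hb : b ≠ 0) (hσa : σ a = a) (hσb : σ b = b)
    (hσc : σ c = c) (hac : ∀ z, a * z ^ p ≠ c) :
    ∃ (Q : Type u) (_ : Field Q) (_ : Algebra F Q) (j : M →ₐ[F] Q) (σ' : Q ≃ₐ[F] Q),
      σ' ^ p = 1 ∧ (∀ m, σ' (j m) = j (σ m)) ∧
      (∃ e x, σ' e = e ∧ twistedPow σ' x p * j b = j c - j a * e ^ p) ∧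
      (∀ ε, ε ≠ 0 → (∃ z, twistedPow σ' z p = j ε) → ∃ m, twistedPow σ m p = ε) ∧
      ∀ (C : Type u) [Ring C] [Algebra F C] [FiniteDimensional F C] (n : ℕ),
        HasMatrixRep F C Q n → HasMatrixRep F C M n := by
  obtain ⟨N, rfl⟩ := Nat.exists_eq_succ_of_ne_zero hp.ne_zero
  set f : M[X] := C c - C a * X ^ (N + 1) with hfdef
  have hfp : Prime f := prime_C_sub_C_mul_X_pow hp ha hac
  have hf : f.map (σ : M →+* M) = f := by simp [hfdef, hσa, hσc]
  have hσ' (m : M) : (σ : M →+* M)^[N + 1] m = m := by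
    simpa using DFunLike.congr_fun hσ m
  let R := TorsorRing N f
  let Q := FractionRing R
  have hdom : IsDomain R := IsLocalization.isDomain_localization
    (powers_le_nonZeroDivisors_of_noZeroDivisors (torsorDenom_ne_zero N hfp.ne_zero))
  have hτ := torsorShift_iterate N hb hf hσb hσ'
  obtain ⟨σ', hσ'pow, hσ'τ⟩ := exists_algEquiv_algebraMap_eq Q
    (torsorShiftAlgHom N hb hf) N.succ_ne_zero hτ
  have hτσ' : Function.Semiconj (algebraMap R Q) (torsorShift N hb hf) σ' :=
    fun r => (hσ'τ r).symm
  refine ⟨Q, inferInstance, inferInstance, IsScalarTower.toAlgHom F M Q, σ', hσ'pow,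
    fun m => ?_,
    ⟨algebraMap R Q (algebraMap M[X] R X), algebraMap R Q (torsorCoord N f b 0), ?_, ?_⟩,
    fun ε hε => ?_, fun C _ _ _ n => HasMatrixRep.specialize (R := R) (Q := Q)
      fun r hr => exists_algHom_torsorRing_ne_zero N hfp.ne_zero hr⟩
  · have := hτσ' (algebraMap M[X] R (C m))
    rw [torsorShift_algebraMap, map_C] at this
    exact this.symm
  · rw [← hτσ', torsorShift_algebraMap, map_X]
  · rw [← map_twistedPow _ hτσ', twistedPow_torsorCoord N hb hf hσb hσ']
    let ψ : M[X] →+* Q := (algebraMap R Q).comp (algebraMap M[X] R)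
    have hψf : ψ f = ψ (C c) - ψ (C a) * ψ X ^ (N + 1) := by
      simp only [hfdef, map_sub, map_mul, map_pow]
    change ψ (f * C b⁻¹) * ψ (C b) = ψ (C c) - ψ (C a) * ψ X ^ (N + 1)
    rw [← map_mul, mul_assoc, ← C_mul, inv_mul_cancel₀ hb, C_1, mul_one, hψf]
  · rintro ⟨z, hz⟩
    obtain ⟨w, hw, hwε⟩ := exists_isUnit_twistedPow_eq_of_fractionRing
      (torsorDenom_ne_zero N hfp.ne_zero) N.succ_ne_zero hτ (τ' := (σ' : Q →+* Q)) hτσ'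
      (ε := algebraMap M[X] R (C ε)) (((IsUnit.mk0 _ hε).map C).map _) hz
    exact exists_twistedPow_eq_of_isUnit_torsorRing N hb hf hσb hσ' hfp hε hw hwε

end Generic

/-! ### Cyclic algebras of prime degree -/

section GaussBinomial

variable {K : Type*}

/-- The Gaussian binomial coefficient `[n choose k]_q`, defined by the `q`-Pascal rule. -/
def gaussBinom [Semiring K] (q : K) : ℕ → ℕ → K
  | _, 0 => 1
  | 0, _ + 1 => 0
  | n + 1, k + 1 => q ^ (k + 1) * gaussBinom q n (k + 1) + gaussBinom q n k

section Semiring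

variable [Semiring K] (q : K)

@[simp]
theorem gaussBinom_zero_right (n : ℕ) : gaussBinom q n 0 = 1 := by
  cases n <;> rfl

theorem gaussBinom_succ_succ (n k : ℕ) :
    gaussBinom q (n + 1) (k + 1) = q ^ (k + 1) * gaussBinom q n (k + 1) + gaussBinom q n k := rfl

theorem gaussBinom_of_lt {n k : ℕ} (h : n < k) : gaussBinom q n k = 0 := by
  induction n generalizing k with
  | zero =>
    obtain ⟨k, rfl⟩ := Nat.exists_eq_succ_of_ne_zero h.ne'
    rfl
  | succ n ih =>
    obtain ⟨k, rfl⟩ := Nat.exists_eq_succ_of_ne_zero (Nat.ne_zero_of_lt h)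
    rw [Nat.succ_eq_add_one, gaussBinom_succ_succ, ih (by lia), ih (by lia), mul_zero, add_zero]

@[simp]
theorem gaussBinom_self (n : ℕ) : gaussBinom q n n = 1 := by
  induction n with
  | zero => rfl
  | succ n ih =>
    rw [gaussBinom_succ_succ, ih, gaussBinom_of_lt q n.lt_succ_self, mul_zero, zero_add]

end Semiring

theorem pow_sub_one_mul_gaussBinom_succ_succ [CommRing K] (q : K) (n k : ℕ) :
    (q ^ (k + 1) - 1) * gaussBinom q (n + 1) (k + 1) = (q ^ (n + 1) - 1) * gaussBinom q n k := by
  induction n generalizing k with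
  | zero => cases k <;> simp [gaussBinom]
  | succ n ih =>
    cases k with
    | zero =>
      rw [gaussBinom_succ_succ, mul_add, mul_left_comm, ih 0]
      simp only [gaussBinom_zero_right]
      ring
    | succ k =>
      rw [gaussBinom_succ_succ q (n + 1)]
      linear_combination q ^ (k + 2) * ih (k + 1) + q * ih k -
        q * (q ^ (n + 1) - 1) * gaussBinom_succ_succ q n k

theorem gaussBinom_eq_zero_of_isPrimitiveRoot [CommRing K] [IsDomain K] {ω : K} {n k : ℕ}
    (hω : IsPrimitiveRoot ω n) (hk0 : k ≠ 0) (hkn : k < n) : gaussBinom ω n k = 0 := by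
  obtain ⟨l, rfl⟩ := Nat.exists_eq_succ_of_ne_zero hk0
  obtain ⟨m, rfl⟩ := Nat.exists_eq_succ_of_ne_zero (Nat.ne_zero_of_lt hkn)
  have h := pow_sub_one_mul_gaussBinom_succ_succ ω m l
  rw [← Nat.succ_eq_add_one m, hω.pow_eq_one, sub_self, zero_mul] at h
  exact (mul_eq_zero.1 h).resolve_left (sub_ne_zero.2 (hω.pow_ne_one_of_pos_of_lt hk0 hkn))

end GaussBinomial

section QCommute

variable {K A : Type*} [CommRing K] [Ring A] [Algebra K A] {ω : K} {x y : A}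
  (h : x * y = ω • (y * x))
include h

theorem mul_pow_eq_smul (k : ℕ) : x * y ^ k = ω ^ k • (y ^ k * x) := by
  induction k with
  | zero => simp
  | succ k ih =>
    rw [pow_succ, ← mul_assoc, ih, smul_mul_assoc, mul_assoc, h, mul_smul_comm, smul_smul,
      mul_assoc, pow_succ]

theorem add_pow_eq_sum_gaussBinom (n : ℕ) :
    (x + y) ^ n = ∑ k ∈ Finset.range (n + 1), gaussBinom ω n k • (y ^ k * x ^ (n - k)) := by
  induction n with
  | zero => simp
  | succ n ih =>
    have hx : x * (x + y) ^ n = x ^ (n + 1) + ∑ k ∈ Finset.range (n + 1),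
        (ω ^ (k + 1) * gaussBinom ω n (k + 1)) • (y ^ (k + 1) * x ^ (n - k)) := by
      rw [ih, Finset.sum_range_succ', Finset.sum_range_succ, gaussBinom_of_lt ω n.lt_succ_self,
        mul_zero, zero_smul, add_zero, mul_add, Finset.mul_sum, add_comm]
      congr 1
      · simp [pow_succ']
      · refine Finset.sum_congr rfl fun k hk => ?_
        rw [mul_smul_comm, ← mul_assoc, mul_pow_eq_smul h, smul_mul_assoc, smul_smul, mul_assoc,
          ← pow_succ', mul_comm, Nat.sub_add_eq, Nat.sub_add_cancel]
        have := Finset.mem_range.1 hk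
        lia
    have hy : y * (x + y) ^ n = ∑ k ∈ Finset.range (n + 1),
        gaussBinom ω n k • (y ^ (k + 1) * x ^ (n - k)) := by
      simp only [ih, Finset.mul_sum, mul_smul_comm, ← mul_assoc, pow_succ']
    rw [pow_succ', add_mul, hx, hy, add_assoc, ← Finset.sum_add_distrib,
      Finset.sum_range_succ' _ (n + 1), add_comm]
    simp [gaussBinom_succ_succ, add_smul]

theorem add_pow_of_isPrimitiveRoot [IsDomain K] {n : ℕ} (hn : n ≠ 0) (hω : IsPrimitiveRoot ω n) :
    (x + y) ^ n = x ^ n + y ^ n := by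
  obtain ⟨m, rfl⟩ := Nat.exists_eq_succ_of_ne_zero hn
  rw [add_pow_eq_sum_gaussBinom h, Finset.sum_range_succ, Finset.sum_range_succ',
    Finset.sum_eq_zero fun k hk => ?_]
  · simp
  · have := Finset.mem_range.1 hk
    rw [gaussBinom_eq_zero_of_isPrimitiveRoot hω (by lia) (by lia), zero_smul]

end QCommute

section AdjoinRoot

variable {K A : Type*} [Field K] [Ring A] [Algebra K A]

/-- The homomorphism from `AdjoinRoot f` sending the root to `x`. In contrast to
`AdjoinRoot.liftAlgHom` the target need not be commutative. -/
noncomputable def adjoinRootLift (f : K[X]) (x : A) (h : aeval x f = 0) : AdjoinRoot f →ₐ[K] A :=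
  Ideal.Quotient.liftₐ (Ideal.span {f}) (aeval x) fun a ha => by
    obtain ⟨b, rfl⟩ := Ideal.mem_span_singleton.1 ha
    rw [map_mul, h, zero_mul]

theorem adjoinRootLift_root (f : K[X]) (x : A) (h : aeval x f = 0) :
    adjoinRootLift f x h (AdjoinRoot.root f) = x :=
  aeval_X (R := K) x

end AdjoinRoot

section EigenvectorOfFiniteOrder

variable {K : Type*} [Field K] {p : ℕ} {ω : K} (hω : IsPrimitiveRoot ω p)
include hω

-- Otherwise `φ - μ` is injective for every `μ ≠ 1`, while the product over all `p`-th roots of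
-- unity `μ` is `φ ^ p - 1 = 0`.
theorem exists_apply_eq_smul_of_pow_eq_one {V : Type*} [AddCommGroup V] [Module K V]
    (hp : p ≠ 0) {φ : Module.End K V} (hφp : φ ^ p = 1) (hφ : φ ≠ 1) :
    ∃ μ : K, ∃ v ≠ 0, μ ^ p = 1 ∧ μ ≠ 1 ∧ φ v = μ • v := by
  classical
  by_contra! hno
  have hprod : ∏ μ ∈ nthRootsFinset p (1 : K), (X - C μ) =
      (∏ μ ∈ (nthRootsFinset p (1 : K)).erase 1, (X - C μ)) * (X - C 1) :=
    (Finset.prod_erase_mul _ _ (by simp [mem_nthRootsFinset (Nat.pos_of_ne_zero hp)])).symm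
  have hinj : Function.Injective
      (aeval φ (∏ μ ∈ (nthRootsFinset p (1 : K)).erase 1, (X - C μ))) := by
    refine Finset.prod_induction _ (fun q : K[X] => Function.Injective (aeval φ q))
      (fun q r hq hr => ?_) ?_ fun μ hμ => ?_
    · rw [map_mul]
      exact hq.comp hr
    · rw [map_one]
      exact Function.injective_id
    · rw [injective_iff_map_eq_zero]
      intro v hv
      rw [Finset.mem_erase, mem_nthRootsFinset (Nat.pos_of_ne_zero hp)] at hμ
      by_contra hv0
      refine hno μ v hv0 hμ.2 hμ.1 (sub_eq_zero.1 ?_)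
      simpa [Module.algebraMap_end_apply] using hv
  have hzero : aeval φ (X ^ p - 1 : K[X]) = 0 := by simp [hφp]
  rw [X_pow_sub_one_eq_prod (Nat.pos_of_ne_zero hp) hω, hprod, map_mul] at hzero
  refine hφ (LinearMap.ext fun v => sub_eq_zero.1 (hinj ?_))
  simpa using DFunLike.congr_fun hzero v

variable {A : Type*} [Ring A] [Algebra K A]

-- `σ` multiplies the roots of the minimal polynomial of `v` by `ω`, so this polynomial is
-- `X ^ p - v ^ p`.
theorem exists_pow_eq_algebraMap_of_apply_eq_smul {σ : A ≃ₐ[K] A} {v : A} (hσv : σ v = ω • v)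
    (hv : IsIntegral K v) (hdeg : (minpoly K v).natDegree = p) : ∃ b, v ^ p = algebraMap K A b := by
  obtain rfl | hp := eq_or_ne p 0
  · exact ⟨1, by simp⟩
  set m := minpoly K v with hm
  have hscale : m.scaleRoots ω = m := by
    refine eq_of_monic_of_dvd_of_natDegree_le (minpoly.monic hv)
      ((monic_scaleRoots_iff ω).2 (minpoly.monic hv)) ?_ (natDegree_scaleRoots m ω).le
    rw [hm, ← minpoly.algEquiv_eq σ v, hσv, Algebra.smul_def]
    refine minpoly.dvd K _ (scaleRoots_aeval_eq_zero ?_)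
    rw [← Algebra.smul_def, ← hσv, minpoly.algEquiv_eq]
    exact minpoly.aeval K v
  have hcoeff (i : ℕ) (hi0 : i ≠ 0) (hip : i < p) : m.coeff i = 0 := by
    have hi := congrArg (coeff · i) hscale
    simp only [coeff_scaleRoots, hdeg] at hi
    by_contra hi'
    exact hω.pow_ne_one_of_pos_of_lt (Nat.sub_ne_zero_of_lt hip) (by lia) (mul_eq_left₀ hi' |>.1 hi)
  have haeval : aeval v m = 0 := minpoly.aeval K v
  have hlead : m.coeff p = 1 := hdeg ▸ (minpoly.monic hv).coeff_natDegree
  rw [aeval_eq_sum_range, hdeg, Finset.sum_range_succ, Finset.sum_eq_single_of_mem 0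
    (Finset.mem_range.2 (Nat.pos_of_ne_zero hp)) fun i hi hi0 => by
      rw [hcoeff i hi0 (Finset.mem_range.1 hi), zero_smul], hlead, one_smul, pow_zero,
    ← Algebra.algebraMap_eq_smul_one, add_comm, ← eq_neg_iff_add_eq_zero] at haeval
  exact ⟨-m.coeff 0, by rw [haeval, map_neg]⟩

end EigenvectorOfFiniteOrder

section CyclicPresentation

variable {K Δ : Type*} [Field K] [DivisionRing Δ] [Algebra K Δ] [FiniteDimensional K Δ]

theorem natDegree_minpoly_dvd_finrank (x : Δ) :
    (minpoly K x).natDegree ∣ Module.finrank K Δ := by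
  have hint : IsIntegral K x := Algebra.IsIntegral.isIntegral x
  have : Fact (Irreducible (minpoly K x)) := ⟨minpoly.irreducible hint⟩
  let φ := adjoinRootLift (minpoly K x) x (minpoly.aeval K x)
  let _ : Module (AdjoinRoot (minpoly K x)) Δ := Module.compHom Δ (φ : _ →+* Δ)
  have : IsScalarTower K (AdjoinRoot (minpoly K x)) Δ :=
    ⟨fun k l d => (congrArg (· * d) (map_smul φ k l)).trans (smul_mul_assoc k (φ l) d)⟩
  rw [← Module.finrank_mul_finrank K (AdjoinRoot (minpoly K x)) Δ,
    (AdjoinRoot.powerBasis (minpoly.ne_zero hint)).finrank, AdjoinRoot.powerBasis_dim]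
  exact Dvd.intro _ rfl

theorem natDegree_minpoly_ne_finrank {x y : Δ} (hxy : ¬ Commute x y) :
    (minpoly K x).natDegree ≠ Module.finrank K Δ := by
  intro hdeg
  have hint : IsIntegral K x := Algebra.IsIntegral.isIntegral x
  have : Fact (Irreducible (minpoly K x)) := ⟨minpoly.irreducible hint⟩
  let φ := adjoinRootLift (minpoly K x) x (minpoly.aeval K x)
  let pb := AdjoinRoot.powerBasis (minpoly.ne_zero hint)
  have : FiniteDimensional K (AdjoinRoot (minpoly K x)) := pb.finite
  obtain ⟨a, rfl⟩ := (bijective_of_finrank_eq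
    (by rw [pb.finrank, AdjoinRoot.powerBasis_dim, hdeg]) φ).2 y
  have hφx : φ (AdjoinRoot.root _) = x := adjoinRootLift_root ..
  have hcomm : Commute (φ (AdjoinRoot.root _)) (φ a) := (Commute.all _ a).map φ
  rw [hφx] at hcomm
  exact hxy hcomm

variable [Algebra.IsCentral K Δ] {p : ℕ} (hp : p.Prime) (hfr : Module.finrank K Δ = p ^ 2)
include hp hfr

theorem natDegree_minpoly_eq_of_finrank_eq_sq {x : Δ} (hx : x ∉ (algebraMap K Δ).range) :
    (minpoly K x).natDegree = p := by
  obtain ⟨y, hxy⟩ : ∃ y, ¬ Commute x y := by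
    by_contra! hcomm
    refine hx (Algebra.mem_bot.1 ?_)
    rw [← Algebra.IsCentral.center_eq_bot K Δ]
    exact Subalgebra.mem_center_iff.2 fun y => (hcomm y).symm
  have hne := natDegree_minpoly_ne_finrank (K := K) hxy
  obtain ⟨k, hk, hdeg⟩ := (Nat.dvd_prime_pow hp).1 (hfr ▸ natDegree_minpoly_dvd_finrank (K := K) x)
  interval_cases k
  · rw [pow_zero, minpoly.natDegree_eq_one_iff] at hdeg
    exact (hx hdeg).elim
  · rw [hdeg, pow_one]
  · exact (hne (hdeg.trans hfr.symm)).elim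

omit [FiniteDimensional K Δ] hfr in
theorem exists_mul_eq_smul_mul {ω : K} (hω : IsPrimitiveRoot ω p) {u : Δ} {a : K}
    (hua : u ^ p = algebraMap K Δ a) (hu : u ∉ (algebraMap K Δ).range) :
    ∃ v ≠ 0, u * v = ω • (v * u) := by
  have hu0 : u ≠ 0 := fun h => hu ⟨0, by rw [map_zero, h]⟩
  let φ : Module.End K Δ := LinearMap.mulLeft K u * LinearMap.mulRight K u⁻¹
  have hφp : φ ^ p = 1 := by
    have hcomm : Commute (LinearMap.mulLeft K u) (LinearMap.mulRight K u⁻¹) :=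
      LinearMap.commute_mulLeft_right u u⁻¹
    refine LinearMap.ext fun y => ?_
    rw [hcomm.mul_pow, LinearMap.pow_mulLeft, LinearMap.pow_mulRight, Module.End.mul_apply,
      LinearMap.mulLeft_apply, LinearMap.mulRight_apply, inv_pow, hua, Algebra.commutes, mul_assoc,
      ← hua, inv_mul_cancel₀ (pow_ne_zero p hu0), mul_one, Module.End.one_apply]
  have hφ : φ ≠ 1 := fun h => hu <| by
    refine Algebra.mem_bot.1 ?_
    rw [← Algebra.IsCentral.center_eq_bot K Δ]
    refine Subalgebra.mem_center_iff.2 fun y => ?_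
    have hy : u * (y * u⁻¹) = y := DFunLike.congr_fun h y
    rw [← mul_assoc, mul_inv_eq_iff_eq_mul₀ hu0] at hy
    exact hy.symm
  obtain ⟨μ, w, hw, hμp, hμ1, hφw⟩ := exists_apply_eq_smul_of_pow_eq_one hω hp.ne_zero hφp hφ
  have : Fact p.Prime := ⟨hp⟩
  obtain ⟨k, -, hk⟩ :=
    (orderOf_eq_prime hμp hμ1 ▸ IsPrimitiveRoot.orderOf μ).eq_pow_of_pow_eq_one hω.pow_eq_one
  refine ⟨w ^ k, pow_ne_zero k hw, hk ▸ mul_pow_eq_smul ?_ k⟩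
  rw [← smul_mul_assoc, ← hφw]
  change u * w = u * (w * u⁻¹) * u
  rw [mul_assoc, inv_mul_cancel_right₀ hu0]

theorem exists_pow_eq_algebraMap_and_mul_eq_smul_mul {ω : K} (hω : IsPrimitiveRoot ω p) {u : Δ}
    {a : K} (hua : u ^ p = algebraMap K Δ a) (hu : u ∉ (algebraMap K Δ).range) :
    ∃ (v : Δ) (b : K), b ≠ 0 ∧ v ^ p = algebraMap K Δ b ∧ u * v = ω • (v * u) := by
  have hu0 : u ≠ 0 := fun h => hu ⟨0, by rw [map_zero, h]⟩
  obtain ⟨v, hv0, huv⟩ := exists_mul_eq_smul_mul hp hω hua hu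
  have hv : v ∉ (algebraMap K Δ).range := by
    rintro ⟨t, rfl⟩
    have hsmul : (1 - ω) • (algebraMap K Δ t * u) = 0 := by
      rw [sub_smul, one_smul, ← huv, Algebra.commutes, sub_self]
    exact (smul_eq_zero.1 hsmul).elim (sub_ne_zero.2 (hω.ne_one hp.one_lt).symm)
      (mul_ne_zero hv0 hu0)
  let σ := MulSemiringAction.toAlgAut (ConjAct Δˣ) K Δ (ConjAct.toConjAct (Units.mk0 u hu0))
  have hσv : σ v = ω • v := by
    change u * v * u⁻¹ = _
    rw [huv, smul_mul_assoc, mul_inv_cancel_right₀ hu0]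
  obtain ⟨b, hb⟩ := exists_pow_eq_algebraMap_of_apply_eq_smul hω hσv
    (Algebra.IsIntegral.isIntegral v) (natDegree_minpoly_eq_of_finrank_eq_sq hp hfr hv)
  refine ⟨v, b, ?_, hb, huv⟩
  rintro rfl
  exact pow_ne_zero p hv0 (hb.trans (map_zero _))

end CyclicPresentation

/-! ### Extensions that do not split more `p`-torsion algebras -/

section NormEquation

variable {K Q A : Type*} [Field K] [Field Q] [Algebra K Q] [Ring A] [Algebra K A]

theorem exists_algHom_apply_eq_of_adjoin_eq_top {r : Q} (hr : Algebra.adjoin K {r} = ⊤) {u : A}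
    (hu : aeval u (minpoly K r) = 0) : ∃ φ : Q →ₐ[K] A, φ r = u := by
  let e := AlgEquiv.adjoinSingletonEquivAdjoinRootMinpoly K r
  let r' : Algebra.adjoin K {r} := ⟨r, Algebra.subset_adjoin rfl⟩
  have her : e r' = AdjoinRoot.root _ :=
    e.eq_symm_apply.1 (Subtype.ext AdjoinRoot.Minpoly.coe_toAdjoin_mk_X.symm)
  let ι : Q →ₐ[K] Algebra.adjoin K {r} :=
    (AlgHom.id K Q).codRestrict _ fun x => hr.symm ▸ Algebra.mem_top
  refine ⟨(adjoinRootLift _ u hu).comp (e.toAlgHom.comp ι), ?_⟩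
  change adjoinRootLift _ u hu (e r') = u
  rw [her, adjoinRootLift_root]

theorem map_mul_eq_mul_map_of_adjoin_eq_top {r : Q} (hr : Algebra.adjoin K {r} = ⊤)
    {φ : Q →ₐ[K] A} {σ : Q →ₐ[K] Q} {v : A} (h : φ r * v = v * φ (σ r)) (x : Q) :
    φ x * v = v * φ (σ x) := by
  have hx : x ∈ Algebra.adjoin K {r} := hr ▸ Algebra.mem_top
  induction hx using Algebra.adjoin_induction with
  | mem y hy => rwa [Set.mem_singleton_iff.1 hy]
  | algebraMap k => rw [AlgHom.commutes, AlgHom.commutes, AlgHom.commutes, Algebra.commutes]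
  | add y z _ _ hy hz => simp only [map_add, add_mul, mul_add, hy, hz]
  | mul y z _ _ hy hz => rw [map_mul, mul_assoc, hz, ← mul_assoc, hy, map_mul, map_mul, mul_assoc]

theorem mul_map_pow {φ : Q →ₐ[K] A} {σ : Q →ₐ[K] Q} {v : A}
    (h : ∀ x, φ x * v = v * φ (σ x)) (x : Q) (k : ℕ) :
    (v * φ x) ^ k = v ^ k * φ (twistedPow σ x k) := by
  induction k with
  | zero => simp
  | succ k ih =>
    rw [pow_succ, ih, twistedPow_succ, mul_comm x, map_mul, pow_succ]
    simp only [mul_assoc]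
    rw [← mul_assoc _ v, h, mul_assoc]

variable {p : ℕ} {ω a : K} {r : Q} (hp : p.Prime) (hω : IsPrimitiveRoot ω p)
  (hra : r ^ p = algebraMap K Q a) (hr : r ≠ 0) {σ : Q →ₐ[K] Q} (hσr : σ r = ω • r)
include hp hω hra hr hσr

theorem irreducible_X_pow_sub_C_of_apply_eq_smul : Irreducible (X ^ p - C a : K[X]) := by
  refine X_pow_sub_C_irreducible_of_prime hp fun b hb => ?_
  have : NeZero p := ⟨hp.ne_zero⟩
  have hb0 : algebraMap K Q b ≠ 0 := fun h => pow_ne_zero p hr <| by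
    rw [hra, ← hb, map_pow, h, zero_pow hp.ne_zero]
  obtain ⟨i, -, hi⟩ := (hω.map_of_injective (algebraMap K Q).injective).eq_pow_of_pow_eq_one
    (show (r / algebraMap K Q b) ^ p = 1 by
      rw [div_pow, hra, ← hb, map_pow, div_self (pow_ne_zero p hb0)])
  rw [eq_div_iff hb0, ← map_pow, ← map_mul] at hi
  rw [← hi, AlgHom.commutes, hi, eq_comm] at hσr
  exact hω.ne_one hp.one_lt (smul_left_injective K hr (hσr.trans (one_smul K r).symm))

theorem minpoly_eq_X_pow_sub_C_of_apply_eq_smul : minpoly K r = X ^ p - C a :=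
  (minpoly.eq_of_irreducible_of_monic
    (irreducible_X_pow_sub_C_of_apply_eq_smul hp hω hra hr hσr) (by simp [hra])
    (monic_X_pow_sub_C a hp.ne_zero)).symm

theorem exists_pow_eq_algebraMap_of_twistedPow_eq (hfr : Module.finrank K Q = p) {b c e : K}
    {x : Q} (hx : twistedPow σ x p * algebraMap K Q b =
      algebraMap K Q c - algebraMap K Q a * algebraMap K Q e ^ p)
    {u v : A} (hu : u ^ p = algebraMap K A a) (hv : v ^ p = algebraMap K A b)
    (huv : u * v = ω • (v * u)) : ∃ d : A, d ^ p = algebraMap K A c := by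
  have hmin := minpoly_eq_X_pow_sub_C_of_apply_eq_smul hp hω hra hr hσr
  have : FiniteDimensional K Q := Module.finite_of_finrank_pos (hfr ▸ hp.pos)
  have hadj : Algebra.adjoin K {r} = ⊤ :=
    Algebra.adjoin_eq_top_of_primitive_element (Algebra.IsAlgebraic.isAlgebraic r) <|
      (Field.primitive_element_iff_minpoly_natDegree_eq K r).2 <| by
        rw [hmin, natDegree_X_pow_sub_C, hfr]
  obtain ⟨φ, rfl⟩ := exists_algHom_apply_eq_of_adjoin_eq_top (u := u) hadj (by simp [hmin, hu])
  have hcomm := map_mul_eq_mul_map_of_adjoin_eq_top hadj (φ := φ) (σ := σ) (v := v) <| by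
    rw [huv, hσr, map_smul, mul_smul_comm]
  have hq : φ (e • r) * (v * φ x) = ω • (v * φ x * φ (e • r)) := by
    rw [← mul_assoc, hcomm, map_smul σ, hσr, smul_comm e ω, map_smul φ ω, mul_smul_comm,
      smul_mul_assoc, mul_assoc, mul_assoc, ← map_mul, ← map_mul, mul_comm x]
  have hφx := congrArg φ hx
  simp only [map_mul, map_sub, map_pow, AlgHom.commutes] at hφx
  refine ⟨φ (e • r) + v * φ x, ?_⟩
  rw [add_pow_of_isPrimitiveRoot hq hp.ne_zero hω, mul_map_pow hcomm, hv, Algebra.commutes, hφx,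
    ← map_pow, _root_.smul_pow, hra, map_smul, AlgHom.commutes, Algebra.smul_def, map_pow,
    Algebra.commutes, add_sub_cancel]

end NormEquation

section ReflectsSplitting

/-- Every `p`-torsion central simple `F`-algebra that is split by `K'` is already split by `K`. -/
def ReflectsSplitting (F : Type u) [Field F] (p : ℕ) (K K' : Type u) [Field K] [Algebra F K]
    [Field K'] [Algebra F K'] : Prop :=
  ∀ (C : Type u) [Ring C] [Algebra F C] (n : ℕ),
    IsTorsionCSA F C p n → HasMatrixRep F C K' n → HasMatrixRep F C K n

theorem ReflectsSplitting.trans {F K K' K'' : Type u} [Field F] [Field K] [Algebra F K] [Field K']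
    [Algebra F K'] [Field K''] [Algebra F K''] {p : ℕ} (h : ReflectsSplitting F p K K')
    (h' : ReflectsSplitting F p K' K'') : ReflectsSplitting F p K K'' :=
  fun C _ _ n hC hn => h C n hC (h' C n hC hn)

theorem exists_isInvariant_of_isInvariant_comp {F M Q C m : Type*} [Field F] [Field M]
    [Algebra F M] [Field Q] [Algebra F Q] [Ring C] [Algebra F C] [IsSimpleRing C]
    [Algebra.IsCentral F C] [FiniteDimensional F C] [Fintype m] [DecidableEq m] [Nonempty m]
    (hC : Module.finrank F C = Fintype.card m ^ 2) {σ : M ≃ₐ[F] M} (hσ : IsOfFinOrder σ)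
    {j : M →ₐ[F] Q} {σ' : Q ≃ₐ[F] Q} (hord : orderOf σ' = orderOf σ)
    (hj : Function.Semiconj j σ σ')
    (hnorm : ∀ ε, ε ≠ 0 → (∃ z, twistedPow σ' z (orderOf σ) = j ε) →
      ∃ y, twistedPow σ y (orderOf σ) = ε)
    (ρ : C →ₐ[F] Matrix m m M) {ρ' : C →ₐ[F] Matrix m m Q} (hρ' : IsInvariant σ' ρ') :
    ∃ ρ₀ : C →ₐ[F] Matrix m m M, IsInvariant σ ρ₀ := by
  let J : Matrix m m M →ₐ[F] Matrix m m Q := j.mapMatrix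
  have hJ : Function.Semiconj J σ.mapMatrix σ'.mapMatrix := fun X =>
    Matrix.ext fun a b => hj (X a b)
  obtain ⟨g, hg⟩ := exists_intertwines hC ρ σ
  obtain ⟨e, he0, -, he⟩ := exists_twistedPow_eq_algebraMap hC hg
  have hg' : Intertwines (J.comp ρ) σ' (Units.map (J : Matrix m m M →* Matrix m m Q) g).1 :=
    fun c => by
      have := congrArg J (hg c)
      rwa [map_mul, map_mul, hJ.eq] at this
  obtain ⟨k, hk⟩ := exists_twistedPow_eq_of_isInvariant (e := j e) hC hg' hρ' <| by
    rw [hord]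
    refine (map_twistedPow J hJ g.1 _).symm.trans ?_
    simp [he, J, Matrix.algebraMap_eq_diagonal, Matrix.diagonal_map]
  obtain ⟨h, hh⟩ := hnorm e he0 ⟨k, hord ▸ hk⟩
  exact exists_isInvariant_of_twistedPow_eq hσ hg he0 he hh

theorem reflectsSplitting_of_norm {F K M Q : Type u} [Field F] [Field K] [Algebra F K] [Field M]
    [Algebra F M] [Field Q] [Algebra F Q] {p : ℕ} (i : K →ₐ[F] M) {σ : M ≃ₐ[F] M}
    (hσ : IsOfFinOrder σ) (hfix : ∀ m, σ m = m → m ∈ i.range) {j : M →ₐ[F] Q} {σ' : Q ≃ₐ[F] Q}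
    (hord : orderOf σ' = orderOf σ) (hj : Function.Semiconj j σ σ')
    (hnorm : ∀ ε, ε ≠ 0 → (∃ z, twistedPow σ' z (orderOf σ) = j ε) →
      ∃ y, twistedPow σ y (orderOf σ) = ε)
    (hrep : ∀ (C : Type u) [Ring C] [Algebra F C] [FiniteDimensional F C] (n : ℕ),
      HasMatrixRep F C Q n → HasMatrixRep F C M n)
    (K' : IntermediateField F Q) (hK' : ∀ x ∈ K', σ' x = x) : ReflectsSplitting F p K K' := by
  rintro C _ _ n hC ⟨ρ⟩
  have := hC.isCentral
  have := hC.isSimpleRing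
  have := hC.finiteDimensional
  have : Nonempty (Fin n) := Fin.pos_iff_nonempty.1 (Nat.pos_of_ne_zero hC.degree_ne_zero)
  have hρ' : IsInvariant σ' (K'.val.mapMatrix.comp ρ) := fun c =>
    Matrix.ext fun a b => hK' _ (ρ c a b).2
  obtain ⟨ρM⟩ := hrep C n ⟨K'.val.mapMatrix.comp ρ⟩
  obtain ⟨ρ₀, hρ₀⟩ := exists_isInvariant_of_isInvariant_comp
    (hC.finrank_eq.trans (by rw [Fintype.card_fin])) hσ hord hj hnorm ρM hρ'
  obtain ⟨ρ₁, -⟩ := exists_rep_of_forall_mem_range i.injective ρ₀ fun c a b =>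
    hfix _ (Matrix.ext_iff.2 (hρ₀ c) a b)
  exact ⟨ρ₁⟩

end ReflectsSplitting

section FixedField

variable {F Q : Type*} [Field F] [Field Q] [Algebra F Q]

theorem mem_fixedField_zpowers_iff (σ : Q ≃ₐ[F] Q) {x : Q} :
    x ∈ IntermediateField.fixedField (Subgroup.zpowers σ) ↔ σ x = x := by
  rw [IntermediateField.mem_fixedField_iff]
  refine ⟨fun h => h σ (Subgroup.mem_zpowers σ), fun h => ?_⟩
  exact Subgroup.zpowers_le.2 (show σ ∈ MulAction.stabilizer (Q ≃ₐ[F] Q) x from h)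

theorem finrank_fixedField_zpowers {σ : Q ≃ₐ[F] Q} (hσ : IsOfFinOrder σ) :
    Module.finrank (IntermediateField.fixedField (Subgroup.zpowers σ)) Q = orderOf σ := by
  have : Finite (Subgroup.zpowers σ) := hσ.finite_zpowers
  have := Fintype.ofFinite (Subgroup.zpowers σ)
  rw [← Nat.card_zpowers, Nat.card_eq_fintype_card]
  exact FixedPoints.finrank_eq_card (Subgroup.zpowers σ) Q

end FixedField

theorem exists_kummer_generator {K : Type*} [Field K] {p : ℕ} (hp : p ≠ 0) {ω a : K}
    (hω : IsPrimitiveRoot ω p) [Fact (Irreducible (X ^ p - C a))] :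
    ∃ σ : AdjoinRoot (X ^ p - C a) ≃ₐ[K] AdjoinRoot (X ^ p - C a), orderOf σ = p ∧
      σ (AdjoinRoot.root _) = ω • AdjoinRoot.root _ ∧
      ∀ m, σ m = m → m ∈ (algebraMap K (AdjoinRoot (X ^ p - C a))).range := by
  have hirr : Irreducible (X ^ p - C a) := Fact.out
  have : NeZero p := ⟨hp⟩
  have hprim : (primitiveRoots p K).Nonempty :=
    ⟨ω, (mem_primitiveRoots (Nat.pos_of_ne_zero hp)).2 hω⟩
  have : IsSplittingField K (AdjoinRoot (X ^ p - C a)) (X ^ p - C a) :=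
    isSplittingField_AdjoinRoot_X_pow_sub_C hprim hirr
  have : IsGalois K (AdjoinRoot (X ^ p - C a)) :=
    isGalois_of_isSplittingField_X_pow_sub_C hprim hirr _
  let pb := AdjoinRoot.powerBasis hirr.ne_zero
  have : FiniteDimensional K (AdjoinRoot (X ^ p - C a)) := pb.finite
  let Ψ := autAdjoinRootXPowSubCEquiv hprim hirr
  have hη : IsPrimitiveRoot hω.toRootsOfUnity p := by
    rwa [← IsPrimitiveRoot.coe_submonoidClass_iff, ← IsPrimitiveRoot.coe_units_iff]
  have hord : orderOf (Ψ hω.toRootsOfUnity) = p := (Ψ.orderOf_eq _).trans hη.eq_orderOf.symm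
  refine ⟨Ψ hω.toRootsOfUnity, hord, autAdjoinRootXPowSubC_root a _, fun m hm => ?_⟩
  have htop : Subgroup.zpowers (Ψ hω.toRootsOfUnity) = ⊤ := by
    refine Subgroup.eq_top_of_card_eq _ ?_
    rw [Nat.card_zpowers, hord, IsGalois.card_aut_eq_finrank, pb.finrank, AdjoinRoot.powerBasis_dim,
      natDegree_X_pow_sub_C]
  refine (IsGalois.mem_bot_iff_fixed m).2 fun τ => ?_
  exact (IntermediateField.mem_fixedField_iff _ _).1 ((mem_fixedField_zpowers_iff _).2 hm) τ
    (htop ▸ Subgroup.mem_top τ)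

section BaseChangeMap

variable {F K K' : Type*} [Field F] [CommRing K] [Algebra F K] [CommRing K'] [Algebra F K']

/-- Extension of scalars in `K ⊗[F] D` along a homomorphism of `F`-algebras `K → K'`. -/
noncomputable def baseChangeMap (φ : K →ₐ[F] K') (D : Type*) [Ring D] [Algebra F D] :
    K ⊗[F] D →ₐ[F] K' ⊗[F] D :=
  Algebra.TensorProduct.map φ (AlgHom.id F D)

variable (φ : K →ₐ[F] K') {D : Type*} [Ring D] [Algebra F D]

theorem baseChangeMap_algebraMap (k : K) :
    baseChangeMap φ D (algebraMap K _ k) = algebraMap K' _ (φ k) := by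
  simp [baseChangeMap, Algebra.TensorProduct.algebraMap_apply]

theorem baseChangeMap_smul (k : K) (y : K ⊗[F] D) :
    baseChangeMap φ D (k • y) = φ k • baseChangeMap φ D y := by
  rw [Algebra.smul_def, map_mul, baseChangeMap_algebraMap, ← Algebra.smul_def]

theorem baseChangeMap_aeval (f : K[X]) (y : K ⊗[F] D) :
    baseChangeMap φ D (aeval y f) = aeval (baseChangeMap φ D y) (f.map (φ : K →+* K')) := by
  induction f using Polynomial.induction_on' with
  | add f g hf hg => simp only [map_add, Polynomial.map_add, hf, hg]
  | monomial n c =>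
    rw [Polynomial.map_monomial, aeval_monomial, aeval_monomial, map_mul, map_pow,
      baseChangeMap_algebraMap, RingHom.coe_coe]

end BaseChangeMap

section CyclicStep

theorem exists_pow_eq_algebraMap_baseChange {F K K' Q D : Type*} [Field F] [Field K] [Algebra F K]
    [Field K'] [Algebra F K'] [Field Q] [Algebra K' Q] [Ring D] [Algebra F D] {p : ℕ}
    (hp : p.Prime) (φ : K →ₐ[F] K') {ω a b c : K} (hω : IsPrimitiveRoot ω p) {r : Q}
    (hra : r ^ p = algebraMap K' Q (φ a)) (hr : r ≠ 0) {σ : Q →ₐ[K'] Q} (hσr : σ r = φ ω • r)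
    (hfr : Module.finrank K' Q = p) {e : K'} {x : Q}
    (hx : twistedPow σ x p * algebraMap K' Q (φ b) =
      algebraMap K' Q (φ c) - algebraMap K' Q (φ a) * algebraMap K' Q e ^ p)
    {u v : K ⊗[F] D} (hu : u ^ p = algebraMap K _ a) (hv : v ^ p = algebraMap K _ b)
    (huv : u * v = ω • (v * u)) : ∃ d : K' ⊗[F] D, d ^ p = algebraMap K' _ (φ c) :=
  exists_pow_eq_algebraMap_of_twistedPow_eq (ω := φ ω) hp (hω.map_of_injective φ.injective) hra hr
    hσr hfr hx (u := baseChangeMap φ D u) (v := baseChangeMap φ D v)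
    (by rw [← map_pow, hu, baseChangeMap_algebraMap])
    (by rw [← map_pow, hv, baseChangeMap_algebraMap])
    (by rw [← map_mul, huv, baseChangeMap_smul, map_mul])

theorem exists_pow_eq_algebraMap_of_mul_pow_eq {K A : Type*} [Field K] [Ring A] [Algebra K A]
    {p : ℕ} {a c : K} {u : A} (hu : u ^ p = algebraMap K A a) {z : AdjoinRoot (X ^ p - C a)}
    (hz : algebraMap K _ a * z ^ p = algebraMap K _ c) : ∃ d : A, d ^ p = algebraMap K A c := by
  refine ⟨adjoinRootLift (X ^ p - C a) u (by simp [hu]) (AdjoinRoot.root _ * z), ?_⟩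
  rw [← map_pow, mul_pow, root_X_pow_sub_C_pow]
  exact (congrArg _ hz).trans (AlgHom.commutes _ c)

theorem orderOf_dvd_orderOf_of_semiconj {F M Q : Type*} [Field F] [Field M] [Algebra F M] [Field Q]
    [Algebra F Q] {j : M →ₐ[F] Q} {σ : M ≃ₐ[F] M} {σ' : Q ≃ₐ[F] Q}
    (hj : Function.Semiconj j σ σ') : orderOf σ ∣ orderOf σ' := by
  refine orderOf_dvd_of_pow_eq_one (AlgEquiv.ext fun m => j.injective ?_)
  change j ((σ ^ orderOf σ') m) = j m
  rw [AlgEquiv.coe_pow, (hj.iterate_right _).eq, ← AlgEquiv.coe_pow, pow_orderOf_eq_one]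
  rfl

theorem exists_reflectsSplitting_pow_eq_algebraMap {F K D : Type u} [Field F] [Field K]
    [Algebra F K] [Infinite K] [Ring D] [Algebra F D] {p : ℕ} (hp : p.Prime) {ω : K}
    (hω : IsPrimitiveRoot ω p) {a b : K} (c : K) (hb : b ≠ 0) (hirr : Irreducible (X ^ p - C a))
    {u v : K ⊗[F] D} (hu : u ^ p = algebraMap K _ a) (hv : v ^ p = algebraMap K _ b)
    (huv : u * v = ω • (v * u)) :
    ∃ (K' : Type u) (_ : Field K') (_ : Algebra F K') (φ : K →ₐ[F] K'),
      ReflectsSplitting F p K K' ∧ ∃ d : K' ⊗[F] D, d ^ p = algebraMap K' _ (φ c) := by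
  have : Fact (Irreducible (X ^ p - C a)) := ⟨hirr⟩
  let M := AdjoinRoot (X ^ p - C a)
  let r : M := AdjoinRoot.root _
  have hra : r ^ p = algebraMap K M a := root_X_pow_sub_C_pow p a
  by_cases hac : ∃ z : M, algebraMap K M a * z ^ p = algebraMap K M c
  · obtain ⟨z, hz⟩ := hac
    exact ⟨K, _, _, AlgHom.id F K, fun _ _ _ _ _ h => h,
      exists_pow_eq_algebraMap_of_mul_pow_eq hu hz⟩
  push Not at hac
  obtain ⟨σ, hord, hσr, hfix⟩ := exists_kummer_generator hp.ne_zero hω (a := a)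
  have : Infinite M := Infinite.of_injective _ (algebraMap K M).injective
  have ha : a ≠ 0 := by
    rintro rfl
    exact not_irreducible_pow hp.ne_one (by rwa [map_zero, sub_zero] at hirr)
  let σF : M ≃ₐ[F] M := AlgEquiv.restrictScalarsHom F σ
  have hordF : orderOf σF = p :=
    (orderOf_injective _ (AlgEquiv.restrictScalars_injective F) σ).trans hord
  obtain ⟨Q, _, _, j, σ', hσ'p, hj, ⟨e, x, he, hx⟩, hnorm, hrep⟩ :=
    exists_generic_norm_solution hp (σ := σF) (orderOf_dvd_iff_pow_eq_one.1 hordF.dvd)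
      (map_ne_zero (algebraMap K M) |>.2 ha) (map_ne_zero (algebraMap K M) |>.2 hb)
      (σ.commutes a) (σ.commutes b) (σ.commutes c) hac
  have hsemi : Function.Semiconj j σF σ' := fun m => (hj m).symm
  have hord' : orderOf σ' = p := (orderOf_dvd_of_pow_eq_one hσ'p).antisymm
    (hordF ▸ orderOf_dvd_orderOf_of_semiconj hsemi)
  have hfin : IsOfFinOrder σ' := orderOf_pos_iff.1 (hp.pos.trans_eq hord'.symm)
  let K' := IntermediateField.fixedField (Subgroup.zpowers σ')
  let φ : K →ₐ[F] K' := (j.comp (IsScalarTower.toAlgHom F K M)).codRestrict K'.toSubalgebra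
    fun k => (mem_fixedField_zpowers_iff σ').2 ((hj _).trans (congrArg j (σ.commutes k)))
  refine ⟨K', inferInstance, inferInstance, φ, ?_, ?_⟩
  · exact reflectsSplitting_of_norm (IsScalarTower.toAlgHom F K M)
      (orderOf_pos_iff.1 (hp.pos.trans_eq hordF.symm)) hfix (hord'.trans hordF.symm)
      hsemi (by rwa [hordF]) hrep K' fun x => (mem_fixedField_zpowers_iff σ').1
  · let σK : Q →ₐ[K'] Q :=
      { (σ' : Q →+* Q) with commutes' := fun k => (mem_fixedField_zpowers_iff σ').1 k.2 }
    refine exists_pow_eq_algebraMap_baseChange (r := j r) (σ := σK)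
      (e := ⟨e, (mem_fixedField_zpowers_iff σ').2 he⟩) hp φ hω ?_ ?_ ?_ ?_ hx hu hv huv
    · exact (map_pow j r p).symm.trans (congrArg j hra)
    · refine (map_ne_zero j).2 fun h => ha ?_
      rwa [h, zero_pow hp.ne_zero, eq_comm, map_eq_zero] at hra
    · exact (hj r).trans ((congrArg j (hσr.trans (Algebra.smul_def ω r))).trans (map_mul j _ _))
    · exact (finrank_fixedField_zpowers hfin).trans hord'

end CyclicStep

/-! ### A root of one polynomial -/

section PrimeDegree

variable {L : Type*} [Field L] {p : ℕ}

theorem mem_range_algebraMap_of_natDegree_minpoly_lt {N : Type*} [Field N] [Algebra L N]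
    [FiniteDimensional L N] {k : ℕ} (hp : p.Prime) (hk : Module.finrank L N = p ^ k) {θ : N}
    (hθ : (minpoly L θ).natDegree < p) : θ ∈ (algebraMap L N).range := by
  obtain ⟨j, -, hj⟩ := (Nat.dvd_prime_pow hp).1
    (hk ▸ minpoly.degree_dvd (Algebra.IsIntegral.isIntegral (R := L) θ))
  have hj0 : j = 0 := by
    by_contra hj0
    exact (Nat.le_self_pow hj0 p).not_gt (hj ▸ hθ)
  rwa [hj0, pow_zero, minpoly.natDegree_eq_one_iff] at hj

theorem exists_isPrimitiveRoot_of_finrank_eq_prime_pow {N : Type*} [Field N] [Algebra L N]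
    [FiniteDimensional L N] {k : ℕ} (hp : p.Prime) (hk : Module.finrank L N = p ^ k) {ω : N}
    (hω : IsPrimitiveRoot ω p) : ∃ w : L, IsPrimitiveRoot w p := by
  have hcyc : minpoly L ω ∣ cyclotomic p L := minpoly.dvd _ _ <| by
    rw [aeval_def, ← eval_map, map_cyclotomic]
    exact hω.isRoot_cyclotomic hp.pos
  have hle := natDegree_le_of_dvd hcyc (cyclotomic_ne_zero p L)
  rw [natDegree_cyclotomic] at hle
  obtain ⟨w, rfl⟩ := mem_range_algebraMap_of_natDegree_minpoly_lt hp hk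
    (hle.trans_lt (Nat.totient_lt p hp.one_lt))
  exact ⟨w, hω.of_map_of_injective (algebraMap L N).injective⟩

theorem exists_aeval_eq_zero_of_splits_of_natDegree_lt {N : Type*} [Field N] [Algebra L N]
    [FiniteDimensional L N] {k : ℕ} (hp : p.Prime) (hk : Module.finrank L N = p ^ k) {f : L[X]}
    (hf : f.natDegree ≠ 0) (hdeg : f.natDegree < p) (hN : (f.map (algebraMap L N)).Splits) :
    ∃ x : L, aeval x f = 0 := by
  obtain ⟨θ, hθ⟩ := hN.exists_eval_eq_zero (by
    rw [degree_map]
    exact fun h => hf (natDegree_eq_of_degree_eq_some h))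
  rw [eval_map_algebraMap] at hθ
  obtain ⟨x, rfl⟩ := mem_range_algebraMap_of_natDegree_minpoly_lt hp hk
    ((natDegree_le_of_dvd (minpoly.dvd L θ hθ) fun h => hf (by rw [h, natDegree_zero])).trans_lt
      hdeg)
  exact ⟨x, by simpa using hθ⟩

theorem exists_aeval_eq_zero_of_not_irreducible {N : Type*} [Field N] [Algebra L N]
    [FiniteDimensional L N] {k : ℕ} (hp : p.Prime) (hk : Module.finrank L N = p ^ k) {f : L[X]}
    (hf : ¬ Irreducible f) (hdeg : f.natDegree = p) (hN : (f.map (algebraMap L N)).Splits) :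
    ∃ x : L, aeval x f = 0 := by
  have hf0 : f ≠ 0 := ne_zero_of_natDegree_gt (hdeg ▸ hp.pos)
  obtain ⟨g, -, hg, hgf⟩ := exists_monic_irreducible_factor f
    (not_isUnit_of_natDegree_pos f (hdeg ▸ hp.pos))
  have hglt : g.natDegree < p := by
    refine hdeg ▸ (natDegree_le_of_dvd hgf hf0).lt_of_ne fun heq => hf ?_
    exact (associated_of_dvd_of_natDegree_le hgf hf0 heq.ge).irreducible hg
  obtain ⟨x, hx⟩ := exists_aeval_eq_zero_of_splits_of_natDegree_lt hp hk hg.natDegree_pos.ne' hglt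
    (hN.of_dvd (Polynomial.map_ne_zero hf0) (Polynomial.map_dvd _ hgf))
  exact ⟨x, aeval_eq_zero_of_dvd_aeval_eq_zero hgf hx⟩

theorem isGalois_of_finrank_eq_prime_pow {N : Type*} [Field N] [Algebra L N] [FiniteDimensional L N]
    [IsGalois L N] {k : ℕ} (hp : p.Prime) (hk : Module.finrank L N = p ^ k)
    {E : IntermediateField L N} (hE : Module.finrank L E = p) : IsGalois L E := by
  have hk0 : k ≠ 0 := by
    rintro rfl
    have hmul := Module.finrank_mul_finrank L E N
    rw [hk, hE, pow_zero] at hmul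
    exact hp.one_lt.ne' (Nat.eq_one_of_mul_eq_one_right hmul)
  have : E.fixingSubgroup.Normal := Subgroup.normal_of_index_eq_minFac_card <| by
    rw [← IntermediateField.finrank_eq_fixingSubgroup_index, hE, IsGalois.card_aut_eq_finrank, hk,
      hp.pow_minFac hk0]
  have hfixed := IsGalois.of_fixedField_normal_subgroup (K := L) (L := N) E.fixingSubgroup
  rwa [IsGalois.fixedField_fixingSubgroup] at hfixed

theorem exists_adjoin_eq_top_and_minpoly_eq {E : Type*} [Field E] [Algebra L E]
    [FiniteDimensional L E] [IsGalois L E] (hp : p.Prime) (hE : Module.finrank L E = p) {w : L}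
    (hw : IsPrimitiveRoot w p) :
    ∃ (α : E) (c : L), IntermediateField.adjoin L {α} = ⊤ ∧ minpoly L α = X ^ p - C c := by
  have : Fact p.Prime := ⟨hp⟩
  have : IsCyclic (E ≃ₐ[L] E) := isCyclic_of_prime_card (p := p) (by
    rw [IsGalois.card_aut_eq_finrank, hE])
  obtain ⟨α, ⟨c, hc⟩, hα⟩ := exists_root_adjoin_eq_top_of_isCyclic L E
    ⟨w, by rw [hE]; exact (mem_primitiveRoots hp.pos).2 hw⟩
  rw [hE] at hc
  have hint : IsIntegral L α := Algebra.IsIntegral.isIntegral α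
  refine ⟨α, c, hα, (eq_of_monic_of_dvd_of_natDegree_le (minpoly.monic hint)
    (monic_X_pow_sub_C c hp.ne_zero) (minpoly.dvd _ _ (by simp [hc])) ?_).symm⟩
  rw [natDegree_X_pow_sub_C, (Field.primitive_element_iff_minpoly_natDegree_eq L α).1 hα, hE]

theorem exists_minpoly_dvd_comp {E : Type*} [Field E] [Algebra L E] {α θ : E}
    (hint : IsIntegral L α) (hα : IntermediateField.adjoin L {α} = ⊤) {h : L[X]}
    (hθ : aeval θ h = 0) : ∃ q : L[X], minpoly L α ∣ h.comp q := by
  have hmem : θ ∈ Algebra.adjoin L {α} := by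
    rw [Algebra.adjoin_eq_top_of_primitive_element hint.isAlgebraic hα]
    trivial
  rw [Algebra.adjoin_singleton_eq_range_aeval] at hmem
  obtain ⟨q, rfl⟩ := hmem
  exact ⟨q, minpoly.dvd _ _ ((aeval_comp ..).trans hθ)⟩

theorem aeval_aeval_eq_zero_of_dvd_comp {A : Type*} [Ring A] [Algebra L A] {f g q : L[X]}
    (h : g ∣ f.comp q) {d : A} (hd : aeval d g = 0) : aeval (aeval d q) f = 0 := by
  rw [← aeval_comp]
  exact aeval_eq_zero_of_dvd_aeval_eq_zero h hd

-- By Kummer theory; the divisibilities say that a root of either polynomial, in any algebra, yields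
-- a root of the other.
theorem exists_irreducible_X_pow_sub_C_dvd_comp {N : Type*} [Field N] [Algebra L N]
    [FiniteDimensional L N] [IsGalois L N] {k : ℕ} (hp : p.Prime)
    (hk : Module.finrank L N = p ^ k) {w : L} (hw : IsPrimitiveRoot w p) {h : L[X]}
    (hirr : Irreducible h) (hdeg : h.natDegree = p) {θ : N} (hθ : aeval θ h = 0) :
    ∃ c : L, Irreducible (X ^ p - C c) ∧
      (∃ q : L[X], X ^ p - C c ∣ h.comp q) ∧ ∃ r : L[X], h ∣ (X ^ p - C c).comp r := by
  have hint : IsIntegral L θ := Algebra.IsIntegral.isIntegral θ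
  have hass : Associated h (minpoly L θ) :=
    ((minpoly.irreducible hint).associated_of_dvd hirr (minpoly.dvd _ _ hθ)).symm
  have hE : Module.finrank L (IntermediateField.adjoin L {θ}) = p := by
    rw [IntermediateField.adjoin.finrank hint, ← hdeg,
      natDegree_eq_of_degree_eq (degree_eq_degree_of_associated hass)]
  have := isGalois_of_finrank_eq_prime_pow hp hk hE
  obtain ⟨α, c, hα, hm⟩ := exists_adjoin_eq_top_and_minpoly_eq hp hE hw
  have hintα : IsIntegral L α := Algebra.IsIntegral.isIntegral α
  let gen := IntermediateField.AdjoinSimple.gen L θ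
  have hminpoly : minpoly L gen = minpoly L θ := IntermediateField.minpoly_gen L θ
  have hgen : IntermediateField.adjoin L {gen} = ⊤ := by
    rw [Field.primitive_element_iff_minpoly_natDegree_eq, hminpoly,
      IntermediateField.adjoin.finrank hint]
  have hroot : aeval gen h = 0 :=
    aeval_eq_zero_of_dvd_aeval_eq_zero hass.symm.dvd (hminpoly ▸ minpoly.aeval L gen)
  obtain ⟨q, hq⟩ := exists_minpoly_dvd_comp hintα hα hroot
  obtain ⟨r, hr⟩ := exists_minpoly_dvd_comp (Algebra.IsIntegral.isIntegral gen) hgen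
    (hm ▸ minpoly.aeval L α)
  exact ⟨c, hm ▸ minpoly.irreducible hintα, ⟨q, hm ▸ hq⟩, r, hass.dvd.trans (hminpoly ▸ hr)⟩

end PrimeDegree

section Matrix

variable {K : Type*} [Field K]

theorem exists_matrix_aeval_eq_zero {f : K[X]} (hf : f ≠ 0) :
    ∃ m : Matrix (Fin f.natDegree) (Fin f.natDegree) K, aeval m f = 0 := by
  let pb := AdjoinRoot.powerBasis hf
  have e : Fin pb.dim ≃ Fin f.natDegree := finCongr (AdjoinRoot.powerBasis_dim hf)
  refine ⟨Algebra.leftMulMatrix (pb.basis.reindex e) (AdjoinRoot.root f), ?_⟩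
  rw [aeval_algHom_apply, AdjoinRoot.aeval_eq, AdjoinRoot.mk_self, map_zero]

theorem exists_aeval_eq_zero_or_nonempty_algEquiv_divisionRing {B : Type u} [Ring B] [Algebra K B]
    [IsSimpleRing B] [FiniteDimensional K B] {f : K[X]} (hf : f.natDegree.Prime)
    (hB : Module.finrank K B = f.natDegree ^ 2) :
    (∃ d : B, aeval d f = 0) ∨
      ∃ (Δ : Type u) (_ : DivisionRing Δ) (_ : Algebra K Δ), Nonempty (B ≃ₐ[K] Δ) := by
  have : IsArtinianRing B := IsArtinianRing.of_finite K B
  obtain ⟨n, hn, Δ, _, _, _, ⟨e⟩⟩ :=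
    IsSimpleRing.exists_algEquiv_matrix_divisionRing_finite K B
  have hdim := e.toLinearEquiv.finrank_eq
  rw [hB, Module.finrank_matrix, Fintype.card_fin] at hdim
  have hdvd : n * n ∣ f.natDegree ^ 2 := ⟨_, hdim⟩
  rw [← sq, Nat.pow_dvd_pow_iff two_ne_zero, Nat.dvd_prime hf] at hdvd
  rcases hdvd with rfl | rfl
  · exact .inr ⟨Δ, _, _, ⟨e.trans (by convert Matrix.uniqueAlgEquiv (m := Fin 1))⟩⟩
  · obtain ⟨m, hm⟩ := exists_matrix_aeval_eq_zero (ne_zero_of_natDegree_gt hf.pos)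
    refine .inl ⟨e.symm ((Algebra.ofId K Δ).mapMatrix m), ?_⟩
    rw [aeval_algHom_apply, aeval_algHom_apply, hm, map_zero, map_zero]

end Matrix

section Root

theorem one_tmul_notMem_range_algebraMap {F K D : Type*} [Field F] [Field K] [Algebra F K] [Ring D]
    [Algebra F D] [Algebra.IsCentral F D] {x : D} (hx : x ∉ (algebraMap F D).range) :
    (1 : K) ⊗ₜ[F] x ∉ (algebraMap K (K ⊗[F] D)).range := by
  rintro ⟨k, hk⟩
  refine hx (Algebra.mem_bot.1 ?_)
  rw [← Algebra.IsCentral.center_eq_bot F D]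
  refine Subalgebra.mem_center_iff.2 fun y => ?_
  have hcomm := Algebra.commutes k ((1 : K) ⊗ₜ[F] y)
  rw [hk, Algebra.TensorProduct.tmul_mul_tmul, Algebra.TensorProduct.tmul_mul_tmul] at hcomm
  exact (Algebra.TensorProduct.includeRight_injective (R := F) (A := K) (B := D)
    (algebraMap F K).injective (by simpa using hcomm)).symm

theorem minpoly_one_tmul_dvd {F K D : Type*} [Field F] [Field K] [Algebra F K] [Ring D]
    [Algebra F D] (x : D) :
    minpoly K ((1 : K) ⊗ₜ[F] x) ∣ (minpoly F x).map (algebraMap F K) := by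
  refine minpoly.dvd _ _ ?_
  rw [aeval_map_algebraMap]
  exact (aeval_algHom_apply (Algebra.TensorProduct.includeRight : D →ₐ[F] K ⊗[F] D) x _).trans
    (by rw [minpoly.aeval, map_zero])

variable {K N : Type u} [Field K] [Field N] [Algebra K N] [FiniteDimensional K N] [IsGalois K N]
  {p k : ℕ} {w : K}

theorem exists_cyclic_presentation {Δ : Type*} [DivisionRing Δ] [Algebra K Δ]
    [Algebra.IsCentral K Δ] [FiniteDimensional K Δ] (hp : p.Prime) (hk : Module.finrank K N = p ^ k)
    (hw : IsPrimitiveRoot w p) (hΔ : Module.finrank K Δ = p ^ 2) {x : Δ}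
    (hx : x ∉ (algebraMap K Δ).range) (hN : ((minpoly K x).map (algebraMap K N)).Splits) :
    ∃ (u v : Δ) (a b : K), Irreducible (X ^ p - C a) ∧ b ≠ 0 ∧ u ^ p = algebraMap K Δ a ∧
      v ^ p = algebraMap K Δ b ∧ u * v = w • (v * u) := by
  have hint : IsIntegral K x := Algebra.IsIntegral.isIntegral x
  obtain ⟨θ, hθ⟩ := hN.exists_eval_eq_zero (by rw [degree_map]; exact (minpoly.degree_pos hint).ne')
  rw [eval_map_algebraMap] at hθ
  obtain ⟨a, ha, -, r, hr⟩ := exists_irreducible_X_pow_sub_C_dvd_comp hp hk hw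
    (minpoly.irreducible hint) (natDegree_minpoly_eq_of_finrank_eq_sq hp hΔ hx) hθ
  have hu : aeval x r ^ p = algebraMap K Δ a := by
    simpa [sub_eq_zero] using aeval_aeval_eq_zero_of_dvd_comp hr (minpoly.aeval K x)
  obtain ⟨v, b, hb, hv, huv⟩ :=
    exists_pow_eq_algebraMap_and_mul_eq_smul_mul hp hΔ hw hu (by
      rintro ⟨t, ht⟩
      rw [← ht, ← map_pow] at hu
      exact pow_ne_of_irreducible_X_pow_sub_C ha dvd_rfl hp.ne_one t
        ((algebraMap K Δ).injective hu))
  exact ⟨_, v, a, b, ha, hb, hu, hv, huv⟩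

variable {F : Type u} [Field F] [Algebra F K] [Infinite K] {D : Type u} [DivisionRing D]
  [Algebra F D] [Algebra.IsCentral F D] [FiniteDimensional F D]

theorem exists_reflectsSplitting_aeval_eq_zero_of_finrank_eq_prime_pow (hp : p.Prime)
    (hk : Module.finrank K N = p ^ k) (hw : IsPrimitiveRoot w p) (hD : Module.finrank F D = p ^ 2)
    {x : D} (hx : x ∉ (algebraMap F D).range)
    (hxN : ((minpoly F x).map ((algebraMap K N).comp (algebraMap F K))).Splits) {f : K[X]}
    (hf : Irreducible f) (hdeg : f.natDegree = p) (hfN : (f.map (algebraMap K N)).Splits) :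
    ∃ (K' : Type u) (_ : Field K') (_ : Algebra F K') (φ : K →ₐ[F] K'), ReflectsSplitting F p K K' ∧
      ∃ d : K' ⊗[F] D, aeval d (f.map (φ : K →+* K')) = 0 := by
  have : IsSimpleRing (K ⊗[F] D) := isSimpleRing_tensorProduct
  have : Algebra.IsCentral K (K ⊗[F] D) := isCentral_baseChange
  have hfr : Module.finrank K (K ⊗[F] D) = p ^ 2 := by rw [Module.finrank_baseChange, hD]
  obtain ⟨d, hd⟩ | ⟨Δ, _, _, ⟨e⟩⟩ := exists_aeval_eq_zero_or_nonempty_algEquiv_divisionRing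
    (B := K ⊗[F] D) (f := f) (hdeg ▸ hp) (hdeg ▸ hfr)
  · refine ⟨K, _, _, AlgHom.id F K, fun _ _ _ _ _ => id, d, ?_⟩
    rwa [AlgHom.id_toRingHom, Polynomial.map_id]
  have : Algebra.IsCentral K Δ := Algebra.IsCentral.of_algEquiv K _ _ e
  have : FiniteDimensional K Δ := e.toLinearEquiv.finiteDimensional
  have hx' : e (1 ⊗ₜ x) ∉ (algebraMap K Δ).range := fun ⟨t, ht⟩ =>
    one_tmul_notMem_range_algebraMap (K := K) hx ⟨t, e.injective (by rw [e.commutes, ht])⟩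
  have hsplits : ((minpoly K (e (1 ⊗ₜ x))).map (algebraMap K N)).Splits := by
    rw [minpoly.algEquiv_eq]
    rw [← Polynomial.map_map] at hxN
    exact hxN.of_dvd (Polynomial.map_ne_zero (Polynomial.map_ne_zero
      (minpoly.ne_zero (Algebra.IsIntegral.isIntegral x))))
      (Polynomial.map_dvd _ (minpoly_one_tmul_dvd x))
  obtain ⟨u, v, a, b, ha, hb, hu, hv, huv⟩ := exists_cyclic_presentation hp hk hw
    (e.toLinearEquiv.finrank_eq.symm.trans hfr) hx' hsplits
  obtain ⟨θ, hθ⟩ := hfN.exists_eval_eq_zero (by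
    rw [degree_map]; exact (degree_pos_of_irreducible hf).ne')
  rw [eval_map_algebraMap] at hθ
  obtain ⟨c, -, ⟨q, hq⟩, -⟩ := exists_irreducible_X_pow_sub_C_dvd_comp hp hk hw hf hdeg hθ
  obtain ⟨K', _, _, φ, hK', d, hd⟩ := exists_reflectsSplitting_pow_eq_algebraMap hp hw c hb ha
    (u := e.symm u) (v := e.symm v) (by rw [← map_pow, hu, e.symm.commutes])
    (by rw [← map_pow, hv, e.symm.commutes]) (by rw [← map_mul, huv, map_smul, map_mul])
  refine ⟨K', _, _, φ, hK', aeval d (q.map (φ : K →+* K')),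
    aeval_aeval_eq_zero_of_dvd_comp (g := X ^ p - C (φ c)) ?_ (by simp [hd])⟩
  simpa [Polynomial.map_comp] using Polynomial.map_dvd (φ : K →+* K') hq

end Root

section SplittingField

variable {K : Type u} [Field K]

theorem exists_isGalois_splits (S : Finset K[X]) (hS : ∀ f ∈ S, f.Separable) :
    ∃ (N : Type u) (_ : Field N) (_ : Algebra K N), FiniteDimensional K N ∧ IsGalois K N ∧
      ∀ f ∈ S, (f.map (algebraMap K N)).Splits := by
  let s := ∏ f ∈ S, f
  have hs : s ≠ 0 := Finset.prod_ne_zero_iff.2 fun f hf => (hS f hf).ne_zero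
  have hN := IsSplittingField.splits s.SplittingField s
  have hsep : ∀ x ∈ s.rootSet s.SplittingField, IsSeparable K x := fun x hx => by
    have hx0 : aeval x s = 0 := aeval_eq_zero_of_mem_rootSet hx
    rw [map_prod, Finset.prod_eq_zero_iff] at hx0
    obtain ⟨f, hf, hfx⟩ := hx0
    exact (hS f hf).of_dvd (minpoly.dvd _ _ hfx)
  have : Algebra.IsSeparable K s.SplittingField := by
    rw [← IntermediateField.isSeparable_top, ← (isSplittingField_iff_intermediateField.1
      (IsSplittingField.splittingField s)).2]
    exact (IntermediateField.isSeparable_adjoin_iff_isSeparable ..).2 hsep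
  have : Normal K s.SplittingField := Normal.of_isSplittingField s
  exact ⟨s.SplittingField, inferInstance, inferInstance, inferInstance, ⟨⟩, fun f hf =>
    hN.of_dvd (Polynomial.map_ne_zero hs) (Polynomial.map_dvd _ (Finset.dvd_prod_of_mem _ hf))⟩

theorem separable_of_natDegree_ne_zero {f : K[X]} (hf : Irreducible f)
    (hK : (f.natDegree : K) ≠ 0) : f.Separable := by
  rw [separable_iff_derivative_ne_zero hf]
  intro hder
  have hpos := hf.natDegree_pos
  have hcoeff : (derivative f).coeff (f.natDegree - 1) = f.leadingCoeff * f.natDegree := by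
    rw [coeff_derivative, Nat.sub_add_cancel hpos, ← Nat.cast_add_one, Nat.sub_add_cancel hpos,
      coeff_natDegree]
  rw [hder, coeff_zero] at hcoeff
  exact mul_ne_zero (leadingCoeff_ne_zero.2 hf.ne_zero) hK hcoeff.symm

theorem exists_isPrimitiveRoot_of_splits_cyclotomic {n : ℕ} (hn : (n : K) ≠ 0)
    (h : (cyclotomic n K).Splits) : ∃ ω : K, IsPrimitiveRoot ω n := by
  have : NeZero (n : K) := ⟨hn⟩
  have hn0 : 0 < n := Nat.pos_of_ne_zero fun h0 => hn (by rw [h0, Nat.cast_zero])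
  obtain ⟨ω, hω⟩ := h.exists_eval_eq_zero (degree_cyclotomic_pos n K hn0).ne'
  exact ⟨ω, isRoot_cyclotomic_iff.1 hω⟩

end SplittingField

theorem natCast_ne_zero_of_algebra {F K : Type*} [Field F] [Field K] [Algebra F K] {p : ℕ}
    (hp : (p : F) ≠ 0) : (p : K) ≠ 0 := by
  rw [← map_natCast (algebraMap F K)]
  exact (_root_.map_ne_zero _).2 hp

theorem exists_notMem_range_algebraMap {F D : Type*} [Field F] [Ring D] [Nontrivial D] [Algebra F D]
    (hD : Module.finrank F D ≠ 1) : ∃ x : D, x ∉ (algebraMap F D).range := by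
  contrapose! hD
  refine finrank_eq_one (1 : D) one_ne_zero fun x => ?_
  obtain ⟨k, hk⟩ := hD x
  exact ⟨k, by rw [← hk, Algebra.algebraMap_eq_smul_one]⟩

section Sylow

variable {F K D : Type u} [Field F] [Field K] [Algebra F K] {p : ℕ}

variable [Infinite K] [DivisionRing D] [Algebra F D] [Algebra.IsCentral F D] [FiniteDimensional F D]

theorem exists_reflectsSplitting_aeval_eq_zero (hp : p.Prime) (hpF : (p : F) ≠ 0)
    (hD : Module.finrank F D = p ^ 2) {f : K[X]} (hf : f.Separable) (hdeg : f.natDegree = p) :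
    ∃ (K' : Type u) (_ : Field K') (_ : Algebra F K') (φ : K →ₐ[F] K'),
      ReflectsSplitting F p K K' ∧ ∃ d : K' ⊗[F] D, aeval d (f.map (φ : K →+* K')) = 0 := by
  have : Fact p.Prime := ⟨hp⟩
  have hpK : (p : K) ≠ 0 := natCast_ne_zero_of_algebra hpF
  obtain ⟨x, hx⟩ := exists_notMem_range_algebraMap (F := F) (D := D) (by
    rw [hD]; exact (Nat.one_lt_pow two_ne_zero hp.one_lt).ne')
  have hxdeg := natDegree_minpoly_eq_of_finrank_eq_sq hp hD hx
  have hxsep : (minpoly F x).Separable := separable_of_natDegree_ne_zero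
    (minpoly.irreducible (Algebra.IsIntegral.isIntegral x)) (hxdeg ▸ hpF)
  have : NeZero (p : K) := ⟨hpK⟩
  classical
  obtain ⟨N, _, _, _, _, hN⟩ := exists_isGalois_splits
    {f, (minpoly F x).map (algebraMap F K), cyclotomic p K} (by
      simpa using ⟨hf, hxsep.map, separable_cyclotomic p K⟩)
  simp only [Finset.forall_mem_insert, Finset.mem_singleton, forall_eq, map_cyclotomic,
    Polynomial.map_map] at hN
  obtain ⟨hfN, hxN, hN⟩ := hN
  obtain ⟨ω, hω⟩ :=
    exists_isPrimitiveRoot_of_splits_cyclotomic (natCast_ne_zero_of_algebra (F := K) hpK) hN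
  obtain ⟨P⟩ : Nonempty (Sylow p (N ≃ₐ[K] N)) := inferInstance
  let L := IntermediateField.fixedField P.1
  let _ : Algebra F N := ((algebraMap K N).comp (algebraMap F K)).toAlgebra
  have : IsScalarTower F K N := IsScalarTower.of_algebraMap_eq' rfl
  have hL : ReflectsSplitting F p K L := fun C _ _ n hC hP => hC.hasMatrixRep_of_sylow hp P hP
  let φ : K →ₐ[F] L := IsScalarTower.toAlgHom F K L
  have : Infinite L := Infinite.of_injective _ φ.injective
  obtain ⟨k, hk⟩ := P.2.exists_card_eq
  have hLN : Module.finrank L N = p ^ k :=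
    (IntermediateField.finrank_fixedField_eq_card P.1).trans hk
  obtain ⟨w, hw⟩ := exists_isPrimitiveRoot_of_finrank_eq_prime_pow hp hLN hω
  have hfdeg : (f.map (φ : K →+* L)).natDegree = p := (natDegree_map _).trans hdeg
  have hfL : ((f.map (φ : K →+* L)).map (algebraMap L N)).Splits := by
    rw [Polynomial.map_map]; exact hfN
  by_cases hirr : Irreducible (f.map (φ : K →+* L))
  · obtain ⟨K', _, _, ψ, hK', hd⟩ :=
      exists_reflectsSplitting_aeval_eq_zero_of_finrank_eq_prime_pow (F := F) hp hLN hw hD hx hxN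
        hirr hfdeg hfL
    rw [Polynomial.map_map] at hd
    exact ⟨K', _, _, ψ.comp φ, hL.trans hK', hd⟩
  · obtain ⟨y, hy⟩ := exists_aeval_eq_zero_of_not_irreducible hp hLN hirr hfdeg hfL
    refine ⟨L, inferInstance, inferInstance, φ, hL, algebraMap L _ y, ?_⟩
    rw [aeval_algebraMap_apply, hy, map_zero]

end Sylow

/-! ### Roots of all polynomials -/

section ProductQuotient

variable {J : Type*} {E : J → Type*} [∀ j, Field (E j)]

variable (E) in
/-- The ideal of a product of fields formed by the families that vanish eventually along `l`. The
residue fields at the maximal ideals containing it play the role of ultraproducts. -/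
def eventuallyZeroIdeal (l : Filter J) : Ideal (∀ j, E j) where
  carrier := {x | ∀ᶠ j in l, x j = 0}
  add_mem' hx hy := by filter_upwards [hx, hy] with j hxj hyj; simp [hxj, hyj]
  zero_mem' := .of_forall fun _ => rfl
  smul_mem' c x hx := by filter_upwards [hx] with j hxj; simp [hxj]

theorem eventuallyZeroIdeal_ne_top (l : Filter J) [l.NeBot] : eventuallyZeroIdeal E l ≠ ⊤ := by
  intro h
  obtain ⟨j, hj⟩ := ((Ideal.eq_top_iff_one _).1 h).exists
  exact one_ne_zero hj

theorem exists_forall_apply_eq_zero {I : Ideal (∀ j, E j)} (hI : I ≠ ⊤) {κ : Type*} [Finite κ]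
    {z : κ → ∀ j, E j} (hz : ∀ i, z i ∈ I) : ∃ j, ∀ i, z i j = 0 := by
  classical
  have := Fintype.ofFinite κ
  by_contra! h
  choose k hk using h
  refine hI ((Ideal.eq_top_iff_one I).2 ?_)
  have hsum : ∑ i, (fun j => if k j = i then (z i j)⁻¹ else 0) * z i = 1 := by
    ext j
    simp [ite_mul, hk]
  exact hsum ▸ sum_mem fun i _ => I.mul_mem_left _ (hz i)

variable {F : Type*} [Field F] [∀ j, Algebra F (E j)]

theorem exists_algHom_toLinearMap_eq {C A κ : Type*} [Ring C] [Algebra F C] [Ring A] [Algebra F A]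
    (b : Module.Basis κ F C) (T : C →ₗ[F] A) (hone : T 1 = 1)
    (hmul : ∀ i j, T (b i * b j) = T (b i) * T (b j)) : ∃ φ : C →ₐ[F] A, φ.toLinearMap = T := by
  have hT : (LinearMap.mul F C).compr₂ T = (LinearMap.mul F A).compl₁₂ T T :=
    LinearMap.ext_basis b b hmul
  exact ⟨.ofLinearMap T hone fun x y => LinearMap.congr_fun₂ hT x y, rfl⟩

theorem exists_forall_mapMatrix_eval_eq {I : Ideal (∀ j, E j)} (hI : I ≠ ⊤) {m κ : Type*}
    [Fintype m] [DecidableEq m] [Finite κ] {x y : κ → Matrix m m (∀ j, E j)}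
    (h : ∀ t, (Ideal.Quotient.mkₐ F I).mapMatrix (x t) = (Ideal.Quotient.mkₐ F I).mapMatrix (y t)) :
    ∃ j, ∀ t, (Pi.evalAlgHom F E j).mapMatrix (x t) = (Pi.evalAlgHom F E j).mapMatrix (y t) := by
  obtain ⟨j, hj⟩ := exists_forall_apply_eq_zero hI
    (z := fun s : κ × m × m => x s.1 s.2.1 s.2.2 - y s.1 s.2.1 s.2.2)
    fun s => Ideal.Quotient.eq.1 (congrFun₂ (h s.1) s.2.1 s.2.2)
  exact ⟨j, fun t => Matrix.ext fun i k => sub_eq_zero.1 (hj (t, i, k))⟩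

theorem HasMatrixRep.exists_of_quotient {C : Type*} [Ring C] [Algebra F C] [FiniteDimensional F C]
    {I : Ideal (∀ j, E j)} (hI : I ≠ ⊤) {n : ℕ}
    (ρ : C →ₐ[F] Matrix (Fin n) (Fin n) ((∀ j, E j) ⧸ I)) : ∃ j, HasMatrixRep F C (E j) n := by
  let b := Module.finBasis F C
  let π := (Ideal.Quotient.mkₐ F I).mapMatrix (m := Fin n)
  have hπ : Function.Surjective π := fun x => by
    choose y hy using fun i k => Ideal.Quotient.mkₐ_surjective F I (x i k)
    exact ⟨Matrix.of y, Matrix.ext hy⟩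
  obtain ⟨T, hT⟩ := Module.projective_lifting_property π.toLinearMap ρ.toLinearMap hπ
  have hT (c : C) : π (T c) = ρ c := LinearMap.congr_fun hT c
  obtain ⟨j, hj⟩ := exists_forall_mapMatrix_eval_eq hI (F := F)
    (x := fun t : Option (Fin _ × Fin _) => t.elim (T 1) fun s => T (b s.1 * b s.2))
    (y := fun t => t.elim 1 fun s => T (b s.1) * T (b s.2)) (by
    rintro (_ | ⟨s, t⟩)
    · exact (hT 1).trans (by rw [map_one, Option.elim_none, map_one])
    · exact (hT _).trans (by rw [map_mul, Option.elim_some, map_mul, ← hT, ← hT]))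
  let ev := (Pi.evalAlgHom F E j).mapMatrix (m := Fin n)
  obtain ⟨φ, -⟩ := exists_algHom_toLinearMap_eq b (ev.toLinearMap ∘ₗ T)
    ((hj none).trans (map_one ev)) fun s t => (hj (some (s, t))).trans (map_mul ev _ _)
  exact ⟨j, ⟨φ⟩⟩

end ProductQuotient

section BaseChangeCoordinates

variable {F D κ : Type*} [Field F] [Ring D] [Algebra F D]

theorem basis_repr_baseChangeMap {R R' : Type*} [CommRing R] [Algebra F R] [CommRing R']
    [Algebra F R'] (b : Module.Basis κ F D) (φ : R →ₐ[F] R') (y : R ⊗[F] D) (i : κ) :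
    (b.baseChange R').repr (baseChangeMap φ D y) i = φ ((b.baseChange R).repr y i) := by
  induction y with
  | zero => simp
  | add x y hx hy => simp [hx, hy]
  | tmul r d => simp [baseChangeMap]

variable [FiniteDimensional F D] {J : Type*} {E : J → Type*} [∀ j, Field (E j)]
  [∀ j, Algebra F (E j)]

theorem exists_forall_baseChangeMap_eval_eq (d : ∀ j, E j ⊗[F] D) :
    ∃ y : (∀ j, E j) ⊗[F] D, ∀ j, baseChangeMap (Pi.evalAlgHom F E j) D y = d j := by
  let b := Module.finBasis F D
  refine ⟨(b.baseChange _).equivFun.symm fun i j => (b.baseChange (E j)).repr (d j) i, fun j => ?_⟩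
  refine (b.baseChange (E j)).ext_elem fun i => ?_
  rw [basis_repr_baseChangeMap, ← Module.Basis.equivFun_apply, LinearEquiv.apply_symm_apply]
  rfl

theorem baseChangeMap_mk_eq_zero {l : Filter J} {I : Ideal (∀ j, E j)}
    (hI : eventuallyZeroIdeal E l ≤ I) {y : (∀ j, E j) ⊗[F] D}
    (hy : ∀ᶠ j in l, baseChangeMap (Pi.evalAlgHom F E j) D y = 0) :
    baseChangeMap (Ideal.Quotient.mkₐ F I) D y = 0 := by
  let b := Module.finBasis F D
  refine (b.baseChange _).ext_elem fun i => ?_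
  rw [basis_repr_baseChangeMap, map_zero, Finsupp.zero_apply, Ideal.Quotient.mkₐ_eq_mk,
    Ideal.Quotient.eq_zero_iff_mem]
  refine hI ?_
  filter_upwards [hy] with j hj
  simpa [hj] using (basis_repr_baseChangeMap b (Pi.evalAlgHom F E j) y i).symm

theorem exists_aeval_map_mk_eq_zero {K : Type*} [Field K] [Algebra F K] (φ : ∀ j, K →ₐ[F] E j)
    {l : Filter J} {I : Ideal (∀ j, E j)} (hI : eventuallyZeroIdeal E l ≤ I) {f : K[X]}
    (hf : ∀ᶠ j in l, ∃ d : E j ⊗[F] D, aeval d (f.map (φ j : K →+* E j)) = 0) :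
    ∃ d : ((∀ j, E j) ⧸ I) ⊗[F] D,
      aeval d (f.map (((Ideal.Quotient.mkₐ F I).comp (AlgHom.pi φ) : K →ₐ[F] _) :
        K →+* (∀ j, E j) ⧸ I)) = 0 := by
  have hd (j : J) : ∃ d : E j ⊗[F] D, (∃ d : E j ⊗[F] D, aeval d (f.map (φ j : K →+* E j)) = 0) →
      aeval d (f.map (φ j : K →+* E j)) = 0 := by
    by_cases h : ∃ d : E j ⊗[F] D, aeval d (f.map (φ j : K →+* E j)) = 0
    · exact ⟨h.choose, fun _ => h.choose_spec⟩
    · exact ⟨0, fun h' => (h h').elim⟩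
  choose d hd using hd
  obtain ⟨y, hy⟩ := exists_forall_baseChangeMap_eval_eq d
  refine ⟨baseChangeMap (Ideal.Quotient.mkₐ F I) D y, ?_⟩
  have hzero : baseChangeMap (Ideal.Quotient.mkₐ F I) D
      (aeval y (f.map (AlgHom.pi φ : K →+* ∀ j, E j))) = 0 :=
    baseChangeMap_mk_eq_zero hI <| by
      filter_upwards [hf] with j hj
      rw [baseChangeMap_aeval, hy, Polynomial.map_map]
      exact hd j hj
  rw [baseChangeMap_aeval, Polynomial.map_map] at hzero
  exact hzero

end BaseChangeCoordinates

section DirectLimit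

variable {F : Type u} [Field F] {K : ℕ → Type u} [∀ n, Field (K n)] [∀ n, Algebra F (K n)]

/-- The transition map `K i → K j`, for `i ≤ j`, of the sequence of extensions `φ`. -/
noncomputable def transitionMap (φ : ∀ n, K n →ₐ[F] K (n + 1)) (i j : ℕ) (h : i ≤ j) :
    K i →ₐ[F] K j :=
  Nat.leRec (motive := fun j _ => K i →ₐ[F] K j) (AlgHom.id F _) (fun k _ g => (φ k).comp g) h

theorem directedSystem_transitionMap (φ : ∀ n, K n →ₐ[F] K (n + 1)) :
    DirectedSystem K (transitionMap φ · · ·) where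
  map_self i x := by rw [transitionMap, Nat.leRec_self, AlgHom.id_apply]
  map_map k j i hij hjk x := by
    induction k, hjk using Nat.le_induction with
    | base => rw [transitionMap, Nat.leRec_self, AlgHom.id_apply]
    | succ k hjk ih =>
      rw [transitionMap, Nat.leRec_succ, AlgHom.comp_apply]
      refine (congrArg (φ k) ih).trans ?_
      rw [transitionMap, transitionMap, Nat.leRec_succ, AlgHom.comp_apply]

theorem exists_directLimit (φ : ∀ n, K n →ₐ[F] K (n + 1)) :
    ∃ (E : Type u) (_ : Field E) (_ : Algebra F E) (ψ : ∀ n, K n →ₐ[F] E),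
      (∀ n, (ψ (n + 1)).comp (φ n) = ψ n) ∧ ∀ z, ∃ n, z ∈ (ψ n).range := by
  have := directedSystem_transitionMap φ
  refine ⟨DirectLimit K (transitionMap φ), inferInstance, inferInstance, fun n =>
    .ofLinearMap (DirectLimit.Module.of F ℕ K (transitionMap φ) n) (DirectLimit.one_def n).symm
      fun x y => (DirectLimit.mul_def n x y).symm, fun n => ?_, ?_⟩
  · ext x
    have hx : transitionMap φ n (n + 1) n.le_succ x = φ n x := by
      rw [transitionMap, Nat.leRec_succ _ _ le_rfl, Nat.leRec_self, AlgHom.comp_apply,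
        AlgHom.id_apply]
    rw [AlgHom.comp_apply, ← hx]
    exact DirectLimit.Module.of_f
  · exact DirectLimit.induction _ fun n x => ⟨n, x, rfl⟩

variable {E : Type*} [Field E] [Algebra F E] {ψ : ∀ n, K n →ₐ[F] E}

theorem exists_forall_mem_range_of_monotone (hmono : Monotone fun n => (ψ n).range)
    (hψ : ∀ z, ∃ n, z ∈ (ψ n).range) {κ : Type*} [Finite κ] (z : κ → E) :
    ∃ n, ∀ i, z i ∈ (ψ n).range := by
  choose n hn using fun i => hψ (z i)
  obtain ⟨N, hN⟩ := Finite.exists_le n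
  exact ⟨N, fun i => hmono (hN i) (hn i)⟩

theorem HasMatrixRep.exists_of_monotone (hmono : Monotone fun n => (ψ n).range)
    (hψ : ∀ z, ∃ n, z ∈ (ψ n).range) {C : Type*} [Ring C] [Algebra F C] [FiniteDimensional F C]
    {m : ℕ} (h : HasMatrixRep F C E m) : ∃ n, HasMatrixRep F C (K n) m := by
  obtain ⟨ρ⟩ := h
  let b := Module.finBasis F C
  obtain ⟨n, hn⟩ := exists_forall_mem_range_of_monotone hmono hψ
    fun s : Fin (Module.finrank F C) × Fin m × Fin m => ρ (b s.1) s.2.1 s.2.2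
  obtain ⟨ρ', -⟩ := exists_rep_of_forall_mem_range (ψ n).injective ρ
    (forall_mem_range_of_basis b (ψ n) ρ fun l i k => hn (l, i, k))
  exact ⟨n, ⟨ρ'⟩⟩

theorem exists_map_eq_of_monotone (hmono : Monotone fun n => (ψ n).range)
    (hψ : ∀ z, ∃ n, z ∈ (ψ n).range) (f : E[X]) :
    ∃ (n : ℕ) (g : (K n)[X]), g.map (ψ n : K n →+* E) = f := by
  obtain ⟨n, hn⟩ := exists_forall_mem_range_of_monotone hmono hψ
    fun i : f.support => f.coeff i
  refine ⟨n, (mem_lifts f).1 ((lifts_iff_coeff_lifts f).2 fun i => ?_)⟩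
  by_cases hi : i ∈ f.support
  · exact hn ⟨i, hi⟩
  · exact ⟨0, by rw [map_zero, notMem_support_iff.1 hi]⟩

end DirectLimit

section Saturation

variable {F : Type u} [Field F] {p : ℕ} {ι : Type u} {D : ι → Type u} [∀ i, DivisionRing (D i)]
  [∀ i, Algebra F (D i)]

theorem exists_reflectsSplitting_forall_mem_aeval_eq_zero (hp : p.Prime) (hpF : (p : F) ≠ 0)
    (hD : ∀ i, IsCentralDivisionOfDeg F (D i) p) {K : Type u} [Field K] [Algebra F K] [Infinite K]
    (S : Finset ({f : K[X] // f.Separable ∧ f.natDegree = p} × ι)) :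
    ∃ (K' : Type u) (_ : Field K') (_ : Algebra F K') (φ : K →ₐ[F] K'), ReflectsSplitting F p K K' ∧
      ∀ s ∈ S, ∃ d : K' ⊗[F] D s.2, aeval d (s.1.1.map (φ : K →+* K')) = 0 := by
  classical
  induction S using Finset.induction_on with
  | empty => exact ⟨K, inferInstance, inferInstance, .id F K, fun _ _ _ _ _ h => h, by simp⟩
  | insert s S _ ih =>
    obtain ⟨K₁, _, _, φ₁, hK₁, hS⟩ := ih
    have : Infinite K₁ := Infinite.of_injective φ₁ φ₁.injective
    obtain ⟨_, _, hfr⟩ := hD s.2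
    obtain ⟨K₂, _, _, φ₂, hK₂, hs⟩ := exists_reflectsSplitting_aeval_eq_zero (D := D s.2) hp hpF hfr
      (s.1.2.1.map (f := (φ₁ : K →+* K₁))) ((natDegree_map _).trans s.1.2.2)
    refine ⟨K₂, inferInstance, inferInstance, φ₂.comp φ₁, hK₁.trans hK₂, ?_⟩
    rw [Finset.forall_mem_insert]
    refine ⟨by rwa [Polynomial.map_map] at hs, fun t ht => ?_⟩
    obtain ⟨d, hd⟩ := hS t ht
    have hd₂ := baseChangeMap_aeval φ₂ (t.1.1.map (φ₁ : K →+* K₁)) d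
    rw [hd, map_zero, Polynomial.map_map] at hd₂
    exact ⟨_, hd₂.symm⟩

theorem exists_reflectsSplitting_forall_aeval_eq_zero (hp : p.Prime) (hpF : (p : F) ≠ 0)
    (hD : ∀ i, IsCentralDivisionOfDeg F (D i) p) (K : Type u) [Field K] [Algebra F K] [Infinite K] :
    ∃ (K' : Type u) (_ : Field K') (_ : Algebra F K') (φ : K →ₐ[F] K'), ReflectsSplitting F p K K' ∧
      ∀ f : K[X], f.Separable → f.natDegree = p →
        ∀ i, ∃ d : K' ⊗[F] D i, aeval d (f.map (φ : K →+* K')) = 0 := by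
  classical
  choose E _ _ φ hE hroot using
    exists_reflectsSplitting_forall_mem_aeval_eq_zero hp hpF hD (K := K)
  obtain ⟨m, hm, hle⟩ :=
    Ideal.exists_le_maximal _ (eventuallyZeroIdeal_ne_top (E := E) Filter.atTop)
  refine ⟨(∀ S, E S) ⧸ m, Ideal.Quotient.field m, inferInstance,
    (Ideal.Quotient.mkₐ F m).comp (AlgHom.pi φ), ?_, fun f hf hdeg i => ?_⟩
  · rintro C _ _ n hC ⟨ρ⟩
    have := hC.finiteDimensional
    obtain ⟨S, hS⟩ := HasMatrixRep.exists_of_quotient hm.ne_top ρ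
    exact hE S C n hC hS
  · have := (hD i).2.1
    refine exists_aeval_map_mk_eq_zero φ hle ?_
    filter_upwards [Filter.eventually_ge_atTop {(⟨f, hf, hdeg⟩, i)}] with S hS
    exact hroot S _ (Finset.singleton_subset_iff.1 hS)

/-- An infinite field extension of `F`, as an object: the stages of an increasing sequence of
extensions are chosen recursively. -/
structure InfiniteExtension (F : Type u) [Field F] where
  /-- The underlying field. -/
  carrier : Type u
  [field : Field carrier]
  [algebra : Algebra F carrier]
  [infinite : Infinite carrier]

attribute [instance] InfiniteExtension.field InfiniteExtension.algebra InfiniteExtension.infinite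

instance : CoeSort (InfiniteExtension F) (Type u) := ⟨InfiniteExtension.carrier⟩

theorem exists_tower (hp : p.Prime) (hpF : (p : F) ≠ 0)
    (hD : ∀ i, IsCentralDivisionOfDeg F (D i) p) [Infinite F] :
    ∃ (K : ℕ → InfiniteExtension F) (φ : ∀ n, K n →ₐ[F] K (n + 1)),
      (∀ n, ReflectsSplitting F p F (K n)) ∧
        ∀ n (f : (K n)[X]), f.Separable → f.natDegree = p →
          ∀ i, ∃ d : K (n + 1) ⊗[F] D i, aeval d (f.map (φ n : K n →+* K (n + 1))) = 0 := by
  have hstep (K : InfiniteExtension F) : ∃ (K' : InfiniteExtension F) (φ : K →ₐ[F] K'),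
      ReflectsSplitting F p K K' ∧ ∀ f : K[X], f.Separable → f.natDegree = p →
        ∀ i, ∃ d : K' ⊗[F] D i, aeval d (f.map (φ : K →+* K')) = 0 := by
    obtain ⟨K', _, _, φ, h⟩ := exists_reflectsSplitting_forall_aeval_eq_zero hp hpF hD K
    have : Infinite K' := Infinite.of_injective φ φ.injective
    exact ⟨⟨K'⟩, φ, h⟩
  choose next φ hsplit hroot using hstep
  let K (n : ℕ) : InfiniteExtension F := n.rec ⟨F⟩ fun _ => next
  refine ⟨K, fun n => φ (K n), fun n => ?_, fun n => hroot (K n)⟩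
  induction n with
  | zero => exact fun _ _ _ _ _ h => h
  | succ n ih => exact fun C _ _ m hC hm => ih C m hC (hsplit (K n) C m hC hm)

theorem exists_reflectsSplitting_forall_separable_aeval_eq_zero (hp : p.Prime) (hpF : (p : F) ≠ 0)
    (hD : ∀ i, IsCentralDivisionOfDeg F (D i) p) [Infinite F] :
    ∃ (E : Type u) (_ : Field E) (_ : Algebra F E), ReflectsSplitting F p F E ∧
      ∀ f : E[X], f.Separable → f.natDegree = p → ∀ i, ∃ d : E ⊗[F] D i, aeval d f = 0 := by
  obtain ⟨K, φ, hK, hroot⟩ := exists_tower hp hpF hD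
  obtain ⟨E, _, _, ψ, hψφ, hψ⟩ := exists_directLimit φ
  have hmono : Monotone fun n => (ψ n).range := monotone_nat_of_le_succ fun n => by
    rw [← hψφ]
    exact AlgHom.range_comp_le_range _ _
  refine ⟨E, inferInstance, inferInstance, fun C _ _ m hC hm => ?_, fun f hf hdeg i => ?_⟩
  · have := hC.finiteDimensional
    obtain ⟨n, hn⟩ := hm.exists_of_monotone hmono hψ
    exact hK n C m hC hn
  · obtain ⟨n, g, rfl⟩ := exists_map_eq_of_monotone hmono hψ f
    obtain ⟨d, hd⟩ := hroot n g ((separable_map _).1 hf) ((natDegree_map _).symm.trans hdeg) i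
    have hdE := baseChangeMap_aeval (ψ (n + 1)) (g.map (φ n : K n →+* K (n + 1))) d
    rw [hd, map_zero, Polynomial.map_map] at hdE
    refine ⟨baseChangeMap (ψ (n + 1)) (D i) d, ?_⟩
    have hcomp : (ψ n : K n →+* E) = (ψ (n + 1) : K (n + 1) →+* E).comp (φ n) :=
      congrArg RingHomClass.toRingHom (hψφ n).symm
    rw [hcomp]
    exact hdE.symm

end Saturation

/-! ### Brauer equivalence and torsion -/

section Bimodule

theorem nonempty_algEquiv_matrix_end {F B V : Type*} [Field F] [Ring B] [Algebra F B]
    [IsSimpleRing B] [FiniteDimensional F B] [AddCommGroup V] [Module F V] [FiniteDimensional F V]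
    [Module Bᵐᵒᵖ V] [IsScalarTower F Bᵐᵒᵖ V] [SMulCommClass Bᵐᵒᵖ F V] {d n : ℕ}
    (hd : Module.finrank F B = d)
    (hn : Module.finrank F V = n) :
    Nonempty (Matrix (Fin d) (Fin d) (Module.End Bᵐᵒᵖ V) ≃ₐ[F] Matrix (Fin n) (Fin n) B) := by
  have : FiniteDimensional F Bᵐᵒᵖ := (MulOpposite.opLinearEquiv F).finiteDimensional
  obtain ⟨e⟩ := nonempty_linearEquiv_of_finrank_eq (A := Bᵐᵒᵖ) (K := F)
    (V := Fin d → V) (W := Fin n → B) (by simp [Module.finrank_pi_fintype, hd, hn, mul_comm])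
  exact ⟨(endVecAlgEquivMatrixEnd _ F Bᵐᵒᵖ V).symm.trans <| (e.conjAlgEquiv F).trans <|
    (endVecAlgEquivMatrixEnd _ F Bᵐᵒᵖ B).trans (AlgEquiv.moduleEndSelfOp F).symm.mapMatrix⟩

theorem brauerEquiv_of_bimodule {F A B V : Type u} [Field F] [Ring A] [Algebra F A] [IsSimpleRing A]
    [FiniteDimensional F A] [Ring B] [Algebra F B] [IsSimpleRing B] [FiniteDimensional F B]
    [AddCommGroup V] [Module F V] [FiniteDimensional F V] [Module A V] [IsScalarTower F A V]
    [Module Bᵐᵒᵖ V] [IsScalarTower F Bᵐᵒᵖ V] [SMulCommClass Bᵐᵒᵖ F V] [SMulCommClass A Bᵐᵒᵖ V]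
    (h : Module.finrank F V ^ 2 = Module.finrank F A * Module.finrank F B) : BrauerEquiv F A B := by
  obtain ⟨e⟩ := nonempty_algEquiv_matrix_end (F := F) (B := B) (V := V) rfl rfl
  have hB : 0 < Module.finrank F B := Module.finrank_pos
  have hV : 0 < Module.finrank F V :=
    (pow_pos_iff two_ne_zero).1 (h ▸ mul_pos Module.finrank_pos hB)
  have : Nontrivial V := Module.nontrivial_of_finrank_pos hV
  have : FiniteDimensional F (Module.End Bᵐᵒᵖ V) := .of_injective
    (LinearMap.restrictScalarsₗ F Bᵐᵒᵖ V V F) (LinearMap.restrictScalars_injective F)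
  have hdim : Module.finrank F A = Module.finrank F (Module.End Bᵐᵒᵖ V) := by
    have he := e.toLinearEquiv.finrank_eq
    simp only [Module.finrank_matrix, Fintype.card_fin] at he
    refine Nat.eq_of_mul_eq_mul_left (Nat.mul_pos hB hB) (Eq.trans ?_ he.symm)
    rw [← sq (Module.finrank F V), h]
    ring
  exact ⟨_, _, hB, hV, ⟨(AlgEquiv.ofBijective (Algebra.lsmul F Bᵐᵒᵖ V)
    (bijective_of_finrank_eq hdim _)).mapMatrix.trans e⟩⟩

theorem HasMatrixRep.brauerEquiv {F A B : Type u} [Field F] [Ring A] [Algebra F A] [IsSimpleRing A]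
    [FiniteDimensional F A] [Ring B] [Algebra F B] [IsSimpleRing B] [FiniteDimensional F B] {n : ℕ}
    (hn : n ^ 2 = Module.finrank F A * Module.finrank F B)
    (h : HasMatrixRep F (A ⊗[F] Bᵐᵒᵖ) F n) : BrauerEquiv F A B := by
  obtain ⟨ρ⟩ := h
  let τ : A ⊗[F] Bᵐᵒᵖ →ₐ[F] Module.End F (Fin n → F) := Matrix.toLinAlgEquiv'.toAlgHom.comp ρ
  let _ : Module A (Fin n → F) :=
    Module.compHom _ (τ.comp Algebra.TensorProduct.includeLeft).toRingHom
  let _ : Module Bᵐᵒᵖ (Fin n → F) :=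
    Module.compHom _ (τ.comp Algebra.TensorProduct.includeRight).toRingHom
  have : IsScalarTower F A (Fin n → F) :=
    ⟨fun c a v => LinearMap.congr_fun (map_smul (τ.comp Algebra.TensorProduct.includeLeft) c a) v⟩
  have : IsScalarTower F Bᵐᵒᵖ (Fin n → F) :=
    ⟨fun c b v => LinearMap.congr_fun (map_smul (τ.comp Algebra.TensorProduct.includeRight) c b) v⟩
  have : SMulCommClass Bᵐᵒᵖ F (Fin n → F) := ⟨fun b c v => map_smul (τ (1 ⊗ₜ b)) c v⟩
  have : SMulCommClass A Bᵐᵒᵖ (Fin n → F) := ⟨fun a b v => LinearMap.congr_fun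
    ((((Commute.one_right a).tmul (Commute.one_left b)).map τ).eq) v⟩
  exact brauerEquiv_of_bimodule (V := Fin n → F) (by rw [Module.finrank_fin_fun, hn])

end Bimodule

section Corner

variable {E : Type*} [Field E] {W : Type*} [AddCommGroup W] [Module E W]

theorem nonempty_algHom_end_range {C : Type*} [Ring C] [Algebra E C] (τ : C →ₐ[E] Module.End E W)
    {e : Module.End E W} (he : ∀ c, Commute (τ c) e) :
    Nonempty (C →ₐ[E] Module.End E (LinearMap.range e)) := by
  have hmem (c : C) : ∀ w ∈ LinearMap.range e, τ c w ∈ LinearMap.range e := by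
    rintro _ ⟨w, rfl⟩
    exact ⟨τ c w, (LinearMap.congr_fun (he c) w).symm⟩
  exact ⟨AlgHom.ofLinearMap
    { toFun c := (τ c).restrict (hmem c)
      map_add' c d := by ext; simp
      map_smul' k c := by ext; simp } (by ext; simp) (fun c d => by ext; simp)⟩

variable {ι : Type*} [Fintype ι] [DecidableEq ι]

theorem finrank_eq_card_mul_finrank_range_single [FiniteDimensional E W]
    (T : Matrix ι ι E →ₐ[E] Module.End E W) (i : ι) : Module.finrank E W =
      Fintype.card ι * Module.finrank E (LinearMap.range (T (Matrix.single i i 1))) := by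
  have hT (j k l : ι) (w : W) :
      T (Matrix.single j k 1) (T (Matrix.single k l 1) w) = T (Matrix.single j l 1) w := by
    rw [← Module.End.mul_apply, ← map_mul, Matrix.single_mul_single_same, one_mul]
  have hT' {k k' : ι} (h : k ≠ k') (j l : ι) (w : W) :
      T (Matrix.single j k 1) (T (Matrix.single k' l 1) w) = 0 := by
    rw [← Module.End.mul_apply, ← map_mul, Matrix.single_mul_single_of_ne (h := h), map_zero,
      LinearMap.zero_apply]
  let toPi : W →ₗ[E] (ι → LinearMap.range (T (Matrix.single i i 1))) :=
    LinearMap.pi fun j => (T (Matrix.single i j 1)).codRestrict _ fun w => ⟨_, hT i i j w⟩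
  have hinj : Function.Injective toPi := (injective_iff_map_eq_zero _).2 fun w hw => by
    have hj (j : ι) : T (Matrix.single j j 1) w = 0 := by
      rw [← hT j i j, show T (Matrix.single i j 1) w = 0 from congrArg Subtype.val (congrFun hw j),
        map_zero]
    calc w = T (∑ j, Matrix.single j j 1) w := by
          rw [Matrix.sum_single_one, map_one, Module.End.one_apply]
      _ = 0 := by simp [hj]
  have hsurj : Function.Surjective toPi := fun u => by
    choose w hw using fun j => (u j).2
    refine ⟨∑ j, T (Matrix.single j i 1) (w j), funext fun j => Subtype.ext ?_⟩
    change T (Matrix.single i j 1) (∑ k, T (Matrix.single k i 1) (w k)) = _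
    rw [map_sum, Finset.sum_eq_single j (fun k _ hk => hT' hk.symm _ _ _) (by simp), hT, hw]
  rw [(LinearEquiv.ofBijective toPi ⟨hinj, hsurj⟩).finrank_eq, Module.finrank_pi_fintype,
    Finset.sum_const, Finset.card_univ, smul_eq_mul]

theorem exists_hasMatrixRep_of_matrix {P Q : Type*} [Ring P] [Algebra E P] [Ring Q] [Algebra E Q]
    [Nonempty ι] [FiniteDimensional E W] (τ : Matrix ι ι P ⊗[E] Q →ₐ[E] Module.End E W) :
    ∃ n, Module.finrank E W = Fintype.card ι * n ∧ HasMatrixRep E (P ⊗[E] Q) E n := by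
  inhabit ι
  let T : Matrix ι ι E →ₐ[E] Module.End E W :=
    (τ.comp Algebra.TensorProduct.includeLeft).comp (Algebra.ofId E P).mapMatrix
  obtain ⟨φ⟩ := nonempty_algHom_end_range (e := T (Matrix.single default default 1))
    (τ.comp (Algebra.TensorProduct.map (Matrix.scalarAlgHom ι E) (AlgHom.id E Q))) fun c => by
      refine Commute.map ?_ τ
      induction c using TensorProduct.induction_on with
      | zero => exact Commute.zero_left _
      | tmul x y =>
        refine Commute.tmul ?_ (Commute.one_right _)
        refine Matrix.scalar_commute_iff.2 (Matrix.ext fun i j => ?_)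
        exact (Algebra.commutes (Matrix.single default default (1 : E) i j) x).symm
      | add c d hc hd => rw [map_add]; exact hc.add_left hd
  exact ⟨_, finrank_eq_card_mul_finrank_range_single T default,
    ⟨(LinearMap.toMatrixAlgEquiv (Module.finBasis E _)).toAlgHom.comp φ⟩⟩

end Corner

section BrauerEquiv

variable {E : Type*} [Field E]

theorem nonempty_algHom_matrix_tensorProduct_op (Q : Type*) [Ring Q] [Algebra E Q] (n : ℕ) :
    Nonempty (Matrix (Fin n) (Fin n) Q ⊗[E] Qᵐᵒᵖ →ₐ[E] Module.End E (Fin n → Q)) := by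
  let e : Matrix (Fin n) (Fin n) Q ≃ₐ[E] Module.End Qᵐᵒᵖ (Fin n → Q) :=
    (AlgEquiv.moduleEndSelfOp E).mapMatrix.trans (endVecAlgEquivMatrixEnd _ E Qᵐᵒᵖ Q).symm
  exact ⟨Algebra.TensorProduct.lift ((Algebra.lsmul E E (Fin n → Q)).comp e.toAlgHom)
    (Algebra.lsmul E E (Fin n → Q)) fun x b => LinearMap.ext fun v => map_smul (e x) b v⟩

theorem _root_.BrauerEquiv.exists_hasMatrixRep {E P Q : Type u} [Field E] [Ring P] [Algebra E P]
    [Ring Q] [Algebra E Q] [Nontrivial Q] [FiniteDimensional E Q] (h : BrauerEquiv E P Q) :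
    ∃ n, n ^ 2 = Module.finrank E P * Module.finrank E Q ∧ HasMatrixRep E (P ⊗[E] Qᵐᵒᵖ) E n := by
  obtain ⟨r, s, hr, -, ⟨e⟩⟩ := h
  have : NeZero r := ⟨hr.ne'⟩
  obtain ⟨τ⟩ := nonempty_algHom_matrix_tensorProduct_op (E := E) Q s
  obtain ⟨n, hn, h⟩ := exists_hasMatrixRep_of_matrix
    (τ.comp (Algebra.TensorProduct.map e.toAlgHom (AlgHom.id E Qᵐᵒᵖ)))
  refine ⟨n, ?_, h⟩
  have he := e.toLinearEquiv.finrank_eq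
  simp only [Module.finrank_matrix, Fintype.card_fin] at he
  simp only [Module.finrank_pi_fintype, Finset.sum_const, Finset.card_univ, Fintype.card_fin,
    smul_eq_mul] at hn
  refine Nat.eq_of_mul_eq_mul_left (Nat.mul_pos hr hr) ?_
  calc r * r * n ^ 2 = (r * n) ^ 2 := by ring
    _ = s * s * Module.finrank E Q * Module.finrank E Q := by rw [← hn]; ring
    _ = r * r * (Module.finrank E P * Module.finrank E Q) := by rw [← he]; ring

theorem HasMatrixRep.of_baseChange {F E A B : Type*} [Field F] [Field E] [Algebra F E] [Ring A]
    [Algebra F A] [Ring B] [Algebra F B] {n : ℕ}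
    (h : HasMatrixRep E ((E ⊗[F] A) ⊗[E] (E ⊗[F] B)ᵐᵒᵖ) E n) :
    HasMatrixRep F (A ⊗[F] Bᵐᵒᵖ) E n := by
  obtain ⟨ρ⟩ := h
  let left : E ⊗[F] A →ₐ[E] Matrix (Fin n) (Fin n) E :=
    ρ.comp Algebra.TensorProduct.includeLeft
  let right : (E ⊗[F] B)ᵐᵒᵖ →ₐ[E] Matrix (Fin n) (Fin n) E :=
    ρ.comp Algebra.TensorProduct.includeRight
  exact ⟨Algebra.TensorProduct.lift
    ((left.restrictScalars F).comp Algebra.TensorProduct.includeRight)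
    ((right.restrictScalars F).comp
      (AlgHom.op (Algebra.TensorProduct.includeRight : B →ₐ[F] E ⊗[F] B)))
    fun a b => ((Commute.one_right _).tmul (Commute.one_left _)).map ρ⟩

end BrauerEquiv

section Split

variable {F A B : Type u} [Field F] [Ring A] [Algebra F A] [Ring B] [Algebra F B]

theorem _root_.IsSplit.of_finrank_eq [Nontrivial B] [FiniteDimensional F B] (hA : IsSplit F A)
    (h : Module.finrank F A = Module.finrank F B) (f : A →ₐ[F] B) : IsSplit F B := by
  obtain ⟨n, hn, ⟨e⟩⟩ := hA
  have : NeZero n := ⟨hn.ne'⟩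
  have : IsSimpleRing A := .of_ringEquiv e.symm.toRingEquiv inferInstance
  have : FiniteDimensional F A := e.symm.toLinearEquiv.finiteDimensional
  exact ⟨n, hn, ⟨(AlgEquiv.ofBijective f (bijective_of_finrank_eq h f)).symm.trans e⟩⟩

theorem _root_.IsSplit.op (hA : IsSplit F A) : IsSplit F Aᵐᵒᵖ := by
  obtain ⟨n, hn, ⟨e⟩⟩ := hA
  exact ⟨n, hn, ⟨(AlgEquiv.op e).trans (Matrix.transposeAlgEquiv (Fin n) F F).symm⟩⟩

theorem _root_.IsSplit.tensorProduct (hA : IsSplit F A) (hB : IsSplit F B) :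
    IsSplit F (A ⊗[F] B) := by
  obtain ⟨m, hm, ⟨e⟩⟩ := hA
  obtain ⟨n, hn, ⟨f⟩⟩ := hB
  exact ⟨m * n, Nat.mul_pos hm hn, ⟨(Algebra.TensorProduct.congr e f).trans <|
    (Matrix.kroneckerTMulAlgEquiv (Fin m) (Fin n) F F F F).trans <|
    (Algebra.TensorProduct.lid F F).mapMatrix.trans (Matrix.reindexAlgEquiv F F finProdFinEquiv)⟩⟩

end Split

section Torsion

variable {F A B : Type u} [Field F] [Ring A] [Algebra F A] [Ring B] [Algebra F B] {p : ℕ}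

/-- The algebra homomorphism `A^{⊗ p} → B^{⊗ p}` induced by `f : A → B`. -/
noncomputable def tpowMap (p : ℕ) (f : A →ₐ[F] B) : tpow F A p →ₐ[F] tpow F B p :=
  PiTensorProduct.liftAlgHom
    ((PiTensorProduct.tprod F).compLinearMap fun _ : Fin p => f.toLinearMap)
    (congrArg (PiTensorProduct.tprod F) (funext fun _ => map_one f)) fun x y =>
    (congrArg (PiTensorProduct.tprod F) (funext fun i => map_mul f (x i) (y i))).trans
      (PiTensorProduct.tprod_mul_tprod _ _).symm

theorem tpowMap_tprod (f : A →ₐ[F] B) (a : Fin p → A) :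
    tpowMap p f (PiTensorProduct.tprod F a) = PiTensorProduct.tprod F fun i => f (a i) :=
  PiTensorProduct.lift.tprod a

theorem commute_tpowMap {C : Type u} [Ring C] [Algebra F C] {f : A →ₐ[F] C} {g : B →ₐ[F] C}
    (h : ∀ a b, Commute (f a) (g b)) (x : tpow F A p) (y : tpow F B p) :
    Commute (tpowMap p f x) (tpowMap p g y) := by
  induction x using PiTensorProduct.induction_on with
  | add x₁ x₂ h₁ h₂ => rw [map_add]; exact h₁.add_left h₂
  | smul_tprod r a =>
    rw [map_smul]
    refine Commute.smul_left ?_ r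
    induction y using PiTensorProduct.induction_on with
    | add y₁ y₂ h₁ h₂ => rw [map_add]; exact h₁.add_right h₂
    | smul_tprod s b =>
      rw [map_smul]
      refine Commute.smul_right ?_ s
      rw [tpowMap_tprod, tpowMap_tprod]
      exact Commute.tprod (funext fun i => h (a i) (b i))

theorem nonempty_algHom_op_tpow (p : ℕ) : Nonempty ((tpow F B p)ᵐᵒᵖ →ₐ[F] tpow F Bᵐᵒᵖ p) := by
  let φ : MultilinearMap F (fun _ : Fin p => B) (tpow F Bᵐᵒᵖ p)ᵐᵒᵖ :=
    (MulOpposite.opLinearEquiv F).toLinearMap.compMultilinearMap <|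
      (PiTensorProduct.tprod F).compLinearMap fun _ => (MulOpposite.opLinearEquiv F).toLinearMap
  exact ⟨AlgHom.opComm <| PiTensorProduct.liftAlgHom φ rfl fun x y =>
    congrArg MulOpposite.op (PiTensorProduct.tprod_mul_tprod _ _).symm⟩

theorem _root_.IsPTorsion.op [FiniteDimensional F B] [Nontrivial B] (hB : IsPTorsion F B p) :
    IsPTorsion F Bᵐᵒᵖ p := by
  have : FiniteDimensional F Bᵐᵒᵖ := (MulOpposite.opLinearEquiv F).finiteDimensional
  have hdim : Module.finrank F (tpow F B p)ᵐᵒᵖ = Module.finrank F (tpow F Bᵐᵒᵖ p) := by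
    rw [MulOpposite.finrank, finrank_tpow, finrank_tpow, MulOpposite.finrank]
  have : Nontrivial (tpow F Bᵐᵒᵖ p) := Module.nontrivial_of_finrank_pos (R := F) <| by
    rw [finrank_tpow]; exact pow_pos Module.finrank_pos p
  obtain ⟨f⟩ := nonempty_algHom_op_tpow (F := F) (B := B) p
  exact (IsSplit.op hB).of_finrank_eq hdim f

theorem _root_.IsPTorsion.tensorProduct [FiniteDimensional F A] [FiniteDimensional F B]
    [Nontrivial A] [Nontrivial B] (hA : IsPTorsion F A p) (hB : IsPTorsion F B p) :
    IsPTorsion F (A ⊗[F] B) p := by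
  have hdim : Module.finrank F (tpow F A p ⊗[F] tpow F B p) =
      Module.finrank F (tpow F (A ⊗[F] B) p) := by
    rw [Module.finrank_tensorProduct, finrank_tpow, finrank_tpow, finrank_tpow,
      Module.finrank_tensorProduct, mul_pow]
  have : Nontrivial (tpow F (A ⊗[F] B) p) := Module.nontrivial_of_finrank_pos (R := F) <| by
    rw [finrank_tpow]; exact pow_pos Module.finrank_pos p
  exact (IsSplit.tensorProduct hA hB).of_finrank_eq hdim <| Algebra.TensorProduct.lift
    (tpowMap p Algebra.TensorProduct.includeLeft) (tpowMap p Algebra.TensorProduct.includeRight)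
    (commute_tpowMap fun a b => (Commute.one_right a).tmul (Commute.one_left b))

end Torsion

section Injectivity

variable {F : Type u} [Field F] {p : ℕ}

theorem isTorsionCSA_tensorProduct_op {A B : Type u} [Ring A] [Algebra F A] [Ring B] [Algebra F B]
    {n : ℕ} (hA : IsCSA F A) (hB : IsCSA F B) (hpA : IsPTorsion F A p) (hpB : IsPTorsion F B p)
    (hn : n ^ 2 = Module.finrank F A * Module.finrank F B) :
    IsTorsionCSA F (A ⊗[F] Bᵐᵒᵖ) p n := by
  obtain ⟨_, _, _⟩ := hA
  obtain ⟨_, _, _⟩ := hB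
  have : FiniteDimensional F Bᵐᵒᵖ := (MulOpposite.opLinearEquiv F).finiteDimensional
  exact
    { isCSA := ⟨isCentral_tensorProduct, isSimpleRing_tensorProduct, inferInstance⟩
      finrank_eq := by rw [Module.finrank_tensorProduct, MulOpposite.finrank, hn]
      isPTorsion := hpA.tensorProduct hpB.op }

theorem ReflectsSplitting.brauerEquiv {E : Type u} [Field E] [Algebra F E]
    (h : ReflectsSplitting F p F E) {A B : Type u} [Ring A] [Algebra F A] [Ring B] [Algebra F B]
    (hA : IsCSA F A) (hB : IsCSA F B) (hpA : IsPTorsion F A p) (hpB : IsPTorsion F B p)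
    (hAB : BrauerEquiv E (E ⊗[F] A) (E ⊗[F] B)) : BrauerEquiv F A B := by
  have ⟨_, _, _⟩ := hA
  have ⟨_, _, _⟩ := hB
  obtain ⟨n, hn, hE⟩ := hAB.exists_hasMatrixRep
  rw [Module.finrank_baseChange, Module.finrank_baseChange] at hn
  have hC := isTorsionCSA_tensorProduct_op hA hB hpA hpB hn
  exact (h _ n hC hE.of_baseChange).brauerEquiv hn

theorem resInjP_of_reflectsSplitting {E : Type u} [Field E] {f : F →+* E}
    (h : letI := f.toAlgebra; ReflectsSplitting F p F E) : ResInjP p F E f := by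
  let _ := f.toAlgebra
  exact fun _ _ _ _ _ _ => h.brauerEquiv

theorem ReflectsSplitting.resInjP {E : Type u} [Field E] [Algebra F E]
    (h : ReflectsSplitting F p F E) : ResInjP p F E (algebraMap F E) :=
  resInjP_of_reflectsSplitting (by rwa [toAlgebra_algebraMap])

end Injectivity

theorem nonempty_algHom_of_forall_exists_aeval_eq_zero {E L R : Type*} [Field E] [Field L]
    [Algebra E L] [Ring R] [Algebra E R] {p : ℕ} (hp : p.Prime) (hpE : (p : E) ≠ 0)
    (hL : Module.finrank E L = p)
    (hR : ∀ f : E[X], f.Separable → f.natDegree = p → ∃ d : R, aeval d f = 0) :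
    Nonempty (L →ₐ[E] R) := by
  have : FiniteDimensional E L := Module.finite_of_finrank_pos (hL ▸ hp.pos)
  obtain ⟨θ, hθ⟩ := exists_notMem_range_algebraMap (F := E) (D := L) (hL ▸ hp.ne_one)
  have hint : IsIntegral E θ := .of_finite E θ
  have hdeg : (minpoly E θ).natDegree = p :=
    (hp.eq_one_or_self_of_dvd _ (hL ▸ minpoly.degree_dvd hint)).resolve_left
      fun h => hθ (minpoly.natDegree_eq_one_iff.1 h)
  obtain ⟨d, hd⟩ := hR _
    (separable_of_natDegree_ne_zero (minpoly.irreducible hint) (hdeg ▸ hpE)) hdeg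
  have hadj : Algebra.adjoin E {θ} = ⊤ :=
    Algebra.adjoin_eq_top_of_primitive_element hint.isAlgebraic <|
      (Field.primitive_element_iff_minpoly_natDegree_eq E θ).2 (hdeg.trans hL.symm)
  obtain ⟨φ, -⟩ := exists_algHom_apply_eq_of_adjoin_eq_top hadj hd
  exact ⟨φ⟩

theorem not_isCentralDivisionOfDeg_of_finite {F D : Type u} [Field F] [Finite F] [DivisionRing D]
    [Algebra F D] {p : ℕ} (hp : p ≠ 1) : ¬ IsCentralDivisionOfDeg F D p := by
  rintro ⟨_, _, hdim⟩
  have : Finite D := Module.finite_of_finite F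
  let _ : Field D := littleWedderburn D
  have htop : (⊥ : Subalgebra F D) = ⊤ := by
    rw [← Algebra.IsCentral.center_eq_bot F D, Subalgebra.center_eq_top]
  have hsq : p ^ 2 = 1 := hdim.symm.trans (Subalgebra.bot_eq_top_iff_finrank_eq_one.1 htop)
  exact hp ((Nat.pow_eq_one.1 hsq).resolve_right two_ne_zero)

end GenusMerging

/-- for a set `A = {D i}` of central division `F`-algebras of degree `p`
(char `F ≠ p`), there is a field extension `F_A/F` with `Br(F)[p] → Br(F_A)[p]` injective
such that any two algebras of `A` acquire the same genus (the same maximal subfields)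
over `F_A`. -/
theorem exists_genus_merging_extension (p : ℕ) (hp : p.Prime)
    (F : Type u) [Field F] (hchar : ringChar F ≠ p) {ι : Type u}
    (D : ι → Type u) [∀ i, DivisionRing (D i)] [∀ i, Algebra F (D i)]
    (hD : ∀ i, IsCentralDivisionOfDeg F (D i) p) :
    Nonempty (GenusMergingExtension p F D) := by
  have hpF : (p : F) ≠ 0 := fun h => ((Nat.dvd_prime hp).1 ((ringChar.spec F p).1 h)).elim
    CharP.ringChar_ne_one hchar
  rcases finite_or_infinite F with _ | _
  · exact ⟨
      { E := F
        resInj := GenusMerging.ReflectsSplitting.resInjP fun _ _ _ _ _ h => h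
        sameMaxSubfields := fun i =>
          (GenusMerging.not_isCentralDivisionOfDeg_of_finite hp.ne_one (hD i)).elim }⟩
  · obtain ⟨E, _, _, hE, hroot⟩ :=
      GenusMerging.exists_reflectsSplitting_forall_separable_aeval_eq_zero hp hpF hD
    have hembed (i : ι) (L : Type u) [Field L] [Algebra E L] (hL : Module.finrank E L = p) :
        Nonempty (L →ₐ[E] E ⊗[F] D i) :=
      GenusMerging.nonempty_algHom_of_forall_exists_aeval_eq_zero hp
        (GenusMerging.natCast_ne_zero_of_algebra hpF) hL fun f hf hdeg => hroot f hf hdeg i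
    exact ⟨
      { E := E
        resInj := hE.resInjP
        sameMaxSubfields := fun i i' L _ _ hL =>
          iff_of_true (hembed i L hL) (hembed i' L hL) }⟩
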